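/- arXiv:2308.06976 — 2 statements merged into one kernel-verified Lean document; each statement's English description precedes it below -/
import Mathlib

section
/- Let n ≥ 0 and m ≥ 1 be integers, 0 < λ < n+m, and α, β ∈ ℝ with λ+2α > 0 and λ+2β > 0. Set θ = (2(n+m)−λ−2α)/(λ+2α) and κ = (2(n+m)−λ−2β)/(λ+2β), and assume κ, θ > 0, κθ ≥ 1, α < m/(θ+1), β < m/(κ+1), α+β ≥ 0. Suppose u, v are positive continuous functions on ℝ^{n+m}, with ∫_{ℝ^{n+m}} u^{θ+1} < ∞, satisfying u(x,x̂) = |x̂|^{−α} ∫_{ℝ^{n+m}} v(y,ŷ)^κ |ŷ|^{−β} |(x,x̂)−(y,ŷ)|^{−λ} dy dŷ and v(y,ŷ) = |ŷ|^{−β} ∫_{ℝ^{n+m}} u(x,x̂)^θ |x̂|^{−α} |(x,x̂)−(y,ŷ)|^{−λ} dx dx̂ for all points with x̂ ≠ 0 and ŷ ≠ 0 respectively. Then there exist constants c₃, c₄, a > 0 and a point x₀ ∈ ℝ^n such that for all x ∈ ℝ^n, u(x,0) = c₃ (|x−x₀|² + a²)^{−(λ+2α)/2} and v(x,0) = c₄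 (|x−x₀|² + a²)^{−(λ+2β)/2}. -/
open MeasureTheory ENNReal

noncomputable section

/-- The Euclidean distance `|(x,x̂)-(y,ŷ)|` on `ℝ^n × ℝ^m`. -/
def pDist {n m : ℕ} (X Y : EuclideanSpace ℝ (Fin n) × EuclideanSpace ℝ (Fin m)) : ℝ :=
  Real.sqrt (‖X.1 - Y.1‖ ^ 2 + ‖X.2 - Y.2‖ ^ 2)

/-!
Let a point of the first equation tend to the slice `x̂ = 0`: by Fatou's lemma a positive weight
exponent would force the density to vanish, so `α, β ≤ 0`. Since `α + β ≥ 0`, both weights are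
trivial, and `κ = θ` is the conformal exponent of the system `u = I (v ^ κ)`, `v = I (u ^ κ)`, where
`I` is convolution with the Riesz kernel.

This system is treated by the method of moving spheres. About every point the Kelvin transforms of
`u` and `v` in small spheres lie below `u` and `v` outside the sphere, and the radius can be
increased until the Kelvin transforms coincide with `u` and `v`. An infinite critical radius would
make the integral of `u ^ (κ + 1)` over dyadic shells nondecreasing, hence the total infinite.
Comparing the decay at infinity seen from two centres gives `u = A * R ^ (-lam)`, where `R x` is the
critical radius at `x`. Kelvin invariance then becomes a functional equation for `R ^ 2` whose
solutions are `R x ^ 2 = ‖x - X₀‖ ^ 2 + c`.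
-/

open Filter Topology Metric Module EuclideanGeometry

section Inversion

variable {E : Type*} [NormedAddCommGroup E] [InnerProductSpace ℝ E] {R : ℝ} {z w : E}

lemma inversion_zero_eq_smul (R : ℝ) (z : E) : inversion 0 R z = (R / ‖z‖) ^ 2 • z := by
  simp [inversion]

lemma norm_inversion_zero (R : ℝ) (z : E) : ‖inversion 0 R z‖ = R ^ 2 / ‖z‖ := by
  simpa using dist_inversion_center (0 : E) z R

lemma norm_inversion_zero_lt (hR : 0 < R) (hz : R < ‖z‖) : ‖inversion 0 R z‖ < R := by
  rw [norm_inversion_zero, div_lt_iff₀ (hR.trans hz), sq]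
  gcongr

lemma image_inversion_compl_closedBall (hR : 0 < R) :
    inversion (0 : E) R '' (closedBall 0 R)ᶜ = ball 0 R \ {0} := by
  ext y
  constructor
  · rintro ⟨w, hw, rfl⟩
    have hRw : R < ‖w‖ := by simpa using hw
    refine ⟨by simpa using norm_inversion_zero_lt hR hRw, ?_⟩
    rw [Set.mem_singleton_iff, inversion_eq_center hR.ne', ← norm_eq_zero]
    exact (hR.trans hRw).ne'
  · rintro ⟨hy, hy0⟩
    refine ⟨inversion 0 R y, ?_, inversion_inversion 0 hR.ne' y⟩
    have hy_pos : 0 < ‖y‖ := norm_pos_iff.2 hy0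
    have hyR : ‖y‖ < R := by simpa using hy
    rw [Set.mem_compl_iff, mem_closedBall_zero_iff, not_le, norm_inversion_zero,
      lt_div_iff₀ hy_pos, sq]
    gcongr

/-- The distance from `z` to the image of `w` under inversion in the sphere of radius `R` about the
origin, normalised by `‖w‖ / R` so that it is symmetric and equals `‖z - w‖` for `w` on the sphere.
Its power `-lam` is the reflected Riesz kernel. -/
def imageDist (R : ℝ) (z w : E) : ℝ := ‖w‖ / R * ‖z - inversion 0 R w‖

lemma imageDist_nonneg (hR : 0 ≤ R) (z w : E) : 0 ≤ imageDist R z w := by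
  unfold imageDist
  positivity

lemma imageDist_sq (hR : R ≠ 0) (z : E) (hw : w ≠ 0) :
    imageDist R z w ^ 2 = ‖z - w‖ ^ 2 + (‖z‖ ^ 2 - R ^ 2) * (‖w‖ ^ 2 - R ^ 2) / R ^ 2 := by
  have hw' : ‖w‖ ≠ 0 := norm_ne_zero_iff.2 hw
  rw [imageDist, mul_pow, norm_sub_sq_real, norm_inversion_zero, inversion_zero_eq_smul,
    real_inner_smul_right, norm_sub_sq_real]
  field_simp
  ring

lemma imageDist_comm (hR : 0 < R) (hz : z ≠ 0) (hw : w ≠ 0) :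
    imageDist R z w = imageDist R w z := by
  rw [← sq_eq_sq₀ (imageDist_nonneg hR.le _ _) (imageDist_nonneg hR.le _ _),
    imageDist_sq hR.ne' z hw, imageDist_sq hR.ne' w hz, norm_sub_rev, mul_comm (‖z‖ ^ 2 - R ^ 2)]

lemma norm_div_mul_imageDist_inversion (hR : 0 < R) (hz : z ≠ 0) (hw : w ≠ 0) :
    ‖z‖ / R * imageDist R (inversion 0 R z) w = ‖z - w‖ := by
  have hdist := dist_inversion_inversion hz hw R
  rw [dist_zero_right, dist_zero_right, dist_eq_norm, dist_eq_norm] at hdist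
  have hz' : ‖z‖ ≠ 0 := norm_ne_zero_iff.2 hz
  have hw' : ‖w‖ ≠ 0 := norm_ne_zero_iff.2 hw
  rw [imageDist, hdist]
  field_simp

lemma norm_sub_le_imageDist (hR : 0 < R) (hz : R ≤ ‖z‖) (hw : R ≤ ‖w‖) :
    ‖z - w‖ ≤ imageDist R z w := by
  rw [← sq_le_sq₀ (norm_nonneg _) (imageDist_nonneg hR.le _ _),
    imageDist_sq hR.ne' z (norm_pos_iff.1 (hR.trans_le hw)), le_add_iff_nonneg_right]
  have hz2 : 0 ≤ ‖z‖ ^ 2 - R ^ 2 := sub_nonneg.2 (pow_le_pow_left₀ hR.le hz 2)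
  have hw2 : 0 ≤ ‖w‖ ^ 2 - R ^ 2 := sub_nonneg.2 (pow_le_pow_left₀ hR.le hw 2)
  positivity

lemma hasFDerivWithinAt_inversion_compl_closedBall (hR : 0 ≤ R) (hz : z ∈ (closedBall 0 R)ᶜ) :
    HasFDerivWithinAt (inversion (0 : E) R)
      ((R / ‖z‖) ^ 2 • ((ℝ ∙ z)ᗮ.reflection : E →L[ℝ] E)) (closedBall 0 R)ᶜ z := by
  have hz0 : z ≠ 0 := (ne_of_mem_of_not_mem (mem_closedBall_self hR) hz).symm
  simpa using (hasFDerivAt_inversion (R := R) hz0).hasFDerivWithinAt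

variable [FiniteDimensional ℝ E]

lemma abs_det_smul_reflection (r : ℝ) (K : Submodule ℝ E) :
    |(r • (K.reflection : E →L[ℝ] E)).det| = |r| ^ finrank ℝ E := by
  have hdet : (r • (K.reflection : E →L[ℝ] E)).det
      = r ^ finrank ℝ E * LinearMap.det K.reflection.toLinearMap := by
    rw [ContinuousLinearMap.det, ContinuousLinearMap.toLinearMap_smul, LinearMap.det_smul]
    rfl
  rw [hdet, Submodule.det_reflection, abs_mul, abs_pow, abs_pow, abs_neg, abs_one, one_pow, mul_one]

variable [MeasurableSpace E] [BorelSpace E] {μ : Measure E} [μ.IsAddHaarMeasure] {g : E → ℝ}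

lemma integrableOn_comp_inversion (hR : 0 < R) (hg : Integrable g μ) :
    IntegrableOn (fun w => (R / ‖w‖) ^ (2 * finrank ℝ E) * g (inversion 0 R w))
      (closedBall 0 R)ᶜ μ := by
  have h := (integrableOn_image_iff_integrableOn_abs_det_fderiv_smul μ
    isClosed_closedBall.measurableSet.compl
    (fun _ => hasFDerivWithinAt_inversion_compl_closedBall hR.le)
    (inversion_injective 0 hR.ne').injOn g).1 hg.integrableOn
  simpa [abs_det_smul_reflection, pow_mul] using h

lemma integrableOn_add_inversion (hR : 0 < R) (hg : Integrable g μ) :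
    IntegrableOn (fun w => g w + (R / ‖w‖) ^ (2 * finrank ℝ E) * g (inversion 0 R w))
      (closedBall 0 R)ᶜ μ :=
  hg.integrableOn.add (integrableOn_comp_inversion hR hg)

lemma setIntegral_comp_inversion (hR : 0 < R) (g : E → ℝ) :
    ∫ w in (closedBall 0 R)ᶜ, (R / ‖w‖) ^ (2 * finrank ℝ E) * g (inversion 0 R w) ∂μ =
      ∫ w in ball 0 R \ {0}, g w ∂μ := by
  have h := integral_image_eq_integral_abs_det_fderiv_smul μ
    isClosed_closedBall.measurableSet.compl
    (fun _ => hasFDerivWithinAt_inversion_compl_closedBall hR.le)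
    (inversion_injective 0 hR.ne').injOn g
  rw [image_inversion_compl_closedBall hR] at h
  simpa [abs_det_smul_reflection, pow_mul] using h.symm

variable [Nontrivial E]

lemma ball_diff_zero_ae_eq_closedBall (R : ℝ) :
    (ball 0 R \ {0} : Set E) =ᵐ[μ] closedBall 0 R :=
  (sdiff_null_ae_eq_self (measure_singleton 0)).trans <|
    ae_eq_of_subset_of_measure_ge ball_subset_closedBall
      (Measure.addHaar_closedBall_eq_addHaar_ball μ 0 R).le
      measurableSet_ball.nullMeasurableSet measure_closedBall_lt_top.ne

lemma integral_eq_setIntegral_add_inversion (hR : 0 < R) (hg : Integrable g μ) :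
    ∫ y, g y ∂μ = ∫ w in (closedBall 0 R)ᶜ,
      (g w + (R / ‖w‖) ^ (2 * finrank ℝ E) * g (inversion 0 R w)) ∂μ := by
  rw [integral_add hg.integrableOn (integrableOn_comp_inversion hR hg),
    setIntegral_comp_inversion hR g, setIntegral_congr_set (ball_diff_zero_ae_eq_closedBall R),
    add_comm, integral_add_compl isClosed_closedBall.measurableSet hg]

end Inversion

section RieszPotential

variable {E : Type*} [NormedAddCommGroup E] [MeasurableSpace E] {μ : Measure E} {lam : ℝ}
  {f u : E → ℝ}

/-- `u` is the Riesz potential `u z = ∫ f y ‖z - y‖ ^ (-lam) dy`, with an integrable integrand at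
every point `z`. -/
structure IsRieszPotential (μ : Measure E) (lam : ℝ) (f u : E → ℝ) : Prop where
  integrable : ∀ z, Integrable (fun y => f y * ‖z - y‖ ^ (-lam)) μ
  eq_integral : ∀ z, u z = ∫ y, f y * ‖z - y‖ ^ (-lam) ∂μ

lemma IsRieszPotential.translate [BorelSpace E] [μ.IsAddLeftInvariant]
    (h : IsRieszPotential μ lam f u) (x : E) :
    IsRieszPotential μ lam (fun y => f (x + y)) (fun y => u (x + y)) where
  integrable z := by
    simpa only [add_sub_add_left_eq_sub] using (h.integrable (x + z)).comp_add_left x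
  eq_integral z := by
    rw [h.eq_integral, ← integral_add_left_eq_self _ x]
    simp only [add_sub_add_left_eq_sub]

end RieszPotential

section Kelvin

variable {E : Type*} [NormedAddCommGroup E] [InnerProductSpace ℝ E] {lam p R M : ℝ}
  {u v : E → ℝ} {z w : E}

/-- The Kelvin transform of `u` of order `lam` with respect to the sphere of radius `R` about the
origin. -/
def kelvin (lam R : ℝ) (u : E → ℝ) (z : E) : ℝ := (R / ‖z‖) ^ lam * u (inversion 0 R z)

/-- The Riesz kernel minus its reflection in the sphere of radius `R`: the analogue for Riesz
potentials of the Green function of the exterior of that sphere. -/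
def greenKernel (lam R : ℝ) (z w : E) : ℝ := ‖z - w‖ ^ (-lam) - imageDist R z w ^ (-lam)

lemma kelvin_pos (hR : 0 < R) (hu : ∀ x, 0 < u x) (hz : z ≠ 0) : 0 < kelvin lam R u z :=
  mul_pos (by positivity) (hu _)

lemma kelvin_le_of_le_on_ball (hlam : 0 ≤ lam) (hR : 0 < R) (hu : ∀ x, 0 ≤ u x)
    (hM : ∀ y, ‖y‖ ≤ R → u y ≤ M) (hz : R < ‖z‖) : kelvin lam R u z ≤ M := by
  have hz' : 0 < ‖z‖ := hR.trans hz
  have hfactor : (R / ‖z‖) ^ lam ≤ 1 :=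
    Real.rpow_le_one (by positivity) ((div_le_one hz').2 hz.le) hlam
  exact (mul_le_of_le_one_left (hu _) hfactor).trans (hM _ (norm_inversion_zero_lt hR hz).le)

lemma greenKernel_nonneg (hlam : 0 ≤ lam) (hR : 0 < R) (hz : R ≤ ‖z‖) (hw : R ≤ ‖w‖)
    (hzw : w ≠ z) : 0 ≤ greenKernel lam R z w :=
  sub_nonneg.2 <| Real.rpow_le_rpow_of_nonpos (norm_sub_pos_iff.2 hzw.symm)
    (norm_sub_le_imageDist hR hz hw) (neg_nonpos.2 hlam)

lemma greenKernel_le (hR : 0 ≤ R) (z w : E) : greenKernel lam R z w ≤ ‖z - w‖ ^ (-lam) :=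
  sub_le_self _ (Real.rpow_nonneg (imageDist_nonneg hR z w) _)

lemma rpow_mul_norm_inversion_sub_rpow (hR : 0 < R) (hz : z ≠ 0) (hw : w ≠ 0) :
    (R / ‖z‖) ^ lam * ‖inversion 0 R z - w‖ ^ (-lam) = imageDist R z w ^ (-lam) := by
  rw [imageDist_comm hR hz hw, imageDist, norm_sub_rev w,
    Real.mul_rpow (by positivity) (by positivity), Real.rpow_neg_eq_inv_rpow (‖z‖ / R), inv_div]

lemma rpow_mul_imageDist_inversion_rpow (hR : 0 < R) (hz : z ≠ 0) (hw : w ≠ 0) :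
    (R / ‖z‖) ^ lam * imageDist R (inversion 0 R z) w ^ (-lam) = ‖z - w‖ ^ (-lam) := by
  rw [← norm_div_mul_imageDist_inversion hR hz hw,
    Real.mul_rpow (by positivity) (imageDist_nonneg hR.le _ _),
    Real.rpow_neg_eq_inv_rpow (‖z‖ / R), inv_div]

-- With `lam * (p + 1) = 2 * finrank`, the Jacobian of the inversion splits into the factor
-- carried by `kelvin lam R v ^ p` and the one carried by the reflected kernel.
lemma jacobian_mul_riesz_comp_inversion (hp : lam * (p + 1) = 2 * finrank ℝ E) (hR : 0 < R)
    (hv : ∀ x, 0 ≤ v x) (z : E) (hw : w ≠ 0) :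
    (R / ‖w‖) ^ (2 * finrank ℝ E) *
        (v (inversion 0 R w) ^ p * ‖z - inversion 0 R w‖ ^ (-lam)) =
      kelvin lam R v w ^ p * imageDist R z w ^ (-lam) := by
  have hjac : (R / ‖w‖) ^ (2 * finrank ℝ E) = (R / ‖w‖) ^ (lam * p) * (R / ‖w‖) ^ lam := by
    rw [← Real.rpow_natCast, ← Real.rpow_add (by positivity)]
    congr 1
    push_cast
    linarith
  rw [hjac, kelvin, imageDist, Real.mul_rpow (by positivity) (hv _),
    Real.mul_rpow (by positivity) (by positivity), ← Real.rpow_mul (by positivity),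
    Real.rpow_neg_eq_inv_rpow (‖w‖ / R), inv_div]
  ring

lemma greenKernel_mul_sub_kelvin (hp : lam * (p + 1) = 2 * finrank ℝ E) (hR : 0 < R)
    (hv : ∀ x, 0 ≤ v x) (hz : z ≠ 0) (hw : w ≠ 0) :
    greenKernel lam R z w * (v w ^ p - kelvin lam R v w ^ p) =
      (v w ^ p * ‖z - w‖ ^ (-lam) + (R / ‖w‖) ^ (2 * finrank ℝ E) *
        (v (inversion 0 R w) ^ p * ‖z - inversion 0 R w‖ ^ (-lam))) -
      (R / ‖z‖) ^ lam * (v w ^ p * ‖inversion 0 R z - w‖ ^ (-lam) +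
        (R / ‖w‖) ^ (2 * finrank ℝ E) *
          (v (inversion 0 R w) ^ p * ‖inversion 0 R z - inversion 0 R w‖ ^ (-lam))) := by
  rw [jacobian_mul_riesz_comp_inversion hp hR hv z hw,
    jacobian_mul_riesz_comp_inversion hp hR hv (inversion 0 R z) hw, greenKernel,
    ← rpow_mul_norm_inversion_sub_rpow hR hz hw, ← rpow_mul_imageDist_inversion_rpow hR hz hw]
  ring

variable [MeasurableSpace E]

/-- A pair of positive continuous functions with `u = I (v ^ p)` and `v = I (u ^ p)`, where `I` is
convolution with `‖·‖ ^ (-lam)` and `p` is the exponent that makes the system invariant under Kelvin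
transforms. -/
structure ConformalRieszSystem (μ : Measure E) (lam p : ℝ) (u v : E → ℝ) : Prop where
  lam_pos : 0 < lam
  one_le : 1 ≤ p
  conformal : lam * (p + 1) = 2 * finrank ℝ E
  continuous_left : Continuous u
  continuous_right : Continuous v
  pos_left : ∀ x, 0 < u x
  pos_right : ∀ x, 0 < v x
  potential_left : IsRieszPotential μ lam (fun y => v y ^ p) u
  potential_right : IsRieszPotential μ lam (fun y => u y ^ p) v

lemma ConformalRieszSystem.symm {μ : Measure E} (h : ConformalRieszSystem μ lam p u v) :
    ConformalRieszSystem μ lam p v u where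
  lam_pos := h.lam_pos
  one_le := h.one_le
  conformal := h.conformal
  continuous_left := h.continuous_right
  continuous_right := h.continuous_left
  pos_left := h.pos_right
  pos_right := h.pos_left
  potential_left := h.potential_right
  potential_right := h.potential_left

variable [BorelSpace E]

lemma ConformalRieszSystem.translate {μ : Measure E} [μ.IsAddLeftInvariant]
    (h : ConformalRieszSystem μ lam p u v) (x : E) :
    ConformalRieszSystem μ lam p (fun y => u (x + y)) (fun y => v (x + y)) where
  lam_pos := h.lam_pos
  one_le := h.one_le
  conformal := h.conformal
  continuous_left := h.continuous_left.comp (continuous_const_add x)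
  continuous_right := h.continuous_right.comp (continuous_const_add x)
  pos_left _ := h.pos_left _
  pos_right _ := h.pos_right _
  potential_left := h.potential_left.translate x
  potential_right := h.potential_right.translate x

variable [FiniteDimensional ℝ E] {μ : Measure E} [μ.IsAddHaarMeasure]

lemma IsRieszPotential.integrableOn_greenKernel_mul
    (h : IsRieszPotential μ lam (fun y => v y ^ p) u) (hp : lam * (p + 1) = 2 * finrank ℝ E)
    (hR : 0 < R) (hv : ∀ x, 0 ≤ v x) (hz : z ≠ 0) :
    IntegrableOn (fun w => greenKernel lam R z w * (v w ^ p - kelvin lam R v w ^ p))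
      (closedBall 0 R)ᶜ μ := by
  refine (integrableOn_congr_fun (fun w hw => ?_) isClosed_closedBall.measurableSet.compl).2
    ((integrableOn_add_inversion hR (h.integrable z)).sub
      ((integrableOn_add_inversion hR (h.integrable (inversion 0 R z))).const_mul
        ((R / ‖z‖) ^ lam)))
  exact greenKernel_mul_sub_kelvin hp hR hv hz
    (ne_of_mem_of_not_mem (mem_closedBall_self hR.le) hw).symm

-- Fold the integrals for `u z` and `kelvin lam R u z` onto the exterior of the sphere.
lemma IsRieszPotential.sub_kelvin_eq_integral [Nontrivial E]
    (h : IsRieszPotential μ lam (fun y => v y ^ p) u) (hp : lam * (p + 1) = 2 * finrank ℝ E)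
    (hR : 0 < R) (hv : ∀ x, 0 ≤ v x) (hz : z ≠ 0) :
    u z - kelvin lam R u z = ∫ w in (closedBall 0 R)ᶜ,
      greenKernel lam R z w * (v w ^ p - kelvin lam R v w ^ p) ∂μ := by
  rw [kelvin, h.eq_integral z, h.eq_integral (inversion 0 R z),
    integral_eq_setIntegral_add_inversion hR (h.integrable z),
    integral_eq_setIntegral_add_inversion hR (h.integrable (inversion 0 R z)),
    ← integral_const_mul,
    ← integral_sub (integrableOn_add_inversion hR (h.integrable z))
      ((integrableOn_add_inversion hR (h.integrable (inversion 0 R z))).const_mul _)]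
  refine setIntegral_congr_fun isClosed_closedBall.measurableSet.compl fun w hw => ?_
  exact (greenKernel_mul_sub_kelvin hp hR hv hz
    (ne_of_mem_of_not_mem (mem_closedBall_self hR.le) hw).symm).symm

end Kelvin

section Bounds

lemma exists_pos_forall_norm_le_imp_le {E : Type*} [NormedAddCommGroup E] [ProperSpace E]
    {u : E → ℝ} (hu : Continuous u) (R : ℝ) : ∃ M > 0, ∀ y, ‖y‖ ≤ R → u y ≤ M := by
  obtain ⟨C, hC⟩ := (isCompact_closedBall (0 : E) R).exists_bound_of_continuousOn hu.continuousOn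
  exact ⟨max C 1, by positivity, fun y hy =>
    ((le_abs_self _).trans (hC y (by simpa using hy))).trans (le_max_left _ _)⟩

lemma exists_pos_forall_norm_le_imp_ge {E : Type*} [NormedAddCommGroup E] [ProperSpace E]
    {u : E → ℝ} (hu : Continuous u) (hpos : ∀ x, 0 < u x) (R : ℝ) :
    ∃ c > 0, ∀ y, ‖y‖ ≤ R → c ≤ u y := by
  obtain ⟨M, hM, huM⟩ := exists_pos_forall_norm_le_imp_le (hu.inv₀ fun x => (hpos x).ne') R
  exact ⟨M⁻¹, by positivity, fun y hy => inv_le_of_inv_le₀ (hpos y) (huM y hy)⟩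

lemma rpow_sub_rpow_le_mul_sub {a b p : ℝ} (ha : 0 < a) (hb : 0 ≤ b) (hp : 1 ≤ p) :
    a ^ p - b ^ p ≤ p * a ^ (p - 1) * (a - b) := by
  have hab : -1 ≤ b / a - 1 := by linarith [div_nonneg hb ha.le]
  have bernoulli := one_add_mul_self_le_rpow_one_add hab hp
  rw [add_sub_cancel, Real.div_rpow hb ha.le, le_div_iff₀ (by positivity)] at bernoulli
  have hpow : a ^ p = a ^ (p - 1) * a := by
    rw [Real.rpow_sub_one ha.ne']
    field_simp
  calc a ^ p - b ^ p ≤ a ^ p - (1 + p * (b / a - 1)) * a ^ p := by gcongr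
    _ = p * a ^ (p - 1) * (a - b) := by
      rw [hpow]
      field_simp
      ring

lemma rpow_sub_rpow_le_mul {a b p M D : ℝ} (ha : 0 < a) (hb : 0 ≤ b) (hp : 1 ≤ p) (haM : a ≤ M)
    (hD : 0 ≤ D) (habD : a - b ≤ D) : a ^ p - b ^ p ≤ p * M ^ (p - 1) * D := by
  calc a ^ p - b ^ p ≤ p * a ^ (p - 1) * (a - b) := rpow_sub_rpow_le_mul_sub ha hb hp
    _ ≤ p * a ^ (p - 1) * D := by gcongr
    _ ≤ p * M ^ (p - 1) * D := by gcongr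

end Bounds

section SmallSets

variable {E : Type*} [NormedAddCommGroup E] [MeasurableSpace E] [BorelSpace E] {μ : Measure E}
  [μ.IsAddLeftInvariant] [μ.IsNegInvariant] {lam ε : ℝ} {f : E → ℝ}

lemma integrableOn_norm_rpow_of_integrable_mul [ProperSpace E] (hf : Continuous f)
    (hpos : ∀ x, 0 < f x) {z : E} (hint : Integrable (fun y => f y * ‖z - y‖ ^ (-lam)) μ) :
    IntegrableOn (fun y : E => ‖y‖ ^ (-lam)) (ball 0 1) μ := by
  obtain ⟨c, hc, hcf⟩ := exists_pos_forall_norm_le_imp_ge hf hpos (‖z‖ + 1)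
  have hmeas : Measurable fun y : E => ‖y‖ ^ (-lam) := by fun_prop
  have hint' : Integrable (fun y => f (z - y) * ‖y‖ ^ (-lam)) μ := by
    simpa only [_root_.sub_sub_cancel] using hint.comp_sub_left z
  refine Integrable.mono' (hint'.integrableOn.const_mul c⁻¹) hmeas.aestronglyMeasurable ?_
  filter_upwards [ae_restrict_mem measurableSet_ball] with y hy
  have hcy : c ≤ f (z - y) := hcf _ <| (norm_sub_le z y).trans <| by
    gcongr
    exact (mem_ball_zero_iff.1 hy).le
  rw [Real.norm_of_nonneg (by positivity), ← mul_assoc]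
  exact le_mul_of_one_le_left (by positivity) ((one_le_inv_mul₀ hc).2 hcy)

lemma setLIntegral_comp_sub_left {S : Set E} (hS : MeasurableSet S) {F : E → ℝ≥0∞}
    (hF : Measurable F) (z : E) :
    ∫⁻ y in S, F (z - y) ∂μ = ∫⁻ y in (z - ·) ⁻¹' S, F y ∂μ := by
  have hpres := Measure.measurePreserving_sub_left μ z
  have hcomp := hpres.setLIntegral_comp_preimage (hpres.measurable hS) hF
  have hinvol : (z - ·) ⁻¹' ((z - ·) ⁻¹' S) = S := by
    ext y
    simp
  rwa [hinvol] at hcomp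

lemma exists_pos_setLIntegral_riesz_le (hlam : 0 ≤ lam)
    (hloc : IntegrableOn (fun y : E => ‖y‖ ^ (-lam)) (ball 0 1) μ) (hε : 0 < ε) :
    ∃ η : ℝ≥0∞, 0 < η ∧ ∀ S, MeasurableSet S → μ S < η → ∀ z,
      ∫⁻ y in S, ENNReal.ofReal (‖z - y‖ ^ (-lam)) ∂μ ≤ ENNReal.ofReal ε := by
  set k : E → ℝ≥0∞ := fun y => ENNReal.ofReal (‖y‖ ^ (-lam)) with hk
  have hk_meas : Measurable k := by fun_prop
  have hfin : ∫⁻ y, (ball 0 1).indicator k y ∂μ < ⊤ := by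
    rw [lintegral_indicator measurableSet_ball]
    exact hloc.lintegral_lt_top
  obtain ⟨δ, hδ, hsmall⟩ := exists_pos_setLIntegral_lt_of_measure_lt hfin.ne
    (ε := ENNReal.ofReal (ε / 2)) (by simpa using hε)
  refine ⟨min δ (ENNReal.ofReal (ε / 2)), lt_min hδ (by simpa using hε), fun S hS hμS z => ?_⟩
  have hnear : ∫⁻ y in S, (ball 0 1).indicator k (z - y) ∂μ ≤ ENNReal.ofReal (ε / 2) := by
    rw [setLIntegral_comp_sub_left hS (hk_meas.indicator measurableSet_ball) z]
    refine (hsmall _ ?_).le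
    rw [(Measure.measurePreserving_sub_left μ z).measure_preimage hS.nullMeasurableSet]
    exact hμS.trans_le (min_le_left _ _)
  have hsplit : ∀ w, k w ≤ (ball 0 1).indicator k w + 1 := by
    intro w
    by_cases hw : w ∈ ball (0 : E) 1
    · simp [Set.indicator_of_mem hw]
    · have hw' : 1 ≤ ‖w‖ := by simpa using hw
      simpa [Set.indicator_of_notMem hw, hk] using
        Real.rpow_le_one_of_one_le_of_nonpos hw' (neg_nonpos.2 hlam)
  calc ∫⁻ y in S, k (z - y) ∂μ
      ≤ ∫⁻ y in S, ((ball 0 1).indicator k (z - y) + 1) ∂μ := lintegral_mono fun y => hsplit _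
    _ = ∫⁻ y in S, (ball 0 1).indicator k (z - y) ∂μ + μ S := by
        rw [lintegral_add_right _ measurable_const]
        simp
    _ ≤ ENNReal.ofReal (ε / 2) + ENNReal.ofReal (ε / 2) :=
        add_le_add hnear (hμS.trans_le (min_le_right _ _)).le
    _ = ENNReal.ofReal ε := by
        rw [← ENNReal.ofReal_add (by positivity) (by positivity), add_halves]

/-- The set `S` is small enough for every Riesz integral over it to be at most `1 / 2` after
multiplication by `C`. -/
structure IsRieszSmall (μ : Measure E) (lam C : ℝ) (S : Set E) : Prop where
  integrableOn : ∀ z, IntegrableOn (fun y => ‖z - y‖ ^ (-lam)) S μ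
  mul_integral_le : ∀ z, C * ∫ y in S, ‖z - y‖ ^ (-lam) ∂μ ≤ 1 / 2

lemma exists_pos_isRieszSmall_of_measure_lt (hlam : 0 ≤ lam)
    (hloc : IntegrableOn (fun y : E => ‖y‖ ^ (-lam)) (ball 0 1) μ) {C : ℝ} (hC : 0 < C) :
    ∃ η : ℝ≥0∞, 0 < η ∧ ∀ S, MeasurableSet S → μ S < η → IsRieszSmall μ lam C S := by
  obtain ⟨η, hη, hsmall⟩ :=
    exists_pos_setLIntegral_riesz_le hlam hloc (ε := C⁻¹ / 2) (by positivity)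
  have hmeas : ∀ z : E, Measurable fun y => ‖z - y‖ ^ (-lam) := fun z => by fun_prop
  refine ⟨η, hη, fun S hS hμS =>
    ⟨fun z => ⟨(hmeas z).aestronglyMeasurable, ?_⟩, fun z => ?_⟩⟩
  · rw [hasFiniteIntegral_iff_ofReal (.of_forall fun y => by positivity)]
    exact (hsmall S hS hμS z).trans_lt ENNReal.ofReal_lt_top
  · have hle : ∫ y in S, ‖z - y‖ ^ (-lam) ∂μ ≤ C⁻¹ / 2 := by
      rw [integral_eq_lintegral_of_nonneg_ae (.of_forall fun y => by positivity)
        (hmeas z).aestronglyMeasurable]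
      exact ENNReal.toReal_le_of_le_ofReal (by positivity) (hsmall S hS hμS z)
    calc C * ∫ y in S, ‖z - y‖ ^ (-lam) ∂μ ≤ C * (C⁻¹ / 2) := by gcongr
      _ = 1 / 2 := by field_simp

end SmallSets

section NarrowShell

variable {E : Type*} [NormedAddCommGroup E] [InnerProductSpace ℝ E] {lam p R ρ M D : ℝ}
  {u v : E → ℝ} {z w : E}

/-- The moving sphere inequality: outside the sphere of radius `R`, the Kelvin transform of `u`
does not exceed `u`. -/
def KelvinLE (lam R : ℝ) (u : E → ℝ) : Prop := ∀ z, R < ‖z‖ → kelvin lam R u z ≤ u z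

namespace ConformalRieszSystem

variable [MeasurableSpace E] {μ : Measure E}

lemma greenKernel_mul_kelvin_sub_le_indicator (h : ConformalRieszSystem μ lam p u v) (hR : 0 < R)
    (hM : ∀ y, ‖y‖ ≤ R → v y ≤ M) (hfar : ∀ z, ρ ≤ ‖z‖ → kelvin lam R v z ≤ v z) (hD : 0 ≤ D)
    (hdefect : ∀ w, R < ‖w‖ → kelvin lam R v w - v w ≤ D) (hz : R < ‖z‖) (hw : R < ‖w‖)
    (hwz : w ≠ z) :
    greenKernel lam R z w * (kelvin lam R v w ^ p - v w ^ p) ≤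
      (ball 0 ρ \ closedBall 0 R).indicator
        (fun w => p * M ^ (p - 1) * D * ‖z - w‖ ^ (-lam)) w := by
  have hp := h.one_le
  have hM0 : 0 < M := (h.pos_right 0).trans_le (hM 0 (by simpa using hR.le))
  have hG := greenKernel_nonneg h.lam_pos.le hR hz.le hw.le hwz
  have hkv := kelvin_pos (lam := lam) hR h.pos_right (norm_pos_iff.1 (hR.trans hw))
  by_cases hwS : w ∈ ball 0 ρ \ closedBall 0 R
  · rw [Set.indicator_of_mem hwS, mul_comm]
    exact mul_le_mul (rpow_sub_rpow_le_mul hkv (h.pos_right w).le hp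
      (kelvin_le_of_le_on_ball h.lam_pos.le hR (fun x => (h.pos_right x).le) hM hw) hD
      (hdefect w hw)) (greenKernel_le hR.le z w) hG (by positivity)
  · have hρw : ρ ≤ ‖w‖ := by
      by_contra! hlt
      exact hwS ⟨by simpa using hlt, by simpa using hw⟩
    rw [Set.indicator_of_notMem hwS]
    exact mul_nonpos_of_nonneg_of_nonpos hG
      (sub_nonpos.2 (Real.rpow_le_rpow hkv.le (hfar w hρw) (by linarith)))

variable [FiniteDimensional ℝ E] [BorelSpace E] [μ.IsAddHaarMeasure]

lemma integrableOn_greenKernel_mul_kelvin_sub (h : ConformalRieszSystem μ lam p u v) (hR : 0 < R)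
    (hz : R < ‖z‖) :
    IntegrableOn (fun w => greenKernel lam R z w * (kelvin lam R v w ^ p - v w ^ p))
      (closedBall 0 R)ᶜ μ := by
  refine (h.potential_left.integrableOn_greenKernel_mul h.conformal hR
    (fun x => (h.pos_right x).le) (norm_pos_iff.1 (hR.trans hz))).neg.congr (.of_forall fun w => ?_)
  simp only [Pi.neg_apply, ← mul_neg, neg_sub]

variable [Nontrivial E]

lemma kelvin_sub_eq_integral (h : ConformalRieszSystem μ lam p u v) (hR : 0 < R) (hz : R < ‖z‖) :
    kelvin lam R u z - u z = ∫ w in (closedBall 0 R)ᶜ,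
      greenKernel lam R z w * (kelvin lam R v w ^ p - v w ^ p) ∂μ := by
  have hz0 : z ≠ 0 := norm_pos_iff.1 (hR.trans hz)
  rw [← neg_sub, h.potential_left.sub_kelvin_eq_integral h.conformal hR
    (fun x => (h.pos_right x).le) hz0, ← integral_neg]
  simp only [← mul_neg, neg_sub]

lemma kelvin_sub_le_half (h : ConformalRieszSystem μ lam p u v) (hR : 0 < R)
    (hM : ∀ y, ‖y‖ ≤ R → v y ≤ M)
    (hshell : IsRieszSmall μ lam (p * M ^ (p - 1)) (ball 0 ρ \ closedBall 0 R))
    (hfar : ∀ z, ρ ≤ ‖z‖ → kelvin lam R v z ≤ v z) (hD : 0 ≤ D)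
    (hdefect : ∀ w, R < ‖w‖ → kelvin lam R v w - v w ≤ D) (hz : R < ‖z‖) :
    kelvin lam R u z - u z ≤ D / 2 := by
  set S : Set E := ball 0 ρ \ closedBall 0 R
  have hS_meas : MeasurableSet S := measurableSet_ball.diff isClosed_closedBall.measurableSet
  calc kelvin lam R u z - u z
      ≤ ∫ w in (closedBall 0 R)ᶜ,
          S.indicator (fun w => p * M ^ (p - 1) * D * ‖z - w‖ ^ (-lam)) w ∂μ := by
        rw [h.kelvin_sub_eq_integral hR hz]
        refine integral_mono_ae (h.integrableOn_greenKernel_mul_kelvin_sub hR hz)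
          ((integrable_indicator_iff hS_meas).2
            ((hshell.integrableOn z).const_mul _)).integrableOn ?_
        filter_upwards [ae_restrict_of_ae (Measure.ae_ne μ z),
          ae_restrict_mem isClosed_closedBall.measurableSet.compl] with w hwz hw
        exact h.greenKernel_mul_kelvin_sub_le_indicator hR hM hfar hD hdefect hz
          (by simpa using hw) hwz
    _ = D * (p * M ^ (p - 1) * ∫ w in S, ‖z - w‖ ^ (-lam) ∂μ) := by
        rw [setIntegral_indicator hS_meas,
          Set.inter_eq_self_of_subset_right fun w hw => hw.2, integral_const_mul]
        ring
    _ ≤ D * (1 / 2) := by gcongr; exact hshell.mul_integral_le z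
    _ = D / 2 := by ring

-- The defect `kelvin lam R · - ·` is at most `M`, and `kelvin_sub_le_half` halves it repeatedly.
lemma kelvinLE_of_isRieszSmall (h : ConformalRieszSystem μ lam p u v) (hR : 0 < R)
    (hMu : ∀ y, ‖y‖ ≤ R → u y ≤ M) (hMv : ∀ y, ‖y‖ ≤ R → v y ≤ M)
    (hshell : IsRieszSmall μ lam (p * M ^ (p - 1)) (ball 0 ρ \ closedBall 0 R))
    (hfar_u : ∀ z, ρ ≤ ‖z‖ → kelvin lam R u z ≤ u z)
    (hfar_v : ∀ z, ρ ≤ ‖z‖ → kelvin lam R v z ≤ v z) :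
    KelvinLE lam R u ∧ KelvinLE lam R v := by
  have hM0 : 0 < M := (h.pos_right 0).trans_le (hMv 0 (by simpa using hR.le))
  have hdefect : ∀ k : ℕ, ∀ z : E, R < ‖z‖ → kelvin lam R u z - u z ≤ M * (1 / 2) ^ k ∧
      kelvin lam R v z - v z ≤ M * (1 / 2) ^ k := by
    intro k
    induction k with
    | zero =>
      intro z hz
      have hu := kelvin_le_of_le_on_ball h.lam_pos.le hR (fun x => (h.pos_left x).le) hMu hz
      have hv := kelvin_le_of_le_on_ball h.lam_pos.le hR (fun x => (h.pos_right x).le) hMv hz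
      rw [pow_zero, mul_one]
      constructor <;> linarith [h.pos_left z, h.pos_right z]
    | succ k ih =>
      intro z hz
      rw [show M * (1 / 2 : ℝ) ^ (k + 1) = M * (1 / 2) ^ k / 2 by ring]
      exact ⟨h.kelvin_sub_le_half hR hMv hshell hfar_v (by positivity) (fun w hw => (ih w hw).2) hz,
        h.symm.kelvin_sub_le_half hR hMu hshell hfar_u (by positivity) (fun w hw => (ih w hw).1) hz⟩
  have hlim : Tendsto (fun k : ℕ => M * (1 / 2 : ℝ) ^ k) atTop (𝓝 0) := by
    simpa using (tendsto_pow_atTop_nhds_zero_of_lt_one (r := (1 / 2 : ℝ))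
      (by norm_num) (by norm_num)).const_mul M
  exact ⟨fun z hz => sub_nonpos.1 (ge_of_tendsto' hlim fun k => (hdefect k z hz).1),
    fun z hz => sub_nonpos.1 (ge_of_tendsto' hlim fun k => (hdefect k z hz).2)⟩

end ConformalRieszSystem

end NarrowShell

section KernelBounds

variable {E : Type*} [NormedAddCommGroup E] {lam R δ η K ρ : ℝ} {z w : E}

lemma norm_sub_le_mul_norm (hρ : 0 < ρ) (hK : 0 ≤ K) (hz : ρ ≤ ‖z‖) (hw : ‖w‖ ≤ K) :
    ‖z - w‖ ≤ (1 + K / ρ) * ‖z‖ :=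
  calc ‖z - w‖ ≤ ‖z‖ + ‖w‖ := norm_sub_le z w
    _ ≤ ‖z‖ + K / ρ * ρ := by rw [div_mul_cancel₀ K hρ.ne']; gcongr
    _ ≤ ‖z‖ + K / ρ * ‖z‖ := by gcongr
    _ = (1 + K / ρ) * ‖z‖ := by ring

lemma mul_norm_rpow_le_norm_sub_rpow (hlam : 0 ≤ lam) (hρ : 0 < ρ) (hK : 0 ≤ K) (hz : ρ ≤ ‖z‖)
    (hw : ‖w‖ ≤ K) (hwz : w ≠ z) : (1 + K / ρ) ^ (-lam) * ‖z‖ ^ (-lam) ≤ ‖z - w‖ ^ (-lam) := by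
  rw [← Real.mul_rpow (by positivity) (by positivity)]
  exact Real.rpow_le_rpow_of_nonpos (norm_sub_pos_iff.2 hwz.symm)
    (norm_sub_le_mul_norm hρ hK hz hw) (neg_nonpos.2 hlam)

variable [InnerProductSpace ℝ E]

lemma exists_one_lt_mul_norm_sub_le_imageDist (hR : 0 < R) (hδ : 0 < δ) (hη : 0 < η) (hK : 0 ≤ K) :
    ∃ q > 1, ∀ z w : E, R + δ ≤ ‖z‖ → R + η ≤ ‖w‖ → ‖w‖ ≤ K →
      q * ‖z - w‖ ≤ imageDist R z w := by
  set b := 1 + K / R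
  have hb : 0 < b := by positivity
  set d := δ / (R + δ) * η ^ 2 / (R ^ 2 * b ^ 2)
  refine ⟨√(1 + d), Real.lt_sqrt_of_sq_lt (by rw [one_pow, lt_add_iff_pos_right]; positivity),
    fun z w hz hw hwK => ?_⟩
  have hz_excess : δ / (R + δ) * ‖z‖ ^ 2 ≤ ‖z‖ ^ 2 - R ^ 2 := by
    rw [div_mul_eq_mul_div, div_le_iff₀ (by positivity)]
    have hsq : R * (R + δ) ≤ ‖z‖ ^ 2 := by nlinarith
    nlinarith
  have hw_excess : η ^ 2 ≤ ‖w‖ ^ 2 - R ^ 2 := by nlinarith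
  have hnear : ‖z - w‖ ≤ b * ‖z‖ := norm_sub_le_mul_norm hR hK (by linarith) hwK
  rw [← sq_le_sq₀ (by positivity) (imageDist_nonneg hR.le _ _), mul_pow,
    Real.sq_sqrt (by positivity),
    imageDist_sq hR.ne' z (norm_pos_iff.1 (by linarith)), add_mul, one_mul]
  gcongr
  calc d * ‖z - w‖ ^ 2 ≤ d * (b * ‖z‖) ^ 2 := by gcongr
    _ = (δ / (R + δ) * ‖z‖ ^ 2) * η ^ 2 / R ^ 2 := by
      simp only [d]
      field_simp
    _ ≤ (‖z‖ ^ 2 - R ^ 2) * (‖w‖ ^ 2 - R ^ 2) / R ^ 2 := by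
      gcongr
      exact (by positivity : 0 ≤ δ / (R + δ) * ‖z‖ ^ 2).trans hz_excess

lemma exists_pos_mul_norm_rpow_le_greenKernel (hlam : 0 < lam) (hR : 0 < R) (hδ : 0 < δ)
    (hη : 0 < η) (hK : 0 ≤ K) :
    ∃ c > 0, ∀ z w : E, R + δ ≤ ‖z‖ → R + η ≤ ‖w‖ → ‖w‖ ≤ K → w ≠ z →
      c * ‖z‖ ^ (-lam) ≤ greenKernel lam R z w := by
  obtain ⟨q, hq, hqdist⟩ := exists_one_lt_mul_norm_sub_le_imageDist (E := E) hR hδ hη hK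
  have hgain : 0 < 1 - q ^ (-lam) :=
    sub_pos.2 (Real.rpow_lt_one_of_one_lt_of_neg hq (neg_lt_zero.2 hlam))
  refine ⟨(1 - q ^ (-lam)) * (1 + K / R) ^ (-lam), by positivity, fun z w hz hw hwK hwz => ?_⟩
  have hzw : 0 < ‖z - w‖ := norm_sub_pos_iff.2 hwz.symm
  have hreflected : imageDist R z w ^ (-lam) ≤ q ^ (-lam) * ‖z - w‖ ^ (-lam) := by
    rw [← Real.mul_rpow (by positivity) hzw.le]
    exact Real.rpow_le_rpow_of_nonpos (by positivity) (hqdist z w hz hw hwK) (by linarith)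
  calc (1 - q ^ (-lam)) * (1 + K / R) ^ (-lam) * ‖z‖ ^ (-lam)
      = (1 - q ^ (-lam)) * ((1 + K / R) ^ (-lam) * ‖z‖ ^ (-lam)) := by ring
    _ ≤ (1 - q ^ (-lam)) * ‖z - w‖ ^ (-lam) := by
      gcongr
      exact mul_norm_rpow_le_norm_sub_rpow hlam.le hR hK (by linarith) hwK hwz
    _ ≤ greenKernel lam R z w := by
      rw [greenKernel, sub_mul, one_mul]
      gcongr

end KernelBounds

section KelvinContinuity

variable {E : Type*} [NormedAddCommGroup E] [InnerProductSpace ℝ E] {lam R δ c : ℝ} {u : E → ℝ}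
  {z : E}

lemma kelvin_zero_radius (hlam : lam ≠ 0) (u : E → ℝ) (z : E) : kelvin lam 0 u z = 0 := by
  simp [kelvin, Real.zero_rpow hlam]

lemma continuousAt_kelvin (hu : Continuous u) (hR : 0 < R) (hz : z ≠ 0) :
    ContinuousAt (kelvin lam R u) z := by
  have hz' : ‖z‖ ≠ 0 := norm_ne_zero_iff.2 hz
  have hfactor : ContinuousAt (fun z : E => (R / ‖z‖) ^ lam) z :=
    (continuousAt_const.div continuous_norm.continuousAt hz').rpow_const
      (.inl (div_ne_zero hR.ne' hz'))
  exact hfactor.mul (hu.continuousAt.comp (continuousAt_const.inversion continuousAt_const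
    continuousAt_id hz))

lemma kelvin_eq_mul_norm_rpow (hR : 0 ≤ R) (u : E → ℝ) (z : E) :
    kelvin lam R u z = R ^ lam * u (R ^ 2 • (‖z‖⁻¹ ^ 2 • z)) * ‖z‖ ^ (-lam) := by
  rw [kelvin, inversion_zero_eq_smul, smul_smul, ← mul_pow, ← div_eq_mul_inv,
    Real.div_rpow hR (norm_nonneg z), Real.rpow_neg (norm_nonneg z)]
  ring

lemma continuous_kelvin_radius (hlam : 0 ≤ lam) (hu : Continuous u) (z : E) :
    Continuous fun R => kelvin lam R u z := by
  simp only [kelvin, inversion_zero_eq_smul]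
  have hratio : Continuous fun R : ℝ => R / ‖z‖ := by fun_prop
  exact (hratio.rpow_const fun _ => .inr hlam).mul
    (hu.comp ((hratio.pow 2).smul continuous_const))

lemma eventually_kelvin_le_add [ProperSpace E] (hlam : 0 ≤ lam) (hu : Continuous u) (hR : 0 ≤ R)
    (hδ : 0 < δ) (hc : 0 < c) :
    ∀ᶠ r in 𝓝[>] R, ∀ z : E, R + δ ≤ ‖z‖ →
      kelvin lam r u z ≤ kelvin lam R u z + c * ‖z‖ ^ (-lam) := by
  have hcont : Continuous fun q : ℝ × E => q.1 ^ lam * u (q.1 ^ 2 • q.2) :=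
    (continuous_fst.rpow_const fun _ => .inr hlam).mul (hu.comp (by fun_prop))
  have hcompact : ∀ᶠ r in 𝓝 R, ∀ w ∈ closedBall (0 : E) δ⁻¹,
      r ^ lam * u (r ^ 2 • w) < R ^ lam * u (R ^ 2 • w) + c := by
    refine (isCompact_closedBall (0 : E) δ⁻¹).eventually_forall_of_forall_eventually fun w _ => ?_
    exact hcont.continuousAt.eventually_lt (continuousAt_const.mul
      (hu.comp (by fun_prop)).continuousAt |>.add continuousAt_const)
      (lt_add_of_pos_right _ hc)
  filter_upwards [nhdsWithin_le_nhds hcompact, self_mem_nhdsWithin] with r hr hRr z hz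
  have hδz : δ ≤ ‖z‖ := by linarith
  have hz0 : 0 < ‖z‖ := hδ.trans_le hδz
  have hmem : ‖z‖⁻¹ ^ 2 • z ∈ closedBall (0 : E) δ⁻¹ := by
    rw [mem_closedBall_zero_iff, norm_smul, norm_pow, norm_inv, norm_norm, sq, mul_assoc,
      inv_mul_cancel₀ hz0.ne', mul_one]
    exact inv_anti₀ hδ hδz
  rw [kelvin_eq_mul_norm_rpow (hR.trans (Set.mem_Ioi.1 hRr).le), kelvin_eq_mul_norm_rpow hR,
    ← add_mul]
  gcongr
  exact (hr _ hmem).le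

end KelvinContinuity

lemma tendsto_measure_shell {E : Type*} [NormedAddCommGroup E] [ProperSpace E] [MeasurableSpace E]
    [BorelSpace E] (μ : Measure E) [IsFiniteMeasureOnCompacts μ] (R : ℝ) :
    Tendsto (fun ρ => μ (ball (0 : E) ρ \ closedBall 0 R)) (𝓝[>] R) (𝓝 0) := by
  have hlim := tendsto_measure_biInter_gt (μ := μ) (a := R)
    (s := fun ρ => ball (0 : E) ρ \ closedBall 0 R)
    (fun ρ _ => (measurableSet_ball.diff isClosed_closedBall.measurableSet).nullMeasurableSet)
    (fun i j _ hij => Set.sdiff_subset_sdiff_left (ball_subset_ball hij))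
    ⟨R + 1, lt_add_one R, measure_ne_top_of_subset Set.sdiff_subset measure_ball_lt_top.ne⟩
  have hempty : ⋂ ρ > R, ball (0 : E) ρ \ closedBall 0 R = ∅ := by
    refine Set.eq_empty_of_forall_notMem fun w hw => ?_
    have hRw : R < ‖w‖ := by simpa using (Set.mem_iInter₂.1 hw (R + 1) (lt_add_one R)).2
    simpa using (Set.mem_iInter₂.1 hw ‖w‖ hRw).1
  rwa [hempty, measure_empty] at hlim

lemma mul_measureReal_le_setIntegral {X : Type*} [MeasurableSpace X] {μ : Measure X} {S : Set X}
    {f : X → ℝ} {c : ℝ} (hS : μ S ≠ ⊤) (hc : ∀ᵐ x ∂μ.restrict S, c ≤ f x)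
    (hf : IntegrableOn f S μ) : c * μ.real S ≤ ∫ x in S, f x ∂μ := by
  have hconst : IntegrableOn (fun _ => c) S μ := integrableOn_const hS
  have h := integral_mono_ae hconst hf hc
  rwa [setIntegral_const, smul_eq_mul, mul_comm] at h

section Gap

variable {E : Type*} [NormedAddCommGroup E] [InnerProductSpace ℝ E] {lam p R : ℝ} {u v : E → ℝ}

/-- A quantitative strict form of the moving sphere inequality: away from the sphere of radius `R`,
the function `u` exceeds its Kelvin transform by a multiple of `‖z‖ ^ (-lam)`. -/
def KelvinGap (lam R : ℝ) (u : E → ℝ) : Prop :=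
  ∀ δ > 0, ∃ c > 0, ∀ z, R + δ ≤ ‖z‖ → kelvin lam R u z + c * ‖z‖ ^ (-lam) ≤ u z

/-- Outside the sphere of radius `R`, the function `u` agrees with its Kelvin transform. -/
def KelvinInvariant (lam R : ℝ) (u : E → ℝ) : Prop := ∀ z, R < ‖z‖ → kelvin lam R u z = u z

lemma KelvinGap.exists_kelvin_lt [Nontrivial E] (h : KelvinGap lam R u) :
    ∃ z, R < ‖z‖ ∧ kelvin lam R u z < u z := by
  obtain ⟨z, hz⟩ := NormedSpace.exists_lt_norm ℝ E (max (R + 1) 0)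
  obtain ⟨c, hc, hgap⟩ := h 1 one_pos
  have hz0 : 0 < ‖z‖ := (le_max_right _ _).trans_lt hz
  have hRz : R + 1 < ‖z‖ := (le_max_left _ _).trans_lt hz
  exact ⟨z, by linarith, (lt_add_of_pos_right _ (by positivity)).trans_le (hgap z hRz.le)⟩

lemma exists_ball_le_rpow_sub_kelvin_rpow (hv : Continuous v) (hpos : ∀ x, 0 < v x) (hp : 0 < p)
    (hR : 0 < R) {w₀ : E} (hw₀ : R < ‖w₀‖) (hlt : kelvin lam R v w₀ < v w₀) :
    ∃ ρ > 0, ∃ c > 0, ∃ η > 0, ∀ w ∈ ball w₀ ρ,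
      c ≤ v w ^ p - kelvin lam R v w ^ p ∧ R + η ≤ ‖w‖ ∧ ‖w‖ ≤ ‖w₀‖ + 1 := by
  have hw₀_ne : w₀ ≠ 0 := norm_pos_iff.1 (hR.trans hw₀)
  have hkv := kelvin_pos (lam := lam) hR hpos hw₀_ne
  have hgap : 0 < v w₀ ^ p - kelvin lam R v w₀ ^ p :=
    sub_pos.2 (Real.rpow_lt_rpow hkv.le hlt hp)
  have hcont : ContinuousAt (fun w => v w ^ p - kelvin lam R v w ^ p) w₀ :=
    (hv.continuousAt.rpow_const (.inl (hpos _).ne')).sub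
      ((continuousAt_kelvin hv hR hw₀_ne).rpow_const (.inl hkv.ne'))
  have hnorm : ContinuousAt (fun w : E => ‖w‖) w₀ := continuous_norm.continuousAt
  obtain ⟨ρ, hρ, hball⟩ := Metric.eventually_nhds_iff_ball.1 <|
    (continuousAt_const.eventually_lt hcont (half_lt_self hgap)).and <|
      (continuousAt_const.eventually_lt hnorm (show R + (‖w₀‖ - R) / 2 < ‖w₀‖ by linarith)).and
        (hnorm.eventually_lt continuousAt_const (lt_add_one _))
  exact ⟨ρ, hρ, _, half_pos hgap, (‖w₀‖ - R) / 2, by linarith,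
    fun w hw => ⟨(hball w hw).1.le, (hball w hw).2.1.le, (hball w hw).2.2.le⟩⟩

variable [FiniteDimensional ℝ E] [MeasurableSpace E] [BorelSpace E] {μ : Measure E}
  [μ.IsAddHaarMeasure] [Nontrivial E]

namespace ConformalRieszSystem

lemma kelvinGap_zero (h : ConformalRieszSystem μ lam p u v) : KelvinGap lam 0 u := by
  intro δ hδ
  have hp := h.one_le
  obtain ⟨c, hc, hcv⟩ := exists_pos_forall_norm_le_imp_ge h.continuous_right h.pos_right 1
  have hvol : 0 < μ.real (ball (0 : E) 1) :=
    ENNReal.toReal_pos (measure_ball_pos μ 0 one_pos).ne' measure_ball_lt_top.ne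
  refine ⟨c ^ p * (1 + 1 / δ) ^ (-lam) * μ.real (ball (0 : E) 1), by positivity, fun z hz => ?_⟩
  rw [zero_add] at hz
  calc kelvin lam 0 u z + c ^ p * (1 + 1 / δ) ^ (-lam) * μ.real (ball (0 : E) 1) * ‖z‖ ^ (-lam)
      = c ^ p * ((1 + 1 / δ) ^ (-lam) * ‖z‖ ^ (-lam)) * μ.real (ball (0 : E) 1) := by
        rw [kelvin_zero_radius h.lam_pos.ne']
        ring
    _ ≤ ∫ y in ball 0 1, v y ^ p * ‖z - y‖ ^ (-lam) ∂μ := by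
        refine mul_measureReal_le_setIntegral measure_ball_lt_top.ne ?_
          (h.potential_left.integrable z).integrableOn
        filter_upwards [ae_restrict_of_ae (Measure.ae_ne μ z), ae_restrict_mem measurableSet_ball]
          with w hwz hw
        have hw1 : ‖w‖ ≤ 1 := (mem_ball_zero_iff.1 hw).le
        have hker := mul_norm_rpow_le_norm_sub_rpow h.lam_pos.le hδ zero_le_one hz hw1 hwz
        gcongr
        · exact Real.rpow_nonneg (h.pos_right w).le p
        · exact hcv w hw1
    _ ≤ ∫ y, v y ^ p * ‖z - y‖ ^ (-lam) ∂μ :=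
        setIntegral_le_integral (h.potential_left.integrable z) (.of_forall fun y =>
          mul_nonneg (Real.rpow_nonneg (h.pos_right y).le p) (by positivity))
    _ = u z := (h.potential_left.eq_integral z).symm

lemma kelvinGap_of_exists_kelvin_lt (h : ConformalRieszSystem μ lam p u v) (hR : 0 < R)
    (hle : KelvinLE lam R v) (hlt : ∃ w, R < ‖w‖ ∧ kelvin lam R v w < v w) :
    KelvinGap lam R u := by
  intro δ hδ
  have hp := h.one_le
  obtain ⟨w₀, hw₀, hlt⟩ := hlt
  obtain ⟨ρ, hρ, c₁, hc₁, η, hη, hball⟩ := exists_ball_le_rpow_sub_kelvin_rpow (p := p)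
    h.continuous_right h.pos_right (by linarith) hR hw₀ hlt
  obtain ⟨c₂, hc₂, hgreen⟩ := exists_pos_mul_norm_rpow_le_greenKernel (E := E) h.lam_pos hR hδ hη
    (K := ‖w₀‖ + 1) (by positivity)
  have hvol : 0 < μ.real (ball w₀ ρ) :=
    ENNReal.toReal_pos (measure_ball_pos μ w₀ hρ).ne' measure_ball_lt_top.ne
  refine ⟨c₂ * c₁ * μ.real (ball w₀ ρ), by positivity, fun z hz => ?_⟩
  have hRz : R < ‖z‖ := by linarith
  have hz0 : z ≠ 0 := norm_pos_iff.1 (hR.trans hRz)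
  have hv := fun x => (h.pos_right x).le
  have hsub : ball w₀ ρ ⊆ (closedBall 0 R)ᶜ := fun w hw => by
    simpa using (lt_add_of_pos_right R hη).trans_le (hball w hw).2.1
  have hint := h.potential_left.integrableOn_greenKernel_mul h.conformal hR hv hz0
  rw [← le_sub_iff_add_le', h.potential_left.sub_kelvin_eq_integral h.conformal hR hv hz0]
  calc c₂ * c₁ * μ.real (ball w₀ ρ) * ‖z‖ ^ (-lam)
      = c₂ * ‖z‖ ^ (-lam) * c₁ * μ.real (ball w₀ ρ) := by ring
    _ ≤ ∫ w in ball w₀ ρ, greenKernel lam R z w * (v w ^ p - kelvin lam R v w ^ p) ∂μ := by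
        refine mul_measureReal_le_setIntegral measure_ball_lt_top.ne ?_ (hint.mono_set hsub)
        filter_upwards [ae_restrict_of_ae (Measure.ae_ne μ z), ae_restrict_mem measurableSet_ball]
          with w hwz hw
        obtain ⟨hcw, hηw, hwK⟩ := hball w hw
        exact mul_le_mul (hgreen z w hz hηw hwK hwz) hcw hc₁.le
          (greenKernel_nonneg h.lam_pos.le hR hRz.le (by linarith) hwz)
    _ ≤ _ := by
        refine setIntegral_mono_set hint ?_ hsub.eventuallyLE
        filter_upwards [ae_restrict_of_ae (Measure.ae_ne μ z),
          ae_restrict_mem isClosed_closedBall.measurableSet.compl] with w hwz hw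
        have hRw : R < ‖w‖ := by simpa using hw
        have hkv := kelvin_pos (lam := lam) hR h.pos_right (norm_pos_iff.1 (hR.trans hRw))
        exact mul_nonneg (greenKernel_nonneg h.lam_pos.le hR hRz.le hRw.le hwz)
          (sub_nonneg.2 (Real.rpow_le_rpow hkv.le (hle w hRw) (by linarith)))

lemma eventually_kelvinLE (h : ConformalRieszSystem μ lam p u v) (hR : 0 ≤ R)
    (hu : KelvinGap lam R u) (hv : KelvinGap lam R v) :
    ∀ᶠ r in 𝓝[>] R, KelvinLE lam r u ∧ KelvinLE lam r v := by
  have hp := h.one_le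
  obtain ⟨Mu, hMu, hbound_u⟩ := exists_pos_forall_norm_le_imp_le h.continuous_left (R + 1)
  obtain ⟨Mv, -, hbound_v⟩ := exists_pos_forall_norm_le_imp_le h.continuous_right (R + 1)
  have hloc := integrableOn_norm_rpow_of_integrable_mul
    (h.continuous_right.rpow_const fun x => .inl (h.pos_right x).ne')
    (fun x => Real.rpow_pos_of_pos (h.pos_right x) p) (h.potential_left.integrable 0)
  obtain ⟨η, hη, hsmall⟩ := exists_pos_isRieszSmall_of_measure_lt h.lam_pos.le hloc
    (C := p * max Mu Mv ^ (p - 1)) (by positivity)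
  obtain ⟨ρ, hshell, hρ⟩ :=
    (((tendsto_measure_shell μ R).eventually_lt_const hη).and self_mem_nhdsWithin).exists
  have hδ : 0 < ρ - R := sub_pos.2 hρ
  obtain ⟨cu, hcu, hgap_u⟩ := hu _ hδ
  obtain ⟨cv, hcv, hgap_v⟩ := hv _ hδ
  rw [add_sub_cancel] at hgap_u hgap_v
  filter_upwards [eventually_kelvin_le_add h.lam_pos.le h.continuous_left hR hδ hcu,
    eventually_kelvin_le_add h.lam_pos.le h.continuous_right hR hδ hcv,
    Ioo_mem_nhdsGT (lt_add_one R)] with r hru hrv hr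
  rw [add_sub_cancel] at hru hrv
  have hsub : ball (0 : E) ρ \ closedBall 0 r ⊆ ball 0 ρ \ closedBall 0 R :=
    Set.sdiff_subset_sdiff_right (closedBall_subset_closedBall hr.1.le)
  exact h.kelvinLE_of_isRieszSmall (M := max Mu Mv) (ρ := ρ) (hR.trans_lt hr.1)
    (fun y hy => (hbound_u y (hy.trans hr.2.le)).trans (le_max_left _ _))
    (fun y hy => (hbound_v y (hy.trans hr.2.le)).trans (le_max_right _ _))
    (hsmall _ (measurableSet_ball.diff isClosed_closedBall.measurableSet)
      ((measure_mono hsub).trans_lt hshell))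
    (fun z hz => (hru z hz).trans (hgap_u z hz)) (fun z hz => (hrv z hz).trans (hgap_v z hz))

lemma kelvinInvariant_or_kelvinGap (h : ConformalRieszSystem μ lam p u v) (hR : 0 < R)
    (hu : KelvinLE lam R u) (hv : KelvinLE lam R v) :
    (KelvinInvariant lam R u ∧ KelvinInvariant lam R v) ∨
      (KelvinGap lam R u ∧ KelvinGap lam R v) := by
  by_cases hlt_u : ∃ w, R < ‖w‖ ∧ kelvin lam R u w < u w
  · have hgap_v := h.symm.kelvinGap_of_exists_kelvin_lt hR hu hlt_u
    exact .inr ⟨h.kelvinGap_of_exists_kelvin_lt hR hv hgap_v.exists_kelvin_lt, hgap_v⟩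
  by_cases hlt_v : ∃ w, R < ‖w‖ ∧ kelvin lam R v w < v w
  · have hgap_u := h.kelvinGap_of_exists_kelvin_lt hR hv hlt_v
    exact .inr ⟨hgap_u, h.symm.kelvinGap_of_exists_kelvin_lt hR hu hgap_u.exists_kelvin_lt⟩
  push Not at hlt_u hlt_v
  exact .inl ⟨fun z hz => (hu z hz).antisymm (hlt_u z hz),
    fun z hz => (hv z hz).antisymm (hlt_v z hz)⟩

end ConformalRieszSystem

end Gap

lemma exists_maximal_Ioc_of_eventually {P : ℝ → Prop} (hzero : ∀ᶠ r in 𝓝[>] 0, P r)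
    (hlim : ∀ R > 0, (∀ r ∈ Set.Ioo 0 R, P r) → P R) (hfail : ∃ R > 0, ¬ P R) :
    ∃ R > 0, (∀ r ∈ Set.Ioc 0 R, P r) ∧ ¬ ∀ᶠ r in 𝓝[>] R, P r := by
  obtain ⟨R₁, hR₁, hnot⟩ := hfail
  set A : Set ℝ := {R | 0 < R ∧ ∀ r ∈ Set.Ioc 0 R, P r}
  obtain ⟨R₀, hR₀, hlt⟩ := mem_nhdsGT_iff_exists_Ioc_subset.1 hzero
  have hR₀A : R₀ ∈ A := ⟨hR₀, fun r hr => hlt hr⟩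
  have hbdd : BddAbove A :=
    ⟨R₁, fun R hR => not_lt.1 fun hlt => hnot (hR.2 R₁ ⟨hR₁, hlt.le⟩)⟩
  have hpos : 0 < sSup A := lt_of_lt_of_le hR₀ (le_csSup hbdd hR₀A)
  have hbelow : ∀ r ∈ Set.Ioo 0 (sSup A), P r := fun r hr => by
    obtain ⟨R, hR, hrR⟩ := exists_lt_of_lt_csSup ⟨R₀, hR₀A⟩ hr.2
    exact hR.2 r ⟨hr.1, hrR.le⟩
  have hupto : ∀ r ∈ Set.Ioc 0 (sSup A), P r := fun r hr => by
    obtain hr' | rfl := hr.2.lt_or_eq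
    exacts [hbelow r ⟨hr.1, hr'⟩, hlim _ hpos hbelow]
  refine ⟨sSup A, hpos, hupto, fun hev => ?_⟩
  obtain ⟨R, hR, hsub⟩ := mem_nhdsGT_iff_exists_Ioc_subset.1 hev
  refine (le_csSup hbdd ⟨hpos.trans hR, fun r hr => ?_⟩).not_gt hR
  obtain hle | hgt := le_or_gt r (sSup A)
  exacts [hupto r ⟨hr.1, hle⟩, hsub ⟨hgt, hr.2⟩]

section Doubling

variable {E : Type*} [NormedAddCommGroup E] [NormedSpace ℝ E] [MeasurableSpace E] {μ : Measure E}
  [μ.IsAddHaarMeasure]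

lemma measure_annulus_pos [Nontrivial E] {a b : ℝ} (ha : 0 ≤ a) (hab : a < b) :
    0 < μ (ball (0 : E) b \ closedBall 0 a) := by
  obtain ⟨x, hx⟩ := exists_norm_eq E (show 0 ≤ (a + b) / 2 by linarith)
  refine (isOpen_ball.sdiff isClosed_closedBall).measure_pos μ ⟨x, ?_⟩
  rw [Set.mem_sdiff, mem_ball_zero_iff, mem_closedBall_zero_iff, hx]
  constructor <;> linarith

variable [BorelSpace E] [FiniteDimensional ℝ E] {F : E → ℝ≥0∞}

lemma ofReal_pow_mul_setLIntegral_comp_smul (hF : Measurable F) {c : ℝ} (hc : 0 < c) {S : Set E}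
    (hS : MeasurableSet S) :
    ENNReal.ofReal (c ^ finrank ℝ E) * ∫⁻ z in (c • ·) ⁻¹' S, F (c • z) ∂μ =
      ∫⁻ z in S, F z ∂μ := by
  rw [← setLIntegral_map hS hF (measurable_const_smul c), Measure.map_addHaar_smul μ hc.ne',
    Measure.restrict_smul, lintegral_smul_measure, abs_of_pos (by positivity), smul_eq_mul,
    ← mul_assoc, ← ENNReal.ofReal_mul (by positivity), mul_inv_cancel₀ (by positivity),
    ENNReal.ofReal_one, one_mul]

/-- The doubling hypothesis says that dyadic shells have nondecreasing integrals. -/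
lemma lintegral_eq_top_of_le_comp_two_smul [Nontrivial E] (hF : Measurable F) (hpos : ∀ z, 0 < F z)
    (hdouble : ∀ z, 1 < ‖z‖ → F z ≤ ENNReal.ofReal (2 ^ finrank ℝ E) * F ((2 : ℝ) • z)) :
    ∫⁻ z, F z ∂μ = ⊤ := by
  by_contra hfin
  set outside : ℝ → Set E := fun r => (closedBall 0 r)ᶜ
  have hmeas (r : ℝ) : MeasurableSet (outside r) := isClosed_closedBall.measurableSet.compl
  have hpre : ((2 : ℝ) • · : E → E) ⁻¹' outside 2 = outside 1 := by
    ext z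
    simp [outside, norm_smul]
  have hle : ∫⁻ z in outside 1, F z ∂μ ≤ ∫⁻ z in outside 2, F z ∂μ := by
    calc ∫⁻ z in outside 1, F z ∂μ
        ≤ ∫⁻ z in outside 1, ENNReal.ofReal (2 ^ finrank ℝ E) * F ((2 : ℝ) • z) ∂μ :=
          setLIntegral_mono' (hmeas 1) fun z hz => hdouble z (by simpa [outside] using hz)
      _ = ∫⁻ z in outside 2, F z ∂μ := by
          rw [lintegral_const_mul' _ _ ENNReal.ofReal_ne_top, ← hpre,
            ofReal_pow_mul_setLIntegral_comp_smul hF two_pos (hmeas 2)]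
  have hsub : outside 2 ⊆ outside 1 :=
    Set.compl_subset_compl.2 (closedBall_subset_closedBall one_le_two)
  have hsplit := lintegral_inter_add_sdiff (μ := μ) F (outside 1) (hmeas 2)
  rw [Set.inter_eq_self_of_subset_right hsub] at hsplit
  have hshell : 0 < ∫⁻ z in outside 1 \ outside 2, F z ∂μ := by
    rw [setLIntegral_pos_iff hF, Function.support_eq_univ fun z => (hpos z).ne', Set.univ_inter]
    refine (measure_annulus_pos zero_le_one one_lt_two).trans_le (measure_mono fun z hz => ?_)
    simp only [outside, Set.mem_sdiff, Set.mem_compl_iff, not_not]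
    exact ⟨hz.2, ball_subset_closedBall hz.1⟩
  have hlt := ENNReal.lt_add_right
    ((setLIntegral_le_lintegral (outside 2) F).trans_lt (Ne.lt_top hfin)).ne hshell.ne'
  exact (hsplit ▸ hle).not_gt hlt

end Doubling

section Critical

variable {E : Type*} [NormedAddCommGroup E] [InnerProductSpace ℝ E] {lam p q R : ℝ} {u v : E → ℝ}

lemma kelvin_sqrt_mul_smul (lam : ℝ) (u : E → ℝ) {a b : ℝ} (ha : 0 < a) (hb : 0 < b) {ω : E}
    (hω : ω ≠ 0) :
    kelvin lam (√(a * b) * ‖ω‖) u (b • ω) = (a / b) ^ (lam / 2) * u (a • ω) := by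
  have hratio : √(a * b) * ‖ω‖ / ‖b • ω‖ = √(a / b) := by
    rw [norm_smul, Real.norm_of_nonneg hb.le, mul_div_mul_right _ _ (norm_ne_zero_iff.2 hω),
      Real.sqrt_mul ha.le, Real.sqrt_div ha.le, div_eq_div_iff hb.ne' (by positivity), mul_assoc,
      Real.mul_self_sqrt hb.le]
  rw [kelvin, inversion_zero_eq_smul, hratio, Real.sq_sqrt (by positivity), smul_smul,
    div_mul_cancel₀ _ hb.ne', Real.sqrt_eq_rpow, ← Real.rpow_mul (by positivity)]
  ring_nf

lemma KelvinLE.rpow_mul_le {a b : ℝ} (ha : 0 < a) (hab : a < b) {ω : E} (hω : ω ≠ 0)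
    (h : KelvinLE lam (√(a * b) * ‖ω‖) u) :
    a ^ (lam / 2) * u (a • ω) ≤ b ^ (lam / 2) * u (b • ω) := by
  have hb := ha.trans hab
  have hsqrt : √(a * b) < b := (Real.sqrt_lt' hb).2 (by nlinarith)
  have hout : √(a * b) * ‖ω‖ < ‖b • ω‖ := by
    rw [norm_smul, Real.norm_of_nonneg hb.le]
    gcongr
  have hkelvin := h _ hout
  rw [kelvin_sqrt_mul_smul lam u ha hb hω, Real.div_rpow ha.le hb.le, div_mul_eq_mul_div,
    div_le_iff₀ (by positivity)] at hkelvin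
  rwa [mul_comm (b ^ _)]

lemma kelvinLE_of_forall_Ioo (hlam : 0 ≤ lam) (hu : Continuous u) (hR : 0 < R)
    (h : ∀ r ∈ Set.Ioo 0 R, KelvinLE lam r u) : KelvinLE lam R u := by
  intro z hz
  refine le_of_tendsto ((continuous_kelvin_radius hlam hu z).continuousAt.tendsto.mono_left
    (nhdsWithin_le_nhds (s := Set.Iio R))) ?_
  filter_upwards [Ioo_mem_nhdsLT hR] with r hr
  exact h r hr z (hr.2.trans hz)

variable [FiniteDimensional ℝ E] [MeasurableSpace E] [BorelSpace E] {μ : Measure E}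
  [μ.IsAddHaarMeasure] [Nontrivial E]

lemma exists_not_kelvinLE (hu : Continuous u) (hpos : ∀ x, 0 < u x) (hq : 0 ≤ q)
    (hlam : lam * q = 2 * finrank ℝ E) (hint : ∫⁻ y, ENNReal.ofReal (u y ^ q) ∂μ ≠ ⊤) :
    ∃ R > 0, ¬ KelvinLE lam R u := by
  by_contra! hle
  have hmeas := hu.measurable
  refine hint (lintegral_eq_top_of_le_comp_two_smul (by fun_prop)
    (fun z => ENNReal.ofReal_pos.2 (Real.rpow_pos_of_pos (hpos z) q)) fun z hz => ?_)
  have hz0 : z ≠ 0 := norm_pos_iff.1 (one_pos.trans hz)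
  have hray := (hle _ (by positivity)).rpow_mul_le one_pos one_lt_two hz0
  rw [Real.one_rpow, one_mul, one_smul] at hray
  rw [← ENNReal.ofReal_mul (by positivity)]
  refine ENNReal.ofReal_le_ofReal ?_
  calc u z ^ q ≤ (2 ^ (lam / 2) * u ((2 : ℝ) • z)) ^ q := Real.rpow_le_rpow (hpos z).le hray hq
    _ = 2 ^ finrank ℝ E * u ((2 : ℝ) • z) ^ q := by
        rw [Real.mul_rpow (by positivity) (hpos _).le, ← Real.rpow_mul zero_le_two,
          show lam / 2 * q = finrank ℝ E by linarith, Real.rpow_natCast]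

theorem ConformalRieszSystem.exists_kelvinInvariant (h : ConformalRieszSystem μ lam p u v)
    (hint : ∫⁻ y, ENNReal.ofReal (u y ^ (p + 1)) ∂μ ≠ ⊤) :
    ∃ R > 0, (∀ r ∈ Set.Ioc 0 R, KelvinLE lam r u) ∧
      KelvinInvariant lam R u ∧ KelvinInvariant lam R v := by
  have hp := h.one_le
  obtain ⟨R₁, hR₁, hnot⟩ := exists_not_kelvinLE h.continuous_left h.pos_left
    (show 0 ≤ p + 1 by linarith) h.conformal hint
  obtain ⟨R, hR, hle, hmax⟩ := exists_maximal_Ioc_of_eventually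
    (P := fun r => KelvinLE lam r u ∧ KelvinLE lam r v)
    (h.eventually_kelvinLE le_rfl h.kelvinGap_zero h.symm.kelvinGap_zero)
    (fun r hr hlt =>
      ⟨kelvinLE_of_forall_Ioo h.lam_pos.le h.continuous_left hr fun s hs => (hlt s hs).1,
        kelvinLE_of_forall_Ioo h.lam_pos.le h.continuous_right hr fun s hs => (hlt s hs).2⟩)
    ⟨R₁, hR₁, fun hle => hnot hle.1⟩
  obtain ⟨hle_u, hle_v⟩ := hle R ⟨hR, le_rfl⟩
  refine ⟨R, hR, fun r hr => (hle r hr).1, ?_⟩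
  exact (h.kelvinInvariant_or_kelvinGap hR hle_u hle_v).resolve_right
    fun hgap => hmax (h.eventually_kelvinLE hR.le hgap.1 hgap.2)

end Critical

section InversionCovariance

open Bornology

variable {E : Type*} [NormedAddCommGroup E] [InnerProductSpace ℝ E]

/-- The functional equation satisfied by the squared radius `T x` of a sphere centred at `x` when
the inversions in all these spheres preserve the family. -/
def IsInversionCovariant (T : E → ℝ) : Prop :=
  ∀ x s, T x < ‖s‖ ^ 2 → T (x + s) * T x = ‖s‖ ^ 2 * T (x + (T x / ‖s‖ ^ 2) • s)

lemma IsInversionCovariant.comp_line {T : E → ℝ} (hT : IsInversionCovariant T) (x : E) {ω : E}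
    (hω : ‖ω‖ = 1) : IsInversionCovariant fun t : ℝ => T (x + t • ω) := by
  intro t s hs
  have hnorm : ‖s • ω‖ = ‖s‖ := by rw [norm_smul, hω, mul_one]
  have h := hT (x + t • ω) (s • ω) (by rwa [hnorm])
  rwa [hnorm, smul_smul, add_assoc, add_assoc, ← add_smul, ← add_smul] at h

lemma tendsto_const_div_cobounded_nhdsNE {c : ℝ} (hc : c ≠ 0) :
    Tendsto (fun s : ℝ => c / s) (cobounded ℝ) (𝓝[≠] 0) := by
  refine tendsto_nhdsWithin_iff.2 ⟨?_, ?_⟩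
  · simpa [div_eq_mul_inv] using (tendsto_inv₀_cobounded (α := ℝ)).const_mul c
  · filter_upwards [eventually_ne_cobounded (0 : ℝ)] with s hs
    exact div_ne_zero hc hs

lemma tendsto_const_div_nhdsNE_cobounded {c : ℝ} (hc : c ≠ 0) :
    Tendsto (fun h : ℝ => c / h) (𝓝[≠] 0) (cobounded ℝ) := by
  simpa only [div_eq_mul_inv, Function.comp_def] using
    (tendsto_mul_left_cobounded hc).comp tendsto_inv₀_nhdsNE_zero

lemma tendsto_sub_sq_div_cobounded_shift {φ : ℝ → ℝ} {t₁ d : ℝ}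
    (h : Tendsto (fun s => (φ (t₁ + s) - s ^ 2) / s) (cobounded ℝ) (𝓝 d)) (t : ℝ) :
    Tendsto (fun s => (φ (t + s) - s ^ 2) / s) (cobounded ℝ) (𝓝 (d + 2 * (t - t₁))) := by
  set c := t - t₁ with hc
  have hshift : Tendsto (fun s : ℝ => s + c) (cobounded ℝ) (cobounded ℝ) :=
    tendsto_add_const_cobounded c
  have hinv : Tendsto (fun s : ℝ => s⁻¹) (cobounded ℝ) (𝓝 0) := tendsto_inv₀_cobounded
  have hlim := (((h.comp hshift).mul ((hinv.const_mul c).const_add 1)).add_const (2 * c)).add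
    (hinv.const_mul (c ^ 2))
  rw [show d * (1 + c * 0) + 2 * c + c ^ 2 * 0 = d + 2 * c by ring] at hlim
  refine hlim.congr' ?_
  filter_upwards [hshift.eventually (eventually_ne_cobounded 0), eventually_ne_cobounded 0]
    with s hsc hs
  rw [Function.comp_apply, show t₁ + (s + c) = t + s by rw [hc]; ring]
  field_simp
  ring

namespace IsInversionCovariant

variable {φ : ℝ → ℝ}

lemma inv_mul_sub_eq (hφ : IsInversionCovariant φ) (hpos : ∀ t, 0 < φ t) {t s : ℝ}
    (hs : φ t < s ^ 2) :
    (φ t / s)⁻¹ * (φ (t + φ t / s) - φ t) = (φ (t + s) - s ^ 2) / s := by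
  have ht := hpos t
  have hs0 : s ≠ 0 := by
    rintro rfl
    exact ht.not_gt (by simpa using hs)
  have h := hφ t s (by simpa using hs)
  rw [Real.norm_eq_abs, sq_abs, smul_eq_mul, show φ t / s ^ 2 * s = φ t / s by field_simp] at h
  rw [show φ (t + φ t / s) = φ (t + s) * φ t / s ^ 2 by rw [h]; field_simp]
  field_simp

/-- Inversion in the sphere about `t` exchanges small increments at `t` with large ones, so the
derivative at a point is visible in the asymptotics at infinity. -/
lemma hasDerivAt_iff (hφ : IsInversionCovariant φ) (hpos : ∀ t, 0 < φ t) {t d : ℝ} :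
    HasDerivAt φ d t ↔ Tendsto (fun s => (φ (t + s) - s ^ 2) / s) (cobounded ℝ) (𝓝 d) := by
  have ht := (hpos t).ne'
  have hlarge : ∀ᶠ s : ℝ in cobounded ℝ, φ t < s ^ 2 := by
    have := (tendsto_pow_atTop two_ne_zero).comp (tendsto_norm_cobounded_atTop (E := ℝ))
    filter_upwards [this.eventually_gt_atTop (φ t)] with s hs
    simpa using hs
  simp only [hasDerivAt_iff_tendsto_slope_zero, smul_eq_mul]
  constructor <;> intro h
  · refine (h.comp (tendsto_const_div_cobounded_nhdsNE ht)).congr' ?_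
    filter_upwards [hlarge] with s hs
    exact hφ.inv_mul_sub_eq hpos hs
  · have hdiv := tendsto_const_div_nhdsNE_cobounded ht
    refine (h.comp hdiv).congr' ?_
    filter_upwards [hdiv.eventually hlarge] with s hs
    rw [Function.comp_apply, ← hφ.inv_mul_sub_eq hpos hs, div_div_cancel₀ ht]

lemma eq_quadratic (hφ : IsInversionCovariant φ) (hpos : ∀ t, 0 < φ t) {t₁ : ℝ}
    (hdiff : DifferentiableAt ℝ φ t₁) : ∃ B, ∀ t, φ t = t ^ 2 + B * t + φ 0 := by
  set B := deriv φ t₁ - 2 * t₁ with hB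
  have hderiv (t : ℝ) : HasDerivAt φ (2 * t + B) t := by
    have h := tendsto_sub_sq_div_cobounded_shift ((hφ.hasDerivAt_iff hpos).1 hdiff.hasDerivAt) t
    rw [show deriv φ t₁ + 2 * (t - t₁) = 2 * t + B by rw [hB]; ring] at h
    exact (hφ.hasDerivAt_iff hpos).2 h
  have hrem (t : ℝ) : HasDerivAt (fun t => φ t - t ^ 2 - B * t) 0 t :=
    (((hderiv t).sub (hasDerivAt_pow 2 t)).sub ((hasDerivAt_id t).const_mul B)).congr_deriv
      (by simp)
  refine ⟨B, fun t => ?_⟩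
  have hconst := is_const_of_deriv_eq_zero (fun t => (hrem t).differentiableAt)
    (fun t => (hrem t).deriv) t 0
  simp only [ne_eq, OfNat.ofNat_ne_zero, not_false_eq_true, zero_pow, mul_zero, sub_zero] at hconst
  linarith

end IsInversionCovariant

lemma exists_differentiableAt_of_monotoneOn_div {φ : ℝ → ℝ} (hpos : ∀ t, 0 < φ t) {a : ℝ}
    (ha : 0 < a) (hmono : MonotoneOn (fun t => t / φ t) (Set.Ioo 0 a)) :
    ∃ t, DifferentiableAt ℝ φ t := by
  have : NeBot (ae (volume.restrict (Set.Ioo 0 a))) := by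
    rw [ae_neBot, Ne, Measure.restrict_eq_zero, Real.volume_Ioo]
    simpa using ha
  obtain ⟨t, hdiff, ht⟩ := ((hmono.ae_differentiableWithinAt measurableSet_Ioo).and
    (ae_restrict_mem measurableSet_Ioo)).exists
  have hquot : DifferentiableAt ℝ (fun r => r / (r / φ r)) t :=
    differentiableAt_id.div (hdiff.differentiableAt (Ioo_mem_nhds ht.1 ht.2))
      (div_pos ht.1 (hpos t)).ne'
  refine ⟨t, hquot.congr_of_eventuallyEq ?_⟩
  filter_upwards [Ioi_mem_nhds ht.1] with r hr
  rw [div_div_cancel₀ (ne_of_gt hr)]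

lemma exists_inner_add_of_map_midpoint [CompleteSpace E] {q : E → ℝ} (hq : Continuous q)
    (hmid : ∀ x y, q (midpoint ℝ x y) = midpoint ℝ (q x) (q y)) :
    ∃ w : E, ∀ y, q y = inner ℝ w y + q 0 := by
  set f := AffineMap.ofMapMidpoint q hmid hq
  have hlin : Continuous f.linear := AffineMap.continuous_linear_iff.2 hq
  refine ⟨(InnerProductSpace.toDual ℝ E).symm ⟨f.linear, hlin⟩, fun y => ?_⟩
  rw [InnerProductSpace.toDual_symm_apply]
  have hdecomp : f y = f.linear y + f 0 := by simpa using f.map_vadd 0 y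
  exact hdecomp

lemma map_add_add_map_sub_of_line_quadratic {T : E → ℝ} {m : E}
    (hline : ∀ ω : E, ‖ω‖ = 1 → ∃ B : ℝ, ∀ t : ℝ, T (m + t • ω) = t ^ 2 + B * t + T m) (d : E) :
    T (m + d) + T (m - d) = 2 * ‖d‖ ^ 2 + 2 * T m := by
  obtain rfl | hd := eq_or_ne d 0
  · simp [two_mul]
  have hd' := norm_ne_zero_iff.2 hd
  obtain ⟨B, hB⟩ := hline (‖d‖⁻¹ • d) (by rw [norm_smul, norm_inv, norm_norm]; field_simp)
  have hplus := hB ‖d‖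
  have hminus := hB (-‖d‖)
  rw [smul_inv_smul₀ hd'] at hplus
  rw [neg_smul, smul_inv_smul₀ hd', ← sub_eq_add_neg] at hminus
  rw [hplus, hminus]
  ring

lemma exists_eq_norm_sub_sq_add [CompleteSpace E] {T : E → ℝ} (hT : Continuous T)
    (hline : ∀ x ω : E, ‖ω‖ = 1 → ∃ B : ℝ, ∀ t : ℝ, T (x + t • ω) = t ^ 2 + B * t + T x) :
    ∃ (X₀ : E) (c : ℝ), ∀ y, T y = ‖y - X₀‖ ^ 2 + c := by
  have hmid (x y : E) : T (midpoint ℝ x y) - ‖midpoint ℝ x y‖ ^ 2 =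
      midpoint ℝ (T x - ‖x‖ ^ 2) (T y - ‖y‖ ^ 2) := by
    have hy : midpoint ℝ x y + (2⁻¹ : ℝ) • (y - x) = y := by
      rw [midpoint_eq_smul_add, invOf_eq_inv]
      module
    have hx : midpoint ℝ x y - (2⁻¹ : ℝ) • (y - x) = x := by
      rw [midpoint_eq_smul_add, invOf_eq_inv]
      module
    have hT_sum := map_add_add_map_sub_of_line_quadratic (hline (midpoint ℝ x y))
      ((2⁻¹ : ℝ) • (y - x))
    have hnorm_sum := parallelogram_law_with_norm ℝ (midpoint ℝ x y) ((2⁻¹ : ℝ) • (y - x))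
    rw [hx, hy] at hT_sum hnorm_sum
    rw [midpoint_eq_smul_add ℝ (T x - _), invOf_eq_inv, smul_eq_mul]
    linarith
  obtain ⟨w, hw⟩ :=
    exists_inner_add_of_map_midpoint (q := fun y => T y - ‖y‖ ^ 2) (by fun_prop) hmid
  refine ⟨-((2⁻¹ : ℝ) • w), T 0 - ‖(2⁻¹ : ℝ) • w‖ ^ 2, fun y => ?_⟩
  have hy := hw y
  rw [norm_zero, zero_pow two_ne_zero, sub_zero] at hy
  rw [sub_neg_eq_add, norm_add_sq_real, inner_smul_right, real_inner_comm]
  linarith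

end InversionCovariance

section Classification

open Bornology

variable {E : Type*} [NormedAddCommGroup E] {lam p : ℝ} {u v R : E → ℝ}

lemma tendsto_norm_div_norm_const_add_cobounded (x : E) :
    Tendsto (fun z => ‖z‖ / ‖x + z‖) (cobounded E) (𝓝 1) := by
  have hnorm := tendsto_norm_cobounded_atTop (E := E)
  suffices h : Tendsto (fun z => ‖x + z‖ / ‖z‖) (cobounded E) (𝓝 1) by
    simpa using h.inv₀ one_ne_zero
  rw [tendsto_iff_norm_sub_tendsto_zero]
  refine squeeze_zero' (.of_forall fun _ => norm_nonneg _) ?_ (hnorm.const_div_atTop ‖x‖)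
  filter_upwards [hnorm.eventually_gt_atTop 0] with z hz
  rw [show ‖x + z‖ / ‖z‖ - 1 = (‖x + z‖ - ‖z‖) / ‖z‖ by field_simp, norm_div, norm_norm,
    Real.norm_eq_abs]
  gcongr
  simpa using abs_norm_sub_norm_le (x + z) z

lemma tendsto_norm_rpow_mul_shift {A : ℝ}
    (h : Tendsto (fun z => ‖z‖ ^ lam * u z) (cobounded E) (𝓝 A)) (x : E) :
    Tendsto (fun z => ‖z‖ ^ lam * u (x + z)) (cobounded E) (𝓝 A) := by
  have hshift := tendsto_const_add_cobounded x
  have hlim := ((tendsto_norm_div_norm_const_add_cobounded x).rpow_const (p := lam)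
    (.inl one_ne_zero)).mul (h.comp hshift)
  rw [Real.one_rpow, one_mul] at hlim
  refine hlim.congr' ?_
  filter_upwards [(tendsto_norm_cobounded_atTop.comp hshift).eventually_gt_atTop 0] with z hz
  rw [Function.comp_apply] at hz
  rw [Function.comp_apply, ← mul_assoc, ← Real.mul_rpow (by positivity) hz.le,
    div_mul_cancel₀ _ hz.ne']

lemma continuous_radius {A : ℝ} (hlam : 0 < lam) (hA : 0 < A) (hR : ∀ x, 0 < R x)
    (huR : ∀ x, u x = A * R x ^ (-lam)) (hu : Continuous u) : Continuous R := by
  have hpos (x : E) : 0 < u x := by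
    rw [huR]
    exact mul_pos hA (Real.rpow_pos_of_pos (hR x) _)
  have hR_eq : R = fun x => (u x / A) ^ (-lam)⁻¹ := by
    funext x
    rw [huR, mul_div_cancel_left₀ _ hA.ne', Real.rpow_rpow_inv (hR x).le (neg_ne_zero.2 hlam.ne')]
  rw [hR_eq]
  exact (hu.div_const A).rpow_const fun x => .inl (div_pos (hpos x) hA).ne'

variable [InnerProductSpace ℝ E]

lemma tendsto_inversion_zero_cobounded (R : ℝ) :
    Tendsto (inversion (0 : E) R) (cobounded E) (𝓝 0) := by
  rw [tendsto_zero_iff_norm_tendsto_zero]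
  simpa only [norm_inversion_zero] using tendsto_norm_cobounded_atTop.const_div_atTop (R ^ 2)

lemma KelvinInvariant.tendsto_norm_rpow_mul {R : ℝ} (hR : 0 < R) (hu : Continuous u)
    (h : KelvinInvariant lam R u) :
    Tendsto (fun z => ‖z‖ ^ lam * u z) (cobounded E) (𝓝 (R ^ lam * u 0)) := by
  refine (((hu.tendsto 0).comp (tendsto_inversion_zero_cobounded R)).const_mul _).congr' ?_
  filter_upwards [tendsto_norm_cobounded_atTop.eventually_gt_atTop R] with z hz
  have hz0 := hR.trans hz
  rw [← h z hz, kelvin, ← mul_assoc, ← Real.mul_rpow (norm_nonneg z) (by positivity),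
    mul_div_cancel₀ _ hz0.ne', Function.comp_apply]

lemma exists_eq_mul_radius_rpow_neg [Nontrivial E] (hu : Continuous u) (hpos : ∀ x, 0 < u x)
    (hR : ∀ x, 0 < R x) (hinv : ∀ x, KelvinInvariant lam (R x) fun y => u (x + y)) :
    ∃ A > 0, ∀ x, u x = A * R x ^ (-lam) := by
  have hlim (x : E) : Tendsto (fun z => ‖z‖ ^ lam * u (x + z)) (cobounded E)
      (𝓝 (R x ^ lam * u x)) := by
    simpa using (hinv x).tendsto_norm_rpow_mul (hR x) (by fun_prop)
  refine ⟨R 0 ^ lam * u 0, mul_pos (Real.rpow_pos_of_pos (hR 0) lam) (hpos 0), fun x => ?_⟩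
  have hconst : R x ^ lam * u x = R 0 ^ lam * u 0 :=
    tendsto_nhds_unique (hlim x) (tendsto_norm_rpow_mul_shift (by simpa using hlim 0) x)
  rw [← hconst, Real.rpow_neg (hR x).le, mul_right_comm,
    mul_inv_cancel₀ (Real.rpow_pos_of_pos (hR x) lam).ne', one_mul]

lemma isInversionCovariant_radius_sq {A : ℝ} (hlam : 0 < lam) (hA : 0 < A) (hR : ∀ x, 0 < R x)
    (huR : ∀ x, u x = A * R x ^ (-lam))
    (hinv : ∀ x, KelvinInvariant lam (R x) fun y => u (x + y)) :
    IsInversionCovariant fun x => R x ^ 2 := by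
  intro x s hs
  have hRs : R x < ‖s‖ := lt_of_pow_lt_pow_left₀ 2 (norm_nonneg s) hs
  have hs0 : 0 < ‖s‖ := (hR x).trans hRs
  have h : kelvin lam (R x) (fun y => u (x + y)) s = u (x + s) := hinv x s hRs
  rw [← div_pow]
  set y := x + (R x / ‖s‖) ^ 2 • s with hy
  have hRx := hR x
  have hRxs := hR (x + s)
  have hRy := hR y
  rw [kelvin, inversion_zero_eq_smul, ← hy, huR, huR (x + s), mul_left_comm,
    mul_right_inj' hA.ne', Real.rpow_neg hRy.le, Real.rpow_neg hRxs.le, ← Real.inv_rpow hRy.le,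
    ← Real.inv_rpow hRxs.le, ← Real.mul_rpow (by positivity) (by positivity),
    Real.rpow_left_inj (by positivity) (by positivity) hlam.ne'] at h
  have hlinear : R (x + s) * R x = ‖s‖ * R y := by
    field_simp at h
    linarith
  rw [← mul_pow, hlinear, mul_pow]

lemma monotoneOn_div_radius_sq {A : ℝ} (hlam : 0 < lam) (hA : 0 < A) (hR : ∀ x, 0 < R x)
    (huR : ∀ x, u x = A * R x ^ (-lam))
    (hle : ∀ x, ∀ r ∈ Set.Ioc 0 (R x), KelvinLE lam r fun y => u (x + y))
    (x : E) {ω : E} (hω : ‖ω‖ = 1) :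
    MonotoneOn (fun t => t / R (x + t • ω) ^ 2) (Set.Ioo 0 (R x)) := by
  intro a ha b hb hab
  obtain rfl | hab := hab.eq_or_lt
  · rfl
  have ha0 := ha.1
  have hb0 := hb.1
  have hradius : √(a * b) * ‖ω‖ ∈ Set.Ioc 0 (R x) := by
    rw [hω, mul_one]
    exact ⟨by positivity, Real.sqrt_le_iff.2
      ⟨(hR x).le, by rw [sq]; exact mul_le_mul ha.2.le hb.2.le hb0.le (hR x).le⟩⟩
  have h := (hle x _ hradius).rpow_mul_le ha0 hab (norm_ne_zero_iff.1 (by simp [hω]))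
  have hpow {t : ℝ} (ht : 0 < t) :
      t ^ (lam / 2) * u (x + t • ω) = A * (t / R (x + t • ω) ^ 2) ^ (lam / 2) := by
    have hRt := hR (x + t • ω)
    rw [huR, Real.div_rpow ht.le (by positivity), ← Real.rpow_natCast_mul hRt.le,
      show ((2 : ℕ) : ℝ) * (lam / 2) = lam by push_cast; ring, Real.rpow_neg hRt.le]
    ring
  have hRa := hR (x + a • ω)
  have hRb := hR (x + b • ω)
  rwa [hpow ha0, hpow hb0, mul_le_mul_iff_right₀ hA,
    Real.rpow_le_rpow_iff (by positivity) (by positivity) (by positivity)] at h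

lemma exists_radius_sq_eq [CompleteSpace E] {A : ℝ} (hlam : 0 < lam) (hA : 0 < A)
    (hR : ∀ x, 0 < R x) (huR : ∀ x, u x = A * R x ^ (-lam)) (hu : Continuous u)
    (hle : ∀ x, ∀ r ∈ Set.Ioc 0 (R x), KelvinLE lam r fun y => u (x + y))
    (hinv : ∀ x, KelvinInvariant lam (R x) fun y => u (x + y)) :
    ∃ X₀, ∃ c > 0, ∀ y, R y ^ 2 = ‖y - X₀‖ ^ 2 + c := by
  have hpos (x : E) : 0 < R x ^ 2 := pow_pos (hR x) 2
  have hcov := isInversionCovariant_radius_sq hlam hA hR huR hinv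
  obtain ⟨X₀, c, hc⟩ := exists_eq_norm_sub_sq_add
    ((continuous_radius hlam hA hR huR hu).pow 2) fun x ω hω => by
      obtain ⟨t₁, hdiff⟩ := exists_differentiableAt_of_monotoneOn_div (fun t => hpos (x + t • ω))
        (hR x) (monotoneOn_div_radius_sq hlam hA hR huR hle x hω)
      simpa using (hcov.comp_line x hω).eq_quadratic (fun t => hpos (x + t • ω)) hdiff
  refine ⟨X₀, c, ?_, hc⟩
  have hX₀ : R X₀ ^ 2 = c := by simpa using hc X₀
  exact hX₀ ▸ hpos X₀

variable [FiniteDimensional ℝ E] [MeasurableSpace E] [BorelSpace E] {μ : Measure E}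
  [μ.IsAddHaarMeasure] [Nontrivial E]

theorem ConformalRieszSystem.classification (h : ConformalRieszSystem μ lam p u v)
    (hint : ∫⁻ y, ENNReal.ofReal (u y ^ (p + 1)) ∂μ ≠ ⊤) :
    ∃ A > 0, ∃ A' > 0, ∃ c > 0, ∃ X₀ : E, ∀ y,
      u y = A * (‖y - X₀‖ ^ 2 + c) ^ (-(lam / 2)) ∧
      v y = A' * (‖y - X₀‖ ^ 2 + c) ^ (-(lam / 2)) := by
  have hsphere (x : E) := (h.translate x).exists_kelvinInvariant <| by
    rwa [lintegral_add_left_eq_self (fun y => ENNReal.ofReal (u y ^ (p + 1))) x]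
  choose R hR hle hinv_u hinv_v using hsphere
  obtain ⟨A, hA, hu⟩ := exists_eq_mul_radius_rpow_neg h.continuous_left h.pos_left hR hinv_u
  obtain ⟨A', hA', hv⟩ := exists_eq_mul_radius_rpow_neg h.continuous_right h.pos_right hR hinv_v
  obtain ⟨X₀, c, hc, hsq⟩ :=
    exists_radius_sq_eq h.lam_pos hA hR hu h.continuous_left hle hinv_u
  refine ⟨A, hA, A', hA', c, hc, X₀, fun y => ?_⟩
  have hpow : R y ^ (-lam) = (‖y - X₀‖ ^ 2 + c) ^ (-(lam / 2)) := by
    rw [← hsq, ← Real.rpow_natCast_mul (hR y).le]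
    congr 1
    push_cast
    ring
  exact ⟨hpow ▸ hu y, hpow ▸ hv y⟩

end Classification

section KernelSplitting

variable {E : Type*} [NormedAddCommGroup E] {lam : ℝ}

/-- The Riesz kernel truncated near its singularity. It is comparable with its translates, so
integrability against it does not depend on the base point. -/
def farKernel (lam : ℝ) (w : E) : ℝ := max ‖w‖ 1 ^ (-lam)

/-- The compactly supported singular part of the Riesz kernel. -/
def nearKernel (lam : ℝ) (w : E) : ℝ := ‖w‖ ^ (-lam) - farKernel lam w

lemma norm_rpow_eq_farKernel_add_nearKernel (lam : ℝ) (w : E) :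
    ‖w‖ ^ (-lam) = farKernel lam w + nearKernel lam w :=
  (add_sub_cancel _ _).symm

lemma farKernel_nonneg (lam : ℝ) (w : E) : 0 ≤ farKernel lam w := by
  unfold farKernel
  positivity

lemma continuous_farKernel (lam : ℝ) : Continuous (farKernel lam : E → ℝ) :=
  (continuous_norm.max continuous_const).rpow_const fun _ => Or.inl (by positivity)

lemma farKernel_le_norm_rpow (hlam : 0 ≤ lam) {w : E} (hw : w ≠ 0) :
    farKernel lam w ≤ ‖w‖ ^ (-lam) :=
  Real.rpow_le_rpow_of_nonpos (by positivity) (le_max_left _ _) (neg_nonpos.2 hlam)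

lemma farKernel_le_mul (hlam : 0 ≤ lam) (a b : E) :
    farKernel lam a ≤ (1 + ‖a - b‖) ^ lam * farKernel lam b := by
  have hmax : max ‖b‖ 1 ≤ (1 + ‖a - b‖) * max ‖a‖ 1 := by
    have hb : ‖b‖ ≤ ‖a‖ + ‖a - b‖ := norm_le_insert a b
    have h1 : 1 ≤ max ‖a‖ 1 := le_max_right _ _
    have ha : ‖a‖ ≤ max ‖a‖ 1 := le_max_left _ _
    refine max_le ?_ ?_ <;> nlinarith [norm_nonneg (a - b)]
  calc max ‖a‖ 1 ^ (-lam)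
      = (1 + ‖a - b‖) ^ lam * ((1 + ‖a - b‖) * max ‖a‖ 1) ^ (-lam) := by
        rw [Real.mul_rpow (by positivity) (by positivity), ← mul_assoc,
          ← Real.rpow_add (by positivity), add_neg_cancel, Real.rpow_zero, one_mul]
    _ ≤ (1 + ‖a - b‖) ^ lam * max ‖b‖ 1 ^ (-lam) :=
        mul_le_mul_of_nonneg_left
          (Real.rpow_le_rpow_of_nonpos (by positivity) hmax (neg_nonpos.2 hlam)) (by positivity)

lemma mul_farKernel_sub_le (hlam : 0 ≤ lam) {f : E → ℝ} (hnonneg : ∀ x, 0 ≤ f x)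
    (z w y : E) :
    f y * farKernel lam (w - y) ≤ (1 + ‖w - z‖) ^ lam * (f y * farKernel lam (z - y)) := by
  have hcomp := farKernel_le_mul hlam (w - y) (z - y)
  rw [sub_sub_sub_cancel_right] at hcomp
  exact (mul_le_mul_of_nonneg_left hcomp (hnonneg y)).trans_eq (mul_left_comm _ _ _)

lemma nearKernel_eq_indicator (lam : ℝ) :
    (nearKernel lam : E → ℝ) = (ball 0 1).indicator fun w => ‖w‖ ^ (-lam) - 1 := by
  funext w
  by_cases hw : ‖w‖ < 1
  · simp [nearKernel, farKernel, hw, max_eq_right hw.le]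
  · simp [nearKernel, farKernel, hw, max_eq_left (not_lt.1 hw)]

lemma hasCompactSupport_nearKernel [ProperSpace E] (lam : ℝ) :
    HasCompactSupport (nearKernel lam : E → ℝ) :=
  .intro (isCompact_closedBall 0 1) fun w hw => by
    rw [nearKernel_eq_indicator]
    exact Set.indicator_of_notMem (fun h => hw (ball_subset_closedBall h)) _

variable [MeasurableSpace E] {μ : Measure E} {f : E → ℝ} {z : E}

lemma continuous_integral_mul_farKernel (hlam : 0 ≤ lam) (hnonneg : ∀ x, 0 ≤ f x)
    (hint : ∀ z, Integrable (fun y => f y * farKernel lam (z - y)) μ) :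
    Continuous fun z => ∫ y, f y * farKernel lam (z - y) ∂μ := by
  have hfar := continuous_farKernel (E := E) lam
  refine continuous_iff_continuousAt.2 fun z => continuousAt_of_dominated
    (bound := fun y => 2 ^ lam * (f y * farKernel lam (z - y)))
    (.of_forall fun w => (hint w).aestronglyMeasurable) ?_ ((hint z).const_mul _)
    (.of_forall fun y => by fun_prop)
  filter_upwards [ball_mem_nhds z one_pos] with w hw
  refine .of_forall fun y => ?_
  have hfy : 0 ≤ f y * farKernel lam (z - y) := mul_nonneg (hnonneg y) (farKernel_nonneg _ _)
  have hbase : 1 + ‖w - z‖ ≤ 2 := by linarith [mem_ball_iff_norm.1 hw]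
  rw [Real.norm_of_nonneg (mul_nonneg (hnonneg y) (farKernel_nonneg _ _))]
  exact (mul_farKernel_sub_le hlam hnonneg z w y).trans (by gcongr)

lemma lintegral_mul_ofReal_norm_sub_rpow [NullSingletonClass μ]
    (hnonneg : ∀ x, 0 ≤ f x) (z : E) :
    ∫⁻ y, ENNReal.ofReal (f y) * ENNReal.ofReal ‖z - y‖ ^ (-lam) ∂μ =
      ∫⁻ y, ENNReal.ofReal (f y * ‖z - y‖ ^ (-lam)) ∂μ := by
  refine lintegral_congr_ae ?_
  filter_upwards [Measure.ae_ne μ z] with y hy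
  rw [ENNReal.ofReal_rpow_of_pos (norm_sub_pos_iff.2 hy.symm), ENNReal.ofReal_mul (hnonneg y)]

variable [BorelSpace E]

lemma integrable_nearKernel [ProperSpace E] [IsFiniteMeasureOnCompacts μ]
    (hloc : IntegrableOn (fun y : E => ‖y‖ ^ (-lam)) (ball 0 1) μ) :
    Integrable (nearKernel lam) μ := by
  rw [nearKernel_eq_indicator, integrable_indicator_iff measurableSet_ball]
  exact hloc.sub (integrableOn_const measure_ball_lt_top.ne)

lemma integrable_mul_farKernel_of_integrable_mul_norm_rpow [NullSingletonClass μ] (hlam : 0 ≤ lam)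
    (hf : Continuous f) (hnonneg : ∀ x, 0 ≤ f x)
    (hint : Integrable (fun y => f y * ‖z - y‖ ^ (-lam)) μ) :
    Integrable (fun y => f y * farKernel lam (z - y)) μ := by
  have hfar := continuous_farKernel (E := E) lam
  refine hint.mono' (by fun_prop) ?_
  filter_upwards [Measure.ae_ne μ z] with y hy
  rw [Real.norm_of_nonneg (mul_nonneg (hnonneg y) (farKernel_nonneg _ _))]
  exact mul_le_mul_of_nonneg_left (farKernel_le_norm_rpow hlam (sub_ne_zero.2 hy.symm)) (hnonneg y)

lemma integrable_mul_farKernel (hlam : 0 ≤ lam) (hf : Continuous f) (hnonneg : ∀ x, 0 ≤ f x)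
    (hint : Integrable (fun y => f y * farKernel lam (z - y)) μ) (w : E) :
    Integrable (fun y => f y * farKernel lam (w - y)) μ := by
  have hfar := continuous_farKernel (E := E) lam
  refine (hint.const_mul ((1 + ‖w - z‖) ^ lam)).mono' (by fun_prop) (.of_forall fun y => ?_)
  rw [Real.norm_of_nonneg (mul_nonneg (hnonneg y) (farKernel_nonneg _ _))]
  exact mul_farKernel_sub_le hlam hnonneg z w y

variable [ProperSpace E] [μ.IsAddLeftInvariant] [μ.IsNegInvariant]

lemma continuous_integral_mul_sub_of_hasCompactSupport {k : E → ℝ} (hf : Continuous f)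
    (hk : Integrable k μ) (hsupp : HasCompactSupport k) :
    Continuous fun z => ∫ y, f y * k (z - y) ∂μ := by
  obtain ⟨R, hR⟩ := hsupp.isCompact.isBounded.subset_closedBall (0 : E)
  have hreflect : ∀ z, ∫ y, f y * k (z - y) ∂μ = ∫ y, f (z - y) * k y ∂μ := fun z => by
    simpa only [_root_.sub_sub_cancel] using
      (integral_sub_left_eq_self (fun y => f y * k (z - y)) μ z).symm
  simp only [hreflect]
  refine continuous_iff_continuousAt.2 fun z => ?_
  obtain ⟨M, -, hM⟩ := exists_pos_forall_norm_le_imp_le hf.norm (‖z‖ + 1 + R)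
  refine continuousAt_of_dominated (bound := fun y => M * ‖k y‖)
    (.of_forall fun w => (by fun_prop : Continuous fun y => f (w - y)).aestronglyMeasurable.mul
      hk.aestronglyMeasurable) ?_ (hk.norm.const_mul M) (.of_forall fun y => by fun_prop)
  filter_upwards [ball_mem_nhds z one_pos] with w hw
  refine .of_forall fun y => ?_
  by_cases hy : k y = 0
  · simp [hy]
  have hyR : ‖y‖ ≤ R := mem_closedBall_zero_iff.1 (hR (subset_tsupport k hy))
  have hwz : ‖w‖ ≤ ‖z‖ + 1 := by linarith [mem_ball_iff_norm.1 hw, norm_le_insert' w z]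
  rw [norm_mul]
  gcongr
  exact hM _ ((norm_sub_le w y).trans (add_le_add hwz hyR))

variable [IsFiniteMeasureOnCompacts μ]

lemma integrable_mul_nearKernel (hloc : IntegrableOn (fun y : E => ‖y‖ ^ (-lam)) (ball 0 1) μ)
    (hf : Continuous f) (z : E) : Integrable (fun y => f y * nearKernel lam (z - y)) μ :=
  (hasCompactSupport_nearKernel lam).convolutionExists_right_of_continuous_left
    (ContinuousLinearMap.mul ℝ ℝ) hf (integrable_nearKernel hloc).locallyIntegrable z

end KernelSplitting

section Potential

variable {E : Type*} [NormedAddCommGroup E] [NormedSpace ℝ E] [FiniteDimensional ℝ E]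
  [MeasurableSpace E] [BorelSpace E] {μ : Measure E} [μ.IsAddHaarMeasure] [Nontrivial E]
  {lam : ℝ} {f g u : E → ℝ}

lemma isRieszPotential_integral_of_integrable (hlam : 0 ≤ lam) (hf : Continuous f)
    (hpos : ∀ x, 0 < f x) {z₁ : E} (hint : Integrable (fun y => f y * ‖z₁ - y‖ ^ (-lam)) μ) :
    IsRieszPotential μ lam f (fun z => ∫ y, f y * ‖z - y‖ ^ (-lam) ∂μ) where
  eq_integral _ := rfl
  integrable z := by
    have := FiniteDimensional.proper_real E
    have hnear := integrable_mul_nearKernel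
      (integrableOn_norm_rpow_of_integrable_mul hf hpos hint) hf z
    have hfar := integrable_mul_farKernel hlam hf (fun x => (hpos x).le)
      (integrable_mul_farKernel_of_integrable_mul_norm_rpow hlam hf (fun x => (hpos x).le) hint) z
    simpa only [norm_rpow_eq_farKernel_add_nearKernel, mul_add] using! hfar.add hnear

lemma IsRieszPotential.continuous (h : IsRieszPotential μ lam f u) (hlam : 0 ≤ lam)
    (hf : Continuous f) (hpos : ∀ x, 0 < f x) : Continuous u := by
  have := FiniteDimensional.proper_real E
  have hloc := integrableOn_norm_rpow_of_integrable_mul hf hpos (h.integrable 0)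
  have hnear := integrable_mul_nearKernel hloc hf
  have hfar := fun z => integrable_mul_farKernel_of_integrable_mul_norm_rpow hlam hf
    (fun x => (hpos x).le) (h.integrable z)
  simp only [funext h.eq_integral, norm_rpow_eq_farKernel_add_nearKernel, mul_add,
    integral_add (hfar _) (hnear _)]
  exact (continuous_integral_mul_farKernel hlam (fun x => (hpos x).le) hfar).add
    (continuous_integral_mul_sub_of_hasCompactSupport hf (integrable_nearKernel hloc)
      (hasCompactSupport_nearKernel lam))

lemma isRieszPotential_of_dense (hlam : 0 ≤ lam) (hf : Continuous f) (hf_pos : ∀ x, 0 < f x)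
    (hg : Continuous g) (hg_nonneg : ∀ x, 0 ≤ g x) {D : Set E} (hD : Dense D)
    (heq : ∀ z ∈ D, ENNReal.ofReal (g z) =
      ∫⁻ y, ENNReal.ofReal (f y) * ENNReal.ofReal ‖z - y‖ ^ (-lam) ∂μ) :
    IsRieszPotential μ lam f g := by
  have hnonneg : ∀ z y : E, 0 ≤ f y * ‖z - y‖ ^ (-lam) := fun z y =>
    mul_nonneg (hf_pos y).le (by positivity)
  have heq' : ∀ z ∈ D, ENNReal.ofReal (g z) = ∫⁻ y, ENNReal.ofReal (f y * ‖z - y‖ ^ (-lam)) ∂μ :=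
    fun z hz => (heq z hz).trans (lintegral_mul_ofReal_norm_sub_rpow (fun x => (hf_pos x).le) z)
  obtain ⟨z₁, hz₁⟩ := hD.nonempty
  have hint₁ : Integrable (fun y => f y * ‖z₁ - y‖ ^ (-lam)) μ := by
    have hf_meas := hf.measurable
    refine ⟨(by fun_prop : Measurable fun y => f y * ‖z₁ - y‖ ^ (-lam)).aestronglyMeasurable, ?_⟩
    rw [hasFiniteIntegral_iff_ofReal (.of_forall (hnonneg z₁)), ← heq' z₁ hz₁]
    exact ENNReal.ofReal_lt_top
  have hpot := isRieszPotential_integral_of_integrable hlam hf hf_pos hint₁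
  have hcont := hpot.continuous hlam hf hf_pos
  refine ⟨hpot.integrable, congrFun (hg.ext_on hD hcont fun z hz => ?_)⟩
  have hz := heq' z hz
  rw [← ofReal_integral_eq_lintegral_ofReal (hpot.integrable z) (.of_forall (hnonneg z))] at hz
  exact (ENNReal.ofReal_eq_ofReal_iff (hg_nonneg z) (integral_nonneg (hnonneg z))).1 hz

end Potential

section WeightExponent

lemma ae_eq_zero_of_tendsto_lintegral_mul {ι Z : Type*} [MeasurableSpace Z] {μ : Measure Z}
    {l : Filter ι} [l.NeBot] [l.IsCountablyGenerated] {G K₀ : Z → ℝ≥0∞} {K : ι → Z → ℝ≥0∞}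
    (hG : Measurable G) (hK : ∀ i, Measurable (K i)) (hK₀ : ∀ y, K₀ y ≠ 0)
    (hlim : ∀ y, Tendsto (K · y) l (𝓝 (K₀ y)))
    (hzero : Tendsto (fun i => ∫⁻ y, G y * K i y ∂μ) l (𝓝 0)) : G =ᵐ[μ] 0 := by
  have hliminf : ∀ y, liminf (fun i => G y * K i y) l = G y * K₀ y := fun y =>
    (ENNReal.Tendsto.const_mul (hlim y) (Or.inl (hK₀ y))).liminf_eq
  have fatou := lintegral_liminf_le (μ := μ) (u := l) fun i => hG.mul (hK i)
  have hK₀_meas : Measurable K₀ := measurable_of_tendsto_metrizable' l hK (tendsto_pi_nhds.2 hlim)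
  simp only [Pi.mul_apply, hliminf, hzero.liminf_eq, nonpos_iff_eq_zero] at fatou
  rw [lintegral_eq_zero_iff (by fun_prop)] at fatou
  filter_upwards [fatou] with y hy
  exact (mul_eq_zero.1 hy).resolve_right (hK₀ y)

-- If `a` were positive, the integral would tend to zero at the points where `w` vanishes.
lemma exponent_nonpos_of_eq_rpow_neg_mul_lintegral {Z : Type*} [TopologicalSpace Z]
    [FirstCountableTopology Z] [MeasurableSpace Z] [OpensMeasurableSpace Z] {μ : Measure Z}
    [μ.IsOpenPosMeasure] {lam a : ℝ} (hlam : 0 ≤ lam) {u w : Z → ℝ} {d : Z → Z → ℝ} {G : Z → ℝ≥0∞}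
    (hu : Continuous u) (hw : Continuous w) (hw_nonneg : ∀ z, 0 ≤ w z)
    (hw_dense : Dense {z | w z ≠ 0}) {z₀ : Z} (hz₀ : w z₀ = 0) (hd_left : ∀ y, Continuous (d · y))
    (hd_right : ∀ z, Continuous (d z)) (hG : Measurable G) (hG_ne : ∀ y, w y ≠ 0 → G y ≠ 0)
    (heq : ∀ z, w z ≠ 0 → ENNReal.ofReal (u z) =
      ENNReal.ofReal (w z ^ (-a)) * ∫⁻ y, G y * ENNReal.ofReal (d z y) ^ (-lam) ∂μ) : a ≤ 0 := by
  by_contra! ha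
  have : Nonempty Z := ⟨z₀⟩
  have : (𝓝[{z | w z ≠ 0}] z₀).NeBot := mem_closure_iff_nhdsWithin_neBot.1 (hw_dense z₀)
  have hintegral : ∀ z, w z ≠ 0 →
      ENNReal.ofReal (u z * w z ^ a) = ∫⁻ y, G y * ENNReal.ofReal (d z y) ^ (-lam) ∂μ := by
    intro z hz
    have hwz : 0 < w z := (hw_nonneg z).lt_of_ne' hz
    rw [mul_comm, ENNReal.ofReal_mul (by positivity), heq z hz, ← mul_assoc,
      ← ENNReal.ofReal_mul (by positivity), ← Real.rpow_add hwz]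
    simp
  have hzero : Tendsto (fun z => ∫⁻ y, G y * ENNReal.ofReal (d z y) ^ (-lam) ∂μ)
      (𝓝[{z | w z ≠ 0}] z₀) (𝓝 0) := by
    have hcont : Continuous fun z => ENNReal.ofReal (u z * w z ^ a) :=
      ENNReal.continuous_ofReal.comp (hu.mul (hw.rpow_const fun _ => Or.inr ha.le))
    refine Tendsto.congr' (eventually_mem_nhdsWithin.mono hintegral) ?_
    simpa [hz₀, Real.zero_rpow ha.ne'] using hcont.continuousWithinAt.tendsto (x := z₀)
  have hG_zero : G =ᵐ[μ] 0 := ae_eq_zero_of_tendsto_lintegral_mul hG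
    (fun z => (ENNReal.measurable_ofReal.comp (hd_right z).measurable).pow_const _)
    (fun y => by simp [ENNReal.rpow_eq_zero_iff, hlam])
    (fun y => (((ENNReal.continuous_rpow_const (y := -lam)).comp (ENNReal.continuous_ofReal.comp
      (hd_left y))).tendsto z₀).mono_left nhdsWithin_le_nhds) hzero
  refine (isOpen_ne_fun hw continuous_const).measure_ne_zero μ hw_dense.nonempty ?_
  exact measure_mono_null (fun y hy => hG_ne y hy) hG_zero

end WeightExponent

section Product

variable {A B : Type*} [NormedAddCommGroup A] [NormedAddCommGroup B] [NormedSpace ℝ B]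
  [Nontrivial B]

lemma dense_setOf_snd_ne_zero : Dense {X : A × B | X.2 ≠ 0} :=
  (dense_compl_singleton (0 : B)).preimage isOpenMap_snd

lemma dense_setOf_ofLp_snd_ne_zero : Dense {z : WithLp 2 (A × B) | z.ofLp.2 ≠ 0} :=
  dense_setOf_snd_ne_zero.preimage (WithLp.homeomorphProd 2 A B).isOpenMap

end Product

section Slice

/-- The Euclidean space `ℝ^{n+m}`: the product `ℝ^n × ℝ^m` with its `L²` norm, so that `pDist` is
its distance. -/
abbrev EuclideanProd (n m : ℕ) : Type :=
  WithLp 2 (EuclideanSpace ℝ (Fin n) × EuclideanSpace ℝ (Fin m))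

/-- The integral equation
`u (x, x̂) = |x̂| ^ (-α) ∫ v (y, ŷ) ^ κ |ŷ| ^ (-β) |(x, x̂) - (y, ŷ)| ^ (-lam) dy dŷ` off the slice
`x̂ = 0`, as an identity in `[0, ∞]`. -/
def WeightedRieszEquation {n m : ℕ} (lam α β κ : ℝ)
    (u v : EuclideanSpace ℝ (Fin n) × EuclideanSpace ℝ (Fin m) → ℝ) : Prop :=
  ∀ X : EuclideanSpace ℝ (Fin n) × EuclideanSpace ℝ (Fin m), X.2 ≠ 0 →
    ENNReal.ofReal (u X) = ENNReal.ofReal (‖X.2‖ ^ (-α)) *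
      ∫⁻ Y, ENNReal.ofReal (v Y ^ κ) * ENNReal.ofReal ‖Y.2‖ ^ (-β) *
        ENNReal.ofReal (pDist X Y) ^ (-lam)

variable {n m : ℕ} {lam α β κ : ℝ}
  {u v : EuclideanSpace ℝ (Fin n) × EuclideanSpace ℝ (Fin m) → ℝ}

lemma pDist_comm (X Y : EuclideanSpace ℝ (Fin n) × EuclideanSpace ℝ (Fin m)) :
    pDist X Y = pDist Y X := by
  rw [pDist, pDist, norm_sub_rev, norm_sub_rev X.2]

lemma pDist_ofLp (z w : EuclideanProd n m) : pDist z.ofLp w.ofLp = ‖z - w‖ := by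
  rw [WithLp.prod_norm_eq_of_L2]
  rfl

lemma continuous_pDist_right (X : EuclideanSpace ℝ (Fin n) × EuclideanSpace ℝ (Fin m)) :
    Continuous (pDist X) := by
  unfold pDist
  fun_prop

lemma continuous_comp_ofLp (hu : Continuous u) :
    Continuous fun z : EuclideanProd n m => u z.ofLp :=
  hu.comp (WithLp.prod_continuous_ofLp 2 _ _)

lemma lintegral_comp_ofLp {F : EuclideanSpace ℝ (Fin n) × EuclideanSpace ℝ (Fin m) → ℝ≥0∞}
    (hF : Measurable F) : ∫⁻ z : EuclideanProd n m, F z.ofLp = ∫⁻ X, F X :=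
  (WithLp.volume_preserving_ofLp _ _).lintegral_comp hF

lemma finrank_euclideanProd (n m : ℕ) : finrank ℝ (EuclideanProd n m) = n + m := by
  rw [(WithLp.linearEquiv 2 ℝ _).finrank_eq]
  simp

lemma norm_toLp_zero_sub_sq_add {c : ℝ} (hc : 0 ≤ c) (x : EuclideanSpace ℝ (Fin n))
    (z : EuclideanProd n m) :
    ‖WithLp.toLp 2 (x, 0) - z‖ ^ 2 + c = ‖x - z.fst‖ ^ 2 + √(c + ‖z.snd‖ ^ 2) ^ 2 := by
  rw [WithLp.prod_norm_sq_eq_of_L2, Real.sq_sqrt (by positivity)]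
  simp only [WithLp.sub_fst, WithLp.sub_snd, WithLp.toLp_fst, WithLp.toLp_snd, zero_sub, norm_neg]
  ring

variable [Nontrivial (EuclideanSpace ℝ (Fin m))]

lemma WeightedRieszEquation.weightExponent_nonpos (h : WeightedRieszEquation lam α β κ u v)
    (hlam : 0 ≤ lam) (hu : Continuous u) (hv : Continuous v) (hv_pos : ∀ X, 0 < v X) : α ≤ 0 := by
  have hv_meas := hv.measurable
  refine exponent_nonpos_of_eq_rpow_neg_mul_lintegral (w := fun X => ‖X.2‖) (z₀ := 0) hlam hu
    (by fun_prop) (fun _ => norm_nonneg _) (by simpa using dense_setOf_snd_ne_zero) (by simp)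
    (fun Y => by simpa only [pDist_comm _ Y] using continuous_pDist_right Y) continuous_pDist_right
    (by fun_prop) (fun Y hY => ?_) (fun X hX => h X (norm_ne_zero_iff.1 hX))
  have hnorm : 0 < ‖Y.2‖ := (norm_nonneg _).lt_of_ne' hY
  have hv_ne : ENNReal.ofReal (v Y ^ κ) ≠ 0 := by simpa using Real.rpow_pos_of_pos (hv_pos Y) κ
  have hweight_ne : ENNReal.ofReal ‖Y.2‖ ^ (-β) ≠ 0 := by
    rw [ENNReal.ofReal_rpow_of_pos hnorm]
    simpa using Real.rpow_pos_of_pos hnorm (-β)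
  exact mul_ne_zero hv_ne hweight_ne

lemma WeightedRieszEquation.isRieszPotential (h : WeightedRieszEquation lam 0 0 κ u v)
    (hlam : 0 ≤ lam) (hu : Continuous u) (hv : Continuous v) (hu_nonneg : ∀ X, 0 ≤ u X)
    (hv_pos : ∀ X, 0 < v X) :
    IsRieszPotential volume lam (fun y : EuclideanProd n m => v y.ofLp ^ κ)
      (fun z => u z.ofLp) := by
  refine isRieszPotential_of_dense hlam
    ((continuous_comp_ofLp hv).rpow_const fun _ => Or.inl (hv_pos _).ne')
    (fun _ => Real.rpow_pos_of_pos (hv_pos _) _) (continuous_comp_ofLp hu) (fun _ => hu_nonneg _)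
    dense_setOf_ofLp_snd_ne_zero fun z hz => ?_
  have hdist_meas := (continuous_pDist_right z.ofLp).measurable
  have hv_meas := hv.measurable
  simp only [h z.ofLp hz, neg_zero, Real.rpow_zero, ENNReal.ofReal_one, one_mul,
    ENNReal.rpow_zero, mul_one, ← pDist_ofLp]
  rw [← lintegral_comp_ofLp (by fun_prop)]

lemma WeightedRieszEquation.conformalRieszSystem (h_left : WeightedRieszEquation lam 0 0 κ u v)
    (h_right : WeightedRieszEquation lam 0 0 κ v u) (hlam : 0 < lam) (hκ : 1 ≤ κ)
    (hconf : lam * (κ + 1) = 2 * ((n : ℝ) + m)) (hu : Continuous u) (hv : Continuous v)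
    (hu_pos : ∀ X, 0 < u X) (hv_pos : ∀ X, 0 < v X) :
    ConformalRieszSystem volume lam κ (fun z : EuclideanProd n m => u z.ofLp)
      (fun z => v z.ofLp) where
  lam_pos := hlam
  one_le := hκ
  conformal := by rw [hconf, finrank_euclideanProd, Nat.cast_add]
  continuous_left := continuous_comp_ofLp hu
  continuous_right := continuous_comp_ofLp hv
  pos_left _ := hu_pos _
  pos_right _ := hv_pos _
  potential_left := h_left.isRieszPotential hlam.le hu hv (fun X => (hu_pos X).le) hv_pos
  potential_right := h_right.isRieszPotential hlam.le hv hu (fun X => (hv_pos X).le) hu_pos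

end Slice

/-- Classification of positive solutions of the Euler–Lagrange system on `ℝ^{n+m}` on the
slice `{x̂ = 0}` in the conformal case. -/
theorem classification_euler_lagrange_Rnm_conformal
    (n m : ℕ) (hm : 1 ≤ m) (lam α β θ κ : ℝ)
    (hlam0 : 0 < lam) (hlam1 : lam < (n : ℝ) + m)
    (hla : 0 < lam + 2 * α) (hlb : 0 < lam + 2 * β)
    (hθdef : θ = (2 * ((n : ℝ) + m) - lam - 2 * α) / (lam + 2 * α))
    (hκdef : κ = (2 * ((n : ℝ) + m) - lam - 2 * β) / (lam + 2 * β))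
    (hκ : 0 < κ) (hθ : 0 < θ) (hκθ : 1 ≤ κ * θ)
    (hα : α < m / (θ + 1)) (hβ : β < m / (κ + 1)) (hαβ : 0 ≤ α + β)
    (u v : EuclideanSpace ℝ (Fin n) × EuclideanSpace ℝ (Fin m) → ℝ)
    (hu_cont : Continuous u) (hv_cont : Continuous v)
    (hu_pos : ∀ X, 0 < u X) (hv_pos : ∀ X, 0 < v X)
    (hu_int : (∫⁻ X, ENNReal.ofReal (u X ^ (θ + 1))) < ⊤)
    (hu_eq : ∀ X : EuclideanSpace ℝ (Fin n) × EuclideanSpace ℝ (Fin m), X.2 ≠ 0 →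
      ENNReal.ofReal (u X) = ENNReal.ofReal (‖X.2‖ ^ (-α)) *
        ∫⁻ Y, ENNReal.ofReal (v Y ^ κ) * ENNReal.ofReal ‖Y.2‖ ^ (-β) *
          ENNReal.ofReal (pDist X Y) ^ (-lam))
    (hv_eq : ∀ Y : EuclideanSpace ℝ (Fin n) × EuclideanSpace ℝ (Fin m), Y.2 ≠ 0 →
      ENNReal.ofReal (v Y) = ENNReal.ofReal (‖Y.2‖ ^ (-β)) *
        ∫⁻ X, ENNReal.ofReal (u X ^ θ) * ENNReal.ofReal ‖X.2‖ ^ (-α) *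
          ENNReal.ofReal (pDist X Y) ^ (-lam)) :
    ∃ c₃ c₄ a : ℝ, 0 < c₃ ∧ 0 < c₄ ∧ 0 < a ∧
      ∃ x₀ : EuclideanSpace ℝ (Fin n), ∀ x : EuclideanSpace ℝ (Fin n),
        u (x, 0) = c₃ * (‖x - x₀‖ ^ 2 + a ^ 2) ^ (-((lam + 2 * α) / 2)) ∧
        v (x, 0) = c₄ * (‖x - x₀‖ ^ 2 + a ^ 2) ^ (-((lam + 2 * β) / 2)) := by
  have : NeZero m := ⟨by lia⟩
  have hu_wre : WeightedRieszEquation lam α β κ u v := hu_eq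
  have hv_wre : WeightedRieszEquation lam β α θ v u := fun Y hY => by
    simp only [hv_eq Y hY, pDist_comm Y]
  have hα_nonpos : α ≤ 0 := hu_wre.weightExponent_nonpos hlam0.le hu_cont hv_cont hv_pos
  have hβ_nonpos : β ≤ 0 := hv_wre.weightExponent_nonpos hlam0.le hv_cont hu_cont hu_pos
  obtain rfl : α = 0 := by linarith
  obtain rfl : β = 0 := by linarith
  obtain rfl : κ = θ := by rw [hκdef, hθdef]
  simp only [mul_zero, add_zero, sub_zero] at hκdef ⊢
  have hsystem := hu_wre.conformalRieszSystem hv_wre hlam0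
    (by rw [hκdef, le_div_iff₀ hlam0]; linarith) (by rw [hκdef]; field_simp; ring)
    hu_cont hv_cont hu_pos hv_pos
  have hu_meas := hu_cont.measurable
  obtain ⟨A, hA, A', hA', c, hc, X₀, hclass⟩ := hsystem.classification
    ((lintegral_comp_ofLp (F := fun X => ENNReal.ofReal (u X ^ (κ + 1))) (by fun_prop)).trans_ne
      hu_int.ne)
  refine ⟨A, A', √(c + ‖X₀.snd‖ ^ 2), hA, hA', by positivity, X₀.fst, fun x => ?_⟩
  rw [← norm_toLp_zero_sub_sq_add hc.le]
  exact hclass (WithLp.toLp 2 (x, 0))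
end
end

section
/- Let n ≥ 1 be an integer and 1 < p < n+1. Let α₁, β₁ ∈ ℝ and set p* = p(n+1+β₁)/(n+1+α₁−p). Assume p < p*, pn/p* − (n+1−p) < α₁ < p−1 and −1 < β₁ ≤ α₁(n+1)/(n+1−p). Then there exists a constant S > 0 such that for every smooth compactly supported function u : ℝ^{n+1} → ℝ, (∫_{ℝ^{n+1}_+} t^{β₁} |u(x,t)|^{p*} dx dt)^{p/p*} ≤ S · ∫_{ℝ^{n+1}_+} t^{α₁} |∇u(x,t)|^p dx dt. -/
open MeasureTheory ENNReal

noncomputable section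

/-- The upper half space of `ℝ^{n+1}`, with `t` the last coordinate. -/
def upperHalfE (n : ℕ) : Set (EuclideanSpace ℝ (Fin (n + 1))) :=
  {X | 0 < X (Fin.last n)}

/-!
Write `μ_β = t^β dx dt` on the half space and `θ = 1/p - 1/p*`. Averaging the fundamental theorem of
calculus over the upward rays from `X` with directions `(z, 1)`, `|z| ≤ 1`, bounds `∫_S |V| dμ_β` by
`∫ P |∇V|`, where `P Y` is the integral of `t^β 1_S` over the cone of backward rays from `Y`. At
height `t` one has `P ≤ K t^{β+1}`, because the cone leaves the half space after time `t`, and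
`P ≤ K t^β δ + δ^{-n} μ_β(S)`, on splitting the rays at length `δ`. Balancing `δ` and interpolating
the two bounds yields `P ≤ K μ_β(S)^θ t^γ` with `γ = β + 1 - θ (n + 1 + β)`, provided
`θ (n + 1) ≤ 1`; for the given `p*` this is the condition `β (n + 1 - p) ≤ α (n + 1)`.

With `S = {|V| ≥ 1}` this is the weak-type inequality `μ_β(|V| ≥ 1)^{1-θ} ≤ C ∫ |∇V| dμ_γ`, which
Maz'ya's truncation turns into `(∫ |V|^{1/(1-θ)} dμ_β)^{1-θ} ≤ C ∫ |∇V| dμ_γ`. Apply the latter to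
`|u|^s` with `s = (1 - θ) p*`. Since `γ = α/p + (1 - 1/p) β`, Hölder's inequality splits the right
side into `(∫ |∇u|^p dμ_α)^{1/p}` and a power of `∫ |u|^{p*} dμ_β`, which is absorbed on the left.
-/

open scoped NNReal

section ENNRealPowers

lemma le_rpow_mul_rpow_of_le_of_le {x a b : ℝ≥0∞} {τ : ℝ} (hτ₀ : 0 ≤ τ) (hτ₁ : τ ≤ 1)
    (ha : x ≤ a) (hb : x ≤ b) : x ≤ a ^ τ * b ^ (1 - τ) :=
  calc x = x ^ τ * x ^ (1 - τ) := by
        rw [← rpow_add_of_nonneg _ _ hτ₀ (sub_nonneg.2 hτ₁), add_sub_cancel, rpow_one]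
    _ ≤ a ^ τ * b ^ (1 - τ) := by gcongr

lemma tsum_rpow_le_rpow_tsum {ι : Type*} (f : ι → ℝ≥0∞) {r : ℝ} (hr : 1 ≤ r) :
    ∑' i, f i ^ r ≤ (∑' i, f i) ^ r := by
  have rpow_eq (x : ℝ≥0∞) : x ^ r = x * x ^ (r - 1) := by
    nth_rewrite 2 [← rpow_one x]
    rw [← rpow_add_of_nonneg _ _ zero_le_one (sub_nonneg.2 hr), add_sub_cancel]
  calc ∑' i, f i ^ r ≤ ∑' i, f i * (∑' j, f j) ^ (r - 1) := by
        refine ENNReal.tsum_le_tsum fun i => ?_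
        rw [rpow_eq]
        gcongr
        exact ENNReal.le_tsum i
    _ = (∑' i, f i) ^ r := by rw [ENNReal.tsum_mul_right, ← rpow_eq]

lemma le_mul_of_le_mul_rpow_mul_rpow {T A C : ℝ≥0∞} {a b κ : ℝ} (hT : T ≠ ⊤) (ha : 0 < a)
    (hκ : 0 < κ) (hb : 0 ≤ b) (h : T ^ (κ + b) ≤ C * (A ^ a * T ^ b)) :
    T ^ (κ / a) ≤ C ^ (1 / a) * A := by
  rcases eq_or_ne T 0 with rfl | hT₀
  · simp [zero_rpow_of_pos (div_pos hκ ha)]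
  have hcancel : T ^ κ ≤ C * A ^ a := by
    rw [rpow_add _ _ hT₀ hT, ← mul_assoc] at h
    exact (ENNReal.mul_le_mul_iff_left (by simp [hT₀, hT]) (rpow_ne_top_of_nonneg hb hT)).1 h
  calc T ^ (κ / a) = (T ^ κ) ^ (1 / a) := by rw [← rpow_mul, mul_one_div]
    _ ≤ (C * A ^ a) ^ (1 / a) := by gcongr
    _ = C ^ (1 / a) * A := by
        rw [mul_rpow_of_nonneg _ _ (by positivity), ← rpow_mul, mul_one_div_cancel ha.ne', rpow_one]

end ENNRealPowers

section DyadicSummation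

open Set

variable {X : Type*} [MeasurableSpace X] {f : X → ℝ≥0∞}

lemma tsum_measure_preimage_Ico_zpow_le (ν : Measure X) (hf : Measurable f) :
    ∑' k : ℤ, ν (f ⁻¹' Ico (2 ^ k) (2 ^ (k + 1))) ≤ ν univ := by
  have zpow_mono : Monotone fun k : ℤ => (2 : ℝ≥0∞) ^ k :=
    fun _ _ h => ENNReal.zpow_le_of_le one_le_two h
  have disjoint := zpow_mono.pairwise_disjoint_on_Ico_succ
  refine (tsum_meas_le_meas_iUnion_of_disjoint ν (fun _ => hf measurableSet_Ico)
    fun i j hij => (disjoint hij).preimage f).trans (measure_mono (subset_univ _))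

lemma lintegral_rpow_le_tsum_zpow (μ : Measure X) (hf : Measurable f) (hf_top : ∀ x, f x ≠ ⊤)
    {r : ℝ} (hr : 0 < r) :
    ∫⁻ x, f x ^ r ∂μ ≤ ∑' k : ℤ, (2 ^ (k + 1)) ^ r * μ {x | 2 ^ k ≤ f x} := by
  have pointwise (x : X) :
      f x ^ r ≤ ∑' k : ℤ, {x | 2 ^ k ≤ f x}.indicator (fun _ => (2 ^ (k + 1)) ^ r) x := by
    rcases eq_or_ne (f x) 0 with h₀ | h₀
    · simp [h₀, ENNReal.zero_rpow_of_pos hr]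
    obtain ⟨k, hk, hk'⟩ := ENNReal.exists_mem_Ico_zpow h₀ (hf_top x) ENNReal.one_lt_two (by simp)
    refine le_trans ?_ (ENNReal.le_tsum k)
    rw [indicator_of_mem (by exact hk)]
    gcongr
  have levelSet_meas (k : ℤ) : MeasurableSet {x | 2 ^ k ≤ f x} :=
    measurableSet_le measurable_const hf
  calc ∫⁻ x, f x ^ r ∂μ
      ≤ ∫⁻ x, ∑' k : ℤ, {x | 2 ^ k ≤ f x}.indicator (fun _ => (2 ^ (k + 1)) ^ r) x ∂μ :=
        lintegral_mono pointwise
    _ = ∑' k : ℤ, (2 ^ (k + 1)) ^ r * μ {x | 2 ^ k ≤ f x} := by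
        rw [lintegral_tsum fun k => (measurable_const.indicator (levelSet_meas k)).aemeasurable]
        simp only [lintegral_indicator_const (levelSet_meas _)]

-- Maz'ya's truncation principle: the slices `c ≤ f < 2 * c` over dyadic `c` are disjoint, so
-- summing the slice estimates upgrades a weak-type bound to a strong-type one.
lemma lintegral_rpow_le_of_forall_slice {μ ν : Measure X} {C : ℝ≥0∞} (hf : Measurable f)
    (hf_top : ∀ x, f x ≠ ⊤) {κ : ℝ} (hκ₀ : 0 < κ) (hκ₁ : κ ≤ 1)
    (h : ∀ c : ℝ≥0, c ≠ 0 → c * μ {x | 2 * c ≤ f x} ^ κ ≤ C * ν (f ⁻¹' Ico c (2 * c))) :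
    (∫⁻ x, f x ^ κ⁻¹ ∂μ) ^ κ ≤ 4 * C * ν univ := by
  have slice (k : ℤ) : 2 ^ (k + 1 + 1) * μ {x | 2 ^ (k + 1) ≤ f x} ^ κ ≤
      4 * C * ν (f ⁻¹' Ico (2 ^ k) (2 ^ (k + 1))) := by
    have two_zpow (j : ℤ) : (2 : ℝ≥0∞) ^ (j + 1) = 2 * 2 ^ j := by
      rw [ENNReal.zpow_add two_ne_zero (by simp), zpow_one, mul_comm]
    have hk := h (2 ^ k) (zpow_ne_zero _ two_ne_zero)
    rw [ENNReal.coe_zpow two_ne_zero, ENNReal.coe_ofNat, ← two_zpow] at hk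
    calc _ = 4 * (2 ^ k * μ {x | 2 ^ (k + 1) ≤ f x} ^ κ) := by
          rw [two_zpow (k + 1), two_zpow k]; ring
      _ ≤ _ := by rw [mul_assoc]; gcongr
  have hκinv : 1 ≤ κ⁻¹ := (one_le_inv₀ hκ₀).2 hκ₁
  rw [← ENNReal.le_rpow_inv_iff hκ₀]
  calc ∫⁻ x, f x ^ κ⁻¹ ∂μ
      ≤ ∑' k : ℤ, (2 ^ (k + 1)) ^ κ⁻¹ * μ {x | 2 ^ k ≤ f x} :=
        lintegral_rpow_le_tsum_zpow μ hf hf_top (inv_pos.2 hκ₀)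
    _ = ∑' k : ℤ, (2 ^ (k + 1 + 1) * μ {x | 2 ^ (k + 1) ≤ f x} ^ κ) ^ κ⁻¹ := by
        rw [← (Equiv.addRight (1 : ℤ)).tsum_eq]
        simp only [Equiv.coe_addRight, ENNReal.mul_rpow_of_nonneg _ _ (inv_pos.2 hκ₀).le,
          ENNReal.rpow_rpow_inv hκ₀.ne']
    _ ≤ (∑' k : ℤ, 4 * C * ν (f ⁻¹' Ico (2 ^ k) (2 ^ (k + 1)))) ^ κ⁻¹ :=
        (tsum_rpow_le_rpow_tsum _ hκinv).trans
          (ENNReal.rpow_le_rpow (ENNReal.tsum_le_tsum slice) (inv_pos.2 hκ₀).le)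
    _ ≤ (4 * C * ν univ) ^ κ⁻¹ := by
        rw [ENNReal.tsum_mul_left]
        gcongr
        exact tsum_measure_preimage_Ico_zpow_le ν hf

end DyadicSummation

section Weight

open Set

/-- The power weight `t ^ β` on the half line `t > 0`, extended by `0` to `t ≤ 0`. -/
def rpowWeight (β t : ℝ) : ℝ≥0∞ :=
  (Ioi 0).indicator (fun t => ENNReal.ofReal (t ^ β)) t

variable {α β s t : ℝ}

lemma rpowWeight_of_pos (ht : 0 < t) : rpowWeight β t = ENNReal.ofReal (t ^ β) :=
  indicator_of_mem (mem_Ioi.2 ht) _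

lemma rpowWeight_of_nonpos (ht : t ≤ 0) : rpowWeight β t = 0 :=
  indicator_of_notMem (notMem_Ioi.2 ht) _

@[fun_prop]
lemma measurable_rpowWeight : Measurable (rpowWeight β) :=
  Measurable.indicator (by fun_prop) measurableSet_Ioi

lemma rpowWeight_convexCombination {τ : ℝ} (hτ₀ : 0 ≤ τ) (hτ₁ : τ ≤ 1) :
    rpowWeight (τ * α + (1 - τ) * β) t = rpowWeight α t ^ τ * rpowWeight β t ^ (1 - τ) := by
  rcases le_or_gt t 0 with ht | ht
  · simp only [rpowWeight_of_nonpos ht]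
    rw [← ENNReal.rpow_add_of_nonneg _ _ hτ₀ (sub_nonneg.2 hτ₁), add_sub_cancel, ENNReal.rpow_one]
  · simp only [rpowWeight_of_pos ht]
    rw [ENNReal.ofReal_rpow_of_pos (by positivity), ENNReal.ofReal_rpow_of_pos (by positivity),
      ← ENNReal.ofReal_mul (by positivity), ← Real.rpow_mul ht.le, ← Real.rpow_mul ht.le,
      ← Real.rpow_add ht, mul_comm τ, mul_comm (1 - τ)]

lemma rpow_sub_rpow_sub_le {b δ : ℝ} (hb : 0 < b) (hδ : 0 ≤ δ) (hδs : δ ≤ s) (hs : 0 < s) :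
    s ^ b - (s - δ) ^ b ≤ max b 1 * s ^ (b - 1) * δ := by
  have hx₀ : 0 ≤ δ / s := by positivity
  have hx₁ : 0 ≤ 1 - δ / s := sub_nonneg.2 ((div_le_one hs).2 hδs)
  have bernoulli : 1 - max b 1 * (δ / s) ≤ (1 - δ / s) ^ b := by
    rcases le_total b 1 with h | h
    · simpa [max_eq_right h] using
        Real.rpow_le_rpow_of_exponent_ge' hx₁ (sub_le_self 1 hx₀) hb.le h
    · simpa [max_eq_left h, sub_eq_add_neg] using
        one_add_mul_self_le_rpow_one_add (s := -(δ / s)) (by linarith) h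
  calc s ^ b - (s - δ) ^ b = s ^ b * (1 - (1 - δ / s) ^ b) := by
        rw [show s - δ = s * (1 - δ / s) by field_simp, Real.mul_rpow hs.le hx₁]; ring
    _ ≤ s ^ b * (max b 1 * (δ / s)) := by gcongr; linarith
    _ = max b 1 * s ^ (b - 1) * δ := by rw [Real.rpow_sub_one hs.ne']; ring

lemma setLIntegral_Ioc_rpowWeight_sub (hβ : -1 < β) {δ : ℝ} (hδ : 0 ≤ δ) (hδs : δ ≤ s) :
    ∫⁻ r in Ioc 0 δ, rpowWeight β (s - r) =
      ENNReal.ofReal ((s ^ (β + 1) - (s - δ) ^ (β + 1)) / (β + 1)) := by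
  have integrable : IntervalIntegrable (fun r : ℝ => (s - r) ^ β) volume 0 δ := by
    simpa using
      (intervalIntegral.intervalIntegrable_rpow' (a := s) (b := s - δ) hβ).comp_sub_left s
  calc ∫⁻ r in Ioc 0 δ, rpowWeight β (s - r)
      = ∫⁻ r in Ioc 0 δ, ENNReal.ofReal ((s - r) ^ β) := by
        rw [← restrict_Ioo_eq_restrict_Ioc]
        exact setLIntegral_congr_fun measurableSet_Ioo fun r hr =>
          rpowWeight_of_pos (by linarith [hr.2])
    _ = ENNReal.ofReal (∫ r in 0..δ, (s - r) ^ β) := by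
        rw [intervalIntegral.integral_of_le hδ, ofReal_integral_eq_lintegral_ofReal]
        · exact (intervalIntegrable_iff_integrableOn_Ioc_of_le hδ).1 integrable
        · filter_upwards [ae_restrict_mem measurableSet_Ioc] with r hr
          exact Real.rpow_nonneg (by linarith [hr.2]) _
    _ = _ := by
        rw [intervalIntegral.integral_comp_sub_left (fun x => x ^ β), integral_rpow (Or.inl hβ),
          sub_zero]

lemma setLIntegral_Ioi_rpowWeight_sub_eq_zero {δ : ℝ} (hsδ : s ≤ δ) :
    ∫⁻ r in Ioi δ, rpowWeight β (s - r) = 0 :=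
  setLIntegral_eq_zero measurableSet_Ioi fun r hr =>
    rpowWeight_of_nonpos (by linarith [mem_Ioi.1 hr])

lemma exists_setLIntegral_rpowWeight_sub_le (hβ : -1 < β) :
    ∃ K : ℝ≥0, ∀ s,
      (∀ δ, ∫⁻ r in Ioc 0 δ, rpowWeight β (s - r) ≤ K * rpowWeight β s * ENNReal.ofReal δ) ∧
      ∫⁻ r in Ioi 0, rpowWeight β (s - r) ≤ K * rpowWeight β s * ENNReal.ofReal s := by
  have hβ' : 0 < β + 1 := by linarith
  refine ⟨(max (β + 1) 1 / (β + 1)).toNNReal, fun s => ?_⟩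
  rcases le_or_gt s 0 with hs | hs
  · have vanish := setLIntegral_Ioi_rpowWeight_sub_eq_zero (β := β) hs
    exact ⟨fun δ => ((lintegral_mono_set Ioc_subset_Ioi_self).trans_eq vanish).trans zero_le,
      vanish.trans_le zero_le⟩
  have near {δ : ℝ} (hδ : 0 ≤ δ) (hδs : δ ≤ s) : ∫⁻ r in Ioc 0 δ, rpowWeight β (s - r) ≤
      (max (β + 1) 1 / (β + 1)).toNNReal * rpowWeight β s * ENNReal.ofReal δ := by
    rw [setLIntegral_Ioc_rpowWeight_sub hβ hδ hδs, rpowWeight_of_pos hs, ← ENNReal.ofReal,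
      ← ENNReal.ofReal_mul (by positivity), ← ENNReal.ofReal_mul (by positivity)]
    refine ENNReal.ofReal_le_ofReal ?_
    have := rpow_sub_rpow_sub_le hβ' hδ hδs hs
    rw [add_sub_cancel_right] at this
    rw [div_mul_eq_mul_div, div_mul_eq_mul_div]
    gcongr
  have total : ∫⁻ r in Ioi 0, rpowWeight β (s - r) ≤
      (max (β + 1) 1 / (β + 1)).toNNReal * rpowWeight β s * ENNReal.ofReal s := by
    rw [← Ioc_union_Ioi_eq_Ioi hs.le, lintegral_union measurableSet_Ioi Ioc_disjoint_Ioi_same,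
      setLIntegral_Ioi_rpowWeight_sub_eq_zero le_rfl, add_zero]
    exact near hs.le le_rfl
  refine ⟨fun δ => ?_, total⟩
  rcases le_total δ 0 with hδ | hδ
  · simp [Ioc_eq_empty_of_le hδ]
  rcases le_total δ s with hδs | hsδ
  · exact near hδ hδs
  · refine (lintegral_mono_set Ioc_subset_Ioi_self).trans (total.trans ?_)
    gcongr

lemma isFiniteMeasureOnCompacts_withDensity_rpowWeight (hβ : -1 < β) :
    IsFiniteMeasureOnCompacts (volume.withDensity (rpowWeight β)) := by
  refine ⟨fun K hK => ?_⟩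
  obtain ⟨s, hs⟩ := hK.bddAbove
  obtain ⟨C, hC⟩ := exists_setLIntegral_rpowWeight_sub_le hβ
  calc volume.withDensity (rpowWeight β) K
      ≤ ∫⁻ t in Iic s, rpowWeight β t :=
        (measure_mono hs).trans_eq (withDensity_apply _ measurableSet_Iic)
    _ = ∫⁻ r in Ioi 0, rpowWeight β (s - r) := by
        rw [restrict_Ioi_eq_restrict_Ici, ← (Measure.measurePreserving_sub_left volume s)
          |>.setLIntegral_comp_preimage_emb (MeasurableEquiv.subLeft s).measurableEmbedding]
        simp
    _ ≤ C * rpowWeight β s * ENNReal.ofReal s := (hC s).2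
    _ < ⊤ := by
        refine ENNReal.mul_lt_top (ENNReal.mul_lt_top ENNReal.coe_lt_top ?_) ENNReal.ofReal_lt_top
        exact (indicator_le_self' (fun _ _ => zero_le) s).trans_lt ENNReal.ofReal_lt_top

end Weight

section HalfSpaceMeasure

variable {E : Type*} [MeasureSpace E] {α β : ℝ}

variable (E) in
/-- The measure `t ^ β dt dx` on the half space `{(t, x) | t > 0}`, with the distinguished variable
`t` put first. -/
def halfSpaceMeasure (β : ℝ) : Measure (ℝ × E) :=
  volume.withDensity fun X => rpowWeight β X.1

lemma lintegral_halfSpaceMeasure {f : ℝ × E → ℝ≥0∞} (hf : Measurable f) :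
    ∫⁻ X, f X ∂halfSpaceMeasure E β = ∫⁻ X, rpowWeight β X.1 * f X :=
  lintegral_withDensity_eq_lintegral_mul _ (by fun_prop) hf

lemma lintegral_rpow_mul_rpow_halfSpaceMeasure_le {f g : ℝ × E → ℝ≥0∞} (hf : Measurable f)
    (hg : Measurable g) {τ : ℝ} (hτ₀ : 0 ≤ τ) (hτ₁ : τ ≤ 1) :
    ∫⁻ X, f X ^ τ * g X ^ (1 - τ) ∂halfSpaceMeasure E (τ * α + (1 - τ) * β) ≤
      (∫⁻ X, f X ∂halfSpaceMeasure E α) ^ τ * (∫⁻ X, g X ∂halfSpaceMeasure E β) ^ (1 - τ) := by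
  have hτ₁' : 0 ≤ 1 - τ := sub_nonneg.2 hτ₁
  rw [lintegral_halfSpaceMeasure (by fun_prop), lintegral_halfSpaceMeasure hf,
    lintegral_halfSpaceMeasure hg]
  simp only [rpowWeight_convexCombination hτ₀ hτ₁]
  calc ∫⁻ X : ℝ × E, rpowWeight α X.1 ^ τ * rpowWeight β X.1 ^ (1 - τ) *
          (f X ^ τ * g X ^ (1 - τ))
      = ∫⁻ X, (rpowWeight α X.1 * f X) ^ τ * (rpowWeight β X.1 * g X) ^ (1 - τ) := by
        simp only [ENNReal.mul_rpow_of_nonneg _ _ hτ₀, ENNReal.mul_rpow_of_nonneg _ _ hτ₁',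
          mul_mul_mul_comm]
    _ ≤ _ := ENNReal.lintegral_mul_norm_pow_le (by fun_prop) (by fun_prop) hτ₀ hτ₁'
        (add_sub_cancel _ _)

variable [SFinite (volume : Measure E)]

lemma halfSpaceMeasure_eq_prod :
    halfSpaceMeasure E β = (volume.withDensity (rpowWeight β)).prod volume := by
  rw [prod_withDensity_left (by fun_prop)]; rfl

lemma halfSpaceMeasure_apply {S : Set (ℝ × E)} (hS : MeasurableSet S) :
    halfSpaceMeasure E β S = ∫⁻ t, rpowWeight β t * volume (Prod.mk t ⁻¹' S) := by
  rw [halfSpaceMeasure_eq_prod, Measure.prod_apply hS,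
    lintegral_withDensity_eq_lintegral_mul _ (by fun_prop) (measurable_measure_prodMk_left hS)]
  rfl

lemma isFiniteMeasureOnCompacts_halfSpaceMeasure [TopologicalSpace E]
    [IsFiniteMeasureOnCompacts (volume : Measure E)] (hβ : -1 < β) :
    IsFiniteMeasureOnCompacts (halfSpaceMeasure E β) := by
  have := isFiniteMeasureOnCompacts_withDensity_rpowWeight hβ
  rw [halfSpaceMeasure_eq_prod]
  infer_instance

end HalfSpaceMeasure

section ScaleBalancing

lemma rpow_mul_rpow_interpolation {s m δ β θ : ℝ} {k : ℕ} (hs : 0 < s) (hm : 0 < m) (hδ : 0 < δ)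
    (hδk : δ ^ k = m / s ^ β) :
    (s ^ β * δ) ^ (θ * k) * (s ^ β * s) ^ (1 - θ * k) = m ^ θ * s ^ (β + 1 - θ * (k + β)) := by
  have hδθ : δ ^ (θ * k) = m ^ θ / s ^ (β * θ) := by
    rw [mul_comm, Real.rpow_natCast_mul hδ.le, hδk, Real.div_rpow hm.le (by positivity),
      ← Real.rpow_mul hs.le]
  rw [Real.mul_rpow (by positivity) hδ.le, hδθ, ← Real.rpow_add_one hs.ne', ← Real.rpow_mul hs.le,
    ← Real.rpow_mul hs.le, mul_div_assoc', div_mul_eq_mul_div, mul_comm _ (m ^ θ), mul_assoc,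
    mul_div_assoc, ← Real.rpow_add hs, ← Real.rpow_sub hs]
  ring_nf

-- The estimates balance at the scale `δ` for which the two terms of `hsplit` agree.
lemma le_of_le_of_forall_le_add {P C : ℝ≥0∞} {s m β θ : ℝ} {d : ℕ} (hs : 0 < s) (hm : 0 < m)
    (hθ₀ : 0 ≤ θ) (hθ₁ : θ * (d + 1) ≤ 1) (htotal : P ≤ C * ENNReal.ofReal (s ^ β * s))
    (hsplit : ∀ δ, 0 < δ → P ≤ C * ENNReal.ofReal (s ^ β * δ) + ENNReal.ofReal ((δ ^ d)⁻¹ * m)) :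
    P ≤ (C + 1) * ENNReal.ofReal (m ^ θ * s ^ (β + 1 - θ * (d + 1 + β))) := by
  obtain ⟨δ, hδ, hδd⟩ : ∃ δ, 0 < δ ∧ δ ^ (d + 1) = m / s ^ β :=
    ⟨(m / s ^ β) ^ ((d + 1 : ℕ) : ℝ)⁻¹, by positivity,
      Real.rpow_inv_natCast_pow (by positivity) d.succ_ne_zero⟩
  have hP_s : P ≤ (C + 1) * ENNReal.ofReal (s ^ β * s) :=
    htotal.trans (by gcongr; exact le_self_add)
  have hP_δ : P ≤ (C + 1) * ENNReal.ofReal (s ^ β * δ) := by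
    have balance : (δ ^ d)⁻¹ * m = s ^ β * δ := by
      rw [show m = δ ^ (d + 1) * s ^ β by rw [hδd]; field_simp, pow_succ]
      field_simp
    rw [add_mul, one_mul]
    exact (hsplit δ hδ).trans_eq (by rw [balance])
  have hτ₀ : 0 ≤ θ * (d + 1 : ℕ) := by positivity
  have hτ₁ : θ * (d + 1 : ℕ) ≤ 1 := by exact_mod_cast hθ₁
  calc P ≤ ((C + 1) * ENNReal.ofReal (s ^ β * δ)) ^ (θ * (d + 1 : ℕ)) *
          ((C + 1) * ENNReal.ofReal (s ^ β * s)) ^ (1 - θ * (d + 1 : ℕ)) :=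
        le_rpow_mul_rpow_of_le_of_le hτ₀ hτ₁ hP_δ hP_s
    _ = (C + 1) * ENNReal.ofReal ((s ^ β * δ) ^ (θ * (d + 1 : ℕ)) *
          (s ^ β * s) ^ (1 - θ * (d + 1 : ℕ))) := by
        rw [ENNReal.mul_rpow_of_nonneg _ _ hτ₀, ENNReal.mul_rpow_of_nonneg _ _ (sub_nonneg.2 hτ₁),
          mul_mul_mul_comm, ← ENNReal.rpow_add_of_nonneg _ _ hτ₀ (sub_nonneg.2 hτ₁),
          add_sub_cancel, ENNReal.rpow_one, ENNReal.ofReal_rpow_of_pos (by positivity),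
          ENNReal.ofReal_rpow_of_pos (by positivity), ← ENNReal.ofReal_mul (by positivity)]
    _ = (C + 1) * ENNReal.ofReal (m ^ θ * s ^ (β + 1 - θ * (d + 1 + β))) := by
        rw [rpow_mul_rpow_interpolation hs hm hδ hδd, Nat.cast_succ]

end ScaleBalancing

section RayPotential

open Set

variable {W F : Type*} [NormedAddCommGroup W] [NormedSpace ℝ W] [NormedAddCommGroup F]
  [NormedSpace ℝ F] {V : W → F} {v : W}

lemma enorm_le_lintegral_enorm_fderiv_ray (hV : ContDiff ℝ 1 V) (hVc : HasCompactSupport V)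
    (hv : v ≠ 0) (X : W) :
    ‖V X‖ₑ ≤ ∫⁻ r in Ioi (0 : ℝ), ‖fderiv ℝ V (X + r • v) v‖ₑ := by
  let f : ℝ → F := fun r => V (X + r • -v)
  have closedEmbedding : Topology.IsClosedEmbedding fun r : ℝ => X + r • -v :=
    (Homeomorph.addLeft X).isClosedEmbedding.comp (isClosedEmbedding_smul_left (neg_ne_zero.2 hv))
  have hf : ContDiff ℝ 1 f := hV.comp (by fun_prop)
  have deriv_f (r : ℝ) : deriv f r = fderiv ℝ V (X + r • -v) (-v) := by
    have hline : HasDerivAt (fun r : ℝ => X + r • -v) (-v) r := by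
      simpa using ((hasDerivAt_id r).smul_const (-v)).const_add X
    exact ((hV.differentiable one_ne_zero _).hasFDerivAt.comp_hasDerivAt r hline).deriv
  calc ‖V X‖ₑ = ‖f 0‖ₑ := by simp [f]
    _ ≤ ∫⁻ r in Iic 0, ‖deriv f r‖ₑ :=
        (hVc.comp_isClosedEmbedding closedEmbedding).enorm_le_lintegral_Ici_deriv hf 0
    _ = ∫⁻ r in Ici (0 : ℝ), ‖fderiv ℝ V (X + r • v) v‖ₑ := by
        rw [← (Measure.measurePreserving_neg (volume : Measure ℝ)).setLIntegral_comp_preimage_emb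
          (MeasurableEquiv.neg ℝ).measurableEmbedding]
        simp [deriv_f]
    _ = ∫⁻ r in Ioi (0 : ℝ), ‖fderiv ℝ V (X + r • v) v‖ₑ := by rw [restrict_Ioi_eq_restrict_Ici]

lemma lintegral_mul_enorm_le_lintegral_ray [FiniteDimensional ℝ W] [MeasureSpace W] [BorelSpace W]
    [SFinite (volume : Measure W)] [(volume : Measure W).IsAddRightInvariant]
    (hV : ContDiff ℝ 1 V) (hVc : HasCompactSupport V) {f : W → ℝ≥0∞} (hf : Measurable f)
    (hv : v ≠ 0) :
    ∫⁻ X, f X * ‖V X‖ₑ ≤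
      ∫⁻ Y, (∫⁻ r in Ioi (0 : ℝ), f (Y - r • v)) * ‖fderiv ℝ V Y v‖ₑ := by
  have : Measurable fun Y => ‖fderiv ℝ V Y v‖ₑ :=
    ((hV.continuous_fderiv one_ne_zero).clm_apply continuous_const).enorm.measurable
  calc ∫⁻ X, f X * ‖V X‖ₑ
      ≤ ∫⁻ X, ∫⁻ r in Ioi (0 : ℝ), f X * ‖fderiv ℝ V (X + r • v) v‖ₑ :=
        lintegral_mono fun X =>
          (mul_le_mul_right (enorm_le_lintegral_enorm_fderiv_ray hV hVc hv X) _).trans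
            (lintegral_const_mul_le _ _)
    _ = ∫⁻ r in Ioi (0 : ℝ), ∫⁻ X, f X * ‖fderiv ℝ V (X + r • v) v‖ₑ :=
        lintegral_lintegral_swap (by fun_prop)
    _ = ∫⁻ r in Ioi (0 : ℝ), ∫⁻ Y, f (Y - r • v) * ‖fderiv ℝ V Y v‖ₑ := by
        refine lintegral_congr fun r => ?_
        rw [← lintegral_add_right_eq_self (fun Y => f (Y - r • v) * ‖fderiv ℝ V Y v‖ₑ) (r • v)]
        simp only [add_sub_cancel_right]
    _ = ∫⁻ Y, ∫⁻ r in Ioi (0 : ℝ), f (Y - r • v) * ‖fderiv ℝ V Y v‖ₑ :=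
        lintegral_lintegral_swap (by fun_prop)
    _ = _ := lintegral_congr fun Y => lintegral_mul_const _ (by fun_prop)

end RayPotential

section ConePotential

open Set Metric
open scoped Pointwise

variable {E F : Type*} [NormedAddCommGroup E] [NormedSpace ℝ E] [MeasureSpace E]

/-- The cone potential `∫_{‖z‖ ≤ 1} ∫_0^∞ f (Y - r (1, z)) dr dz` of `f`: it averages `f` over the
cone of backward rays from `Y` with directions `(1, z)`, `‖z‖ ≤ 1`. -/
def conePotential (f : ℝ × E → ℝ≥0∞) (Y : ℝ × E) : ℝ≥0∞ :=
  ∫⁻ z in closedBall (0 : E) 1, ∫⁻ r in Ioi (0 : ℝ), f (Y - r • ((1 : ℝ), z))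

/-- The directions `z` of the unit ball for which the backward ray `r ↦ Y - r (1, z)` is in `S` at
time `r`. -/
def coneSlice (S : Set (ℝ × E)) (Y : ℝ × E) (r : ℝ) : Set E :=
  closedBall 0 1 ∩ {z | Y - r • ((1 : ℝ), z) ∈ S}

lemma setLIntegral_rpowWeight_mul_coneSlice_le (S : Set (ℝ × E)) (Y : ℝ × E) {β : ℝ} (I : Set ℝ) :
    ∫⁻ r in I, rpowWeight β (Y.1 - r) * volume (coneSlice S Y r) ≤
      (∫⁻ r in I, rpowWeight β (Y.1 - r)) * volume (closedBall (0 : E) 1) := by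
  rw [← lintegral_mul_const _ (by fun_prop)]
  gcongr
  exact inter_subset_left

variable [FiniteDimensional ℝ E] [BorelSpace E]
  [(volume : Measure E).IsAddHaarMeasure] [NormedAddCommGroup F] [NormedSpace ℝ F]

lemma volume_ball_mul_lintegral_mul_enorm_le {V : ℝ × E → F} (hV : ContDiff ℝ 1 V)
    (hVc : HasCompactSupport V) {f : ℝ × E → ℝ≥0∞} (hf : Measurable f) :
    volume (closedBall (0 : E) 1) * ∫⁻ X, f X * ‖V X‖ₑ ≤
      ∫⁻ Y, conePotential f Y * ‖fderiv ℝ V Y‖ₑ := by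
  have : (volume : Measure (ℝ × E)).IsAddHaarMeasure := by
    rw [Measure.volume_eq_prod]; infer_instance
  have : Measurable fun Y => ‖fderiv ℝ V Y‖ₑ :=
    (hV.continuous_fderiv one_ne_zero).enorm.measurable
  have ray {z : E} (hz : z ∈ closedBall 0 1) : ∫⁻ X, f X * ‖V X‖ₑ ≤
      ∫⁻ Y, (∫⁻ r in Ioi (0 : ℝ), f (Y - r • ((1 : ℝ), z))) * ‖fderiv ℝ V Y‖ₑ := by
    have norm_direction : ‖((1 : ℝ), z)‖ₑ ≤ 1 := by
      rw [← enorm_one (G := ℝ), enorm_le_iff_norm_le]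
      simpa [Prod.norm_def] using hz
    refine (lintegral_mul_enorm_le_lintegral_ray hV hVc hf (v := (1, z)) (by simp)).trans ?_
    gcongr with Y
    exact ((fderiv ℝ V Y).le_opENorm _).trans (mul_le_of_le_one_right' norm_direction)
  calc volume (closedBall (0 : E) 1) * ∫⁻ X, f X * ‖V X‖ₑ
      = ∫⁻ _ in closedBall (0 : E) 1, ∫⁻ X, f X * ‖V X‖ₑ := by
        rw [setLIntegral_const, mul_comm]
    _ ≤ ∫⁻ z in closedBall (0 : E) 1, ∫⁻ Y,
          (∫⁻ r in Ioi (0 : ℝ), f (Y - r • ((1 : ℝ), z))) * ‖fderiv ℝ V Y‖ₑ :=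
        setLIntegral_mono' measurableSet_closedBall fun z hz => ray hz
    _ = ∫⁻ Y, ∫⁻ z in closedBall (0 : E) 1,
          (∫⁻ r in Ioi (0 : ℝ), f (Y - r • ((1 : ℝ), z))) * ‖fderiv ℝ V Y‖ₑ :=
        lintegral_lintegral_swap (by fun_prop)
    _ = _ := lintegral_congr fun Y => lintegral_mul_const _ (by fun_prop)

lemma conePotential_indicator_rpowWeight {S : Set (ℝ × E)} (hS : MeasurableSet S) {β : ℝ}
    (Y : ℝ × E) :
    conePotential (S.indicator fun X => rpowWeight β X.1) Y =
      ∫⁻ r in Ioi 0, rpowWeight β (Y.1 - r) * volume (coneSlice S Y r) := by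
  have : Measurable (S.indicator fun X : ℝ × E => rpowWeight β X.1) :=
    Measurable.indicator (by fun_prop) hS
  rw [conePotential, lintegral_lintegral_swap (by fun_prop)]
  refine lintegral_congr fun r => ?_
  have hslice : MeasurableSet {z : E | Y - r • ((1 : ℝ), z) ∈ S} :=
    hS.preimage (by fun_prop)
  calc ∫⁻ z in closedBall (0 : E) 1, S.indicator (fun X => rpowWeight β X.1) (Y - r • ((1 : ℝ), z))
      = ∫⁻ z in closedBall (0 : E) 1, {z : E | Y - r • ((1 : ℝ), z) ∈ S}.indicator
          (fun _ => rpowWeight β (Y.1 - r)) z := by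
        refine lintegral_congr fun z => ?_
        simp [indicator]
    _ = _ := by
        rw [lintegral_indicator_const hslice, Measure.restrict_apply hslice, inter_comm]; rfl

lemma ofReal_pow_mul_volume_coneSlice_le {S : Set (ℝ × E)} (hS : MeasurableSet S) (Y : ℝ × E)
    {r : ℝ} (hr : 0 ≤ r) :
    ENNReal.ofReal (r ^ Module.finrank ℝ E) * volume (coneSlice S Y r) ≤
      volume (Prod.mk (Y.1 - r) ⁻¹' S) := by
  rw [← Measure.addHaar_smul_of_nonneg volume hr]
  calc volume (r • coneSlice S Y r)
      ≤ volume ((fun y => Y.2 - y) ⁻¹' (Prod.mk (Y.1 - r) ⁻¹' S)) := by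
        refine measure_mono ?_
        rintro _ ⟨z, ⟨-, hz⟩, rfl⟩
        simpa [Prod.sub_def] using hz
    _ = volume (Prod.mk (Y.1 - r) ⁻¹' S) :=
        (Measure.measurePreserving_sub_left volume Y.2).measure_preimage
          (measurable_prodMk_left hS).nullMeasurableSet

lemma setLIntegral_Ioi_rpowWeight_mul_coneSlice_le {S : Set (ℝ × E)} (hS : MeasurableSet S)
    (Y : ℝ × E) {β δ : ℝ} (hδ : 0 < δ) :
    ∫⁻ r in Ioi δ, rpowWeight β (Y.1 - r) * volume (coneSlice S Y r) ≤
      ENNReal.ofReal ((δ ^ Module.finrank ℝ E)⁻¹) * halfSpaceMeasure E β S := by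
  have slice {r : ℝ} (hr : r ∈ Ioi δ) : volume (coneSlice S Y r) ≤
      ENNReal.ofReal ((δ ^ Module.finrank ℝ E)⁻¹) * volume (Prod.mk (Y.1 - r) ⁻¹' S) := by
    have hr : δ < r := hr
    rw [ENNReal.ofReal_inv_of_pos (by positivity), ← ENNReal.div_eq_inv_mul,
      ENNReal.le_div_iff_mul_le (by left; simpa using by positivity) (by simp), mul_comm]
    refine le_trans ?_ (ofReal_pow_mul_volume_coneSlice_le hS Y (hδ.trans hr).le)
    gcongr
  calc ∫⁻ r in Ioi δ, rpowWeight β (Y.1 - r) * volume (coneSlice S Y r)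
      ≤ ∫⁻ r in Ioi δ, rpowWeight β (Y.1 - r) *
          (ENNReal.ofReal ((δ ^ Module.finrank ℝ E)⁻¹) * volume (Prod.mk (Y.1 - r) ⁻¹' S)) :=
        setLIntegral_mono' measurableSet_Ioi fun r hr => by gcongr; exact slice hr
    _ = ENNReal.ofReal ((δ ^ Module.finrank ℝ E)⁻¹) *
          ∫⁻ r in Ioi δ, rpowWeight β (Y.1 - r) * volume (Prod.mk (Y.1 - r) ⁻¹' S) := by
        rw [← lintegral_const_mul' _ _ ENNReal.ofReal_ne_top]
        simp only [mul_left_comm]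
    _ ≤ ENNReal.ofReal ((δ ^ Module.finrank ℝ E)⁻¹) *
          ∫⁻ t, rpowWeight β t * volume (Prod.mk t ⁻¹' S) := by
        rw [← lintegral_sub_left_eq_self (fun t => rpowWeight β t * volume (Prod.mk t ⁻¹' S)) Y.1]
        exact mul_le_mul_right (setLIntegral_le_lintegral _ _) _
    _ = _ := by rw [halfSpaceMeasure_apply hS]

lemma exists_conePotential_le {β : ℝ} (hβ : -1 < β) :
    ∃ K : ℝ≥0, ∀ S : Set (ℝ × E), MeasurableSet S → ∀ Y,
      conePotential (S.indicator fun X => rpowWeight β X.1) Y ≤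
        K * rpowWeight β Y.1 * ENNReal.ofReal Y.1 ∧
      ∀ δ, 0 < δ → conePotential (S.indicator fun X => rpowWeight β X.1) Y ≤
        K * rpowWeight β Y.1 * ENNReal.ofReal δ +
          ENNReal.ofReal ((δ ^ Module.finrank ℝ E)⁻¹) * halfSpaceMeasure E β S := by
  obtain ⟨K, hK⟩ := exists_setLIntegral_rpowWeight_sub_le hβ
  have ball_lt_top : volume (closedBall (0 : E) 1) < ⊤ := measure_closedBall_lt_top
  lift volume (closedBall (0 : E) 1) to ℝ≥0 using ball_lt_top.ne with ballVolume hball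
  refine ⟨ballVolume * K, fun S hS Y => ?_⟩
  have restrict_le (I : Set ℝ) {A : ℝ≥0∞}
      (hA : ∫⁻ r in I, rpowWeight β (Y.1 - r) ≤ K * rpowWeight β Y.1 * A) :
      ∫⁻ r in I, rpowWeight β (Y.1 - r) * volume (coneSlice S Y r) ≤
        ↑(ballVolume * K) * rpowWeight β Y.1 * A := by
    refine (setLIntegral_rpowWeight_mul_coneSlice_le S Y I).trans ?_
    rw [← hball, mul_comm, ENNReal.coe_mul, mul_assoc, mul_assoc, ← mul_assoc (K : ℝ≥0∞)]
    gcongr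
  rw [conePotential_indicator_rpowWeight hS]
  refine ⟨restrict_le _ (hK Y.1).2, fun δ hδ => ?_⟩
  rw [← Ioc_union_Ioi_eq_Ioi hδ.le, lintegral_union measurableSet_Ioi Ioc_disjoint_Ioi_same]
  exact add_le_add (restrict_le _ ((hK Y.1).1 δ))
    (setLIntegral_Ioi_rpowWeight_mul_coneSlice_le hS Y hδ)

lemma exists_conePotential_le_measure_rpow {β θ : ℝ} (hβ : -1 < β) (hθ₀ : 0 ≤ θ)
    (hθ₁ : θ * (Module.finrank ℝ E + 1) ≤ 1) :
    ∃ K : ℝ≥0, ∀ S : Set (ℝ × E), MeasurableSet S → halfSpaceMeasure E β S ≠ 0 →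
      halfSpaceMeasure E β S ≠ ⊤ → ∀ Y,
      conePotential (S.indicator fun X => rpowWeight β X.1) Y ≤
        K * halfSpaceMeasure E β S ^ θ *
          rpowWeight (β + 1 - θ * (Module.finrank ℝ E + 1 + β)) Y.1 := by
  obtain ⟨K, hK⟩ := exists_conePotential_le (E := E) hβ
  refine ⟨K + 1, fun S hS hS₀ hS_top Y => ?_⟩
  obtain ⟨total_le, split_le⟩ := hK S hS Y
  rcases le_or_gt Y.1 0 with ht | ht
  · rw [rpowWeight_of_nonpos ht] at total_le ⊢
    simpa using total_le
  have hm : 0 < (halfSpaceMeasure E β S).toReal := ENNReal.toReal_pos hS₀ hS_top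
  rw [← ENNReal.ofReal_toReal hS_top] at split_le ⊢
  simp only [rpowWeight_of_pos ht, mul_assoc] at total_le split_le ⊢
  rw [ENNReal.ofReal_rpow_of_pos hm, ← ENNReal.ofReal_mul (by positivity), ENNReal.coe_add,
    ENNReal.coe_one]
  refine le_of_le_of_forall_le_add ht hm hθ₀ hθ₁ ?_ fun δ hδ => ?_
  · rwa [ENNReal.ofReal_mul (by positivity)]
  · rw [ENNReal.ofReal_mul (by positivity), ENNReal.ofReal_mul (by positivity)]
    exact split_le δ hδ

end ConePotential

section EndpointInequality

open Set Metric

variable {E F : Type*} [NormedAddCommGroup E] [MeasureSpace E] [NormedAddCommGroup F]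

lemma halfSpaceMeasure_one_le_enorm_ne_top [SFinite (volume : Measure E)]
    [IsFiniteMeasureOnCompacts (volume : Measure E)] {β : ℝ} (hβ : -1 < β) {V : ℝ × E → F}
    (hVc : HasCompactSupport V) : halfSpaceMeasure E β {X | 1 ≤ ‖V X‖ₑ} ≠ ⊤ := by
  have := isFiniteMeasureOnCompacts_halfSpaceMeasure (E := E) hβ
  refine ((measure_mono fun X hX => ?_).trans_lt hVc.isCompact.measure_lt_top).ne
  refine subset_tsupport V fun hVX => ?_
  simp [hVX] at hX

variable [NormedSpace ℝ E] [FiniteDimensional ℝ E] [BorelSpace E]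
  [(volume : Measure E).IsAddHaarMeasure] [NormedSpace ℝ F]

lemma volume_ball_mul_halfSpaceMeasure_le {β : ℝ} {V : ℝ × E → F} (hV : ContDiff ℝ 1 V)
    (hVc : HasCompactSupport V) {S : Set (ℝ × E)} (hS : MeasurableSet S)
    (hVS : ∀ X ∈ S, 1 ≤ ‖V X‖ₑ) :
    volume (closedBall (0 : E) 1) * halfSpaceMeasure E β S ≤
      ∫⁻ Y, conePotential (S.indicator fun X => rpowWeight β X.1) Y * ‖fderiv ℝ V Y‖ₑ := by
  refine le_trans ?_
    (volume_ball_mul_lintegral_mul_enorm_le hV hVc (Measurable.indicator (by fun_prop) hS))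
  rw [halfSpaceMeasure, withDensity_apply _ hS, ← lintegral_indicator hS]
  gcongr with X
  by_cases hX : X ∈ S
  · exact le_mul_of_one_le_right' (hVS X hX)
  · simp [hX]

lemma exists_halfSpaceMeasure_one_le_enorm_rpow_le {β θ : ℝ} (hβ : -1 < β) (hθ₀ : 0 ≤ θ)
    (hθ₁ : θ < 1) (hθd : θ * (Module.finrank ℝ E + 1) ≤ 1) :
    ∃ C : ℝ≥0, ∀ V : ℝ × E → F, ContDiff ℝ 1 V → HasCompactSupport V →
      halfSpaceMeasure E β {X | 1 ≤ ‖V X‖ₑ} ^ (1 - θ) ≤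
        C * ∫⁻ X, ‖fderiv ℝ V X‖ₑ ∂halfSpaceMeasure E
          (β + 1 - θ * (Module.finrank ℝ E + 1 + β)) := by
  obtain ⟨K, hK⟩ := exists_conePotential_le_measure_rpow (E := E) hβ hθ₀ hθd
  have ball_pos : volume (closedBall (0 : E) 1) ≠ 0 := (measure_closedBall_pos _ _ one_pos).ne'
  have ball_lt_top : volume (closedBall (0 : E) 1) < ⊤ := measure_closedBall_lt_top
  refine ⟨(volume (closedBall (0 : E) 1)).toNNReal⁻¹ * K, fun V hV hVc => ?_⟩
  set γ := β + 1 - θ * (Module.finrank ℝ E + 1 + β)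
  set S := {X | 1 ≤ ‖V X‖ₑ}
  set m := halfSpaceMeasure E β S
  have hS : MeasurableSet S := measurableSet_le measurable_const hV.continuous.enorm.measurable
  have hm_top : m ≠ ⊤ := halfSpaceMeasure_one_le_enorm_ne_top hβ hVc
  rcases eq_or_ne m 0 with hm₀ | hm₀
  · simp [hm₀, ENNReal.zero_rpow_of_pos (sub_pos.2 hθ₁)]
  have hG : Measurable fun X => ‖fderiv ℝ V X‖ₑ :=
    (hV.continuous_fderiv one_ne_zero).enorm.measurable
  have estimate : m ^ θ * (volume (closedBall (0 : E) 1) * m ^ (1 - θ)) ≤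
      m ^ θ * (K * ∫⁻ X, ‖fderiv ℝ V X‖ₑ ∂halfSpaceMeasure E γ) :=
    calc _ = volume (closedBall (0 : E) 1) * m := by
          rw [mul_left_comm, ← ENNReal.rpow_add _ _ hm₀ hm_top, add_sub_cancel, ENNReal.rpow_one]
      _ ≤ ∫⁻ Y, conePotential (S.indicator fun X => rpowWeight β X.1) Y * ‖fderiv ℝ V Y‖ₑ :=
          volume_ball_mul_halfSpaceMeasure_le hV hVc hS fun _ hX => hX
      _ ≤ ∫⁻ Y, K * m ^ θ * (rpowWeight γ Y.1 * ‖fderiv ℝ V Y‖ₑ) := by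
          refine lintegral_mono fun Y => ?_
          rw [← mul_assoc]
          exact mul_le_mul_left (hK S hS hm₀ hm_top Y) _
      _ = _ := by
          rw [lintegral_const_mul _ (by fun_prop), ← lintegral_halfSpaceMeasure hG,
            mul_comm _ (m ^ θ), mul_assoc]
  have cancelled := (ENNReal.mul_le_mul_iff_right (by simp [hm₀, hm_top])
    (ENNReal.rpow_ne_top_of_nonneg hθ₀ hm_top)).1 estimate
  rw [ENNReal.coe_mul, ENNReal.coe_inv (ENNReal.toNNReal_ne_zero.2 ⟨ball_pos, ball_lt_top.ne⟩),
    ENNReal.coe_toNNReal ball_lt_top.ne, mul_assoc, ← ENNReal.div_eq_inv_mul,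
    ENNReal.le_div_iff_mul_le (Or.inl ball_pos) (Or.inl ball_lt_top.ne), mul_comm]
  exact cancelled

end EndpointInequality

section Truncation

open Set Metric

lemma exists_contDiff_truncation (F : Type*) [NormedAddCommGroup F] [NormedSpace ℝ F]
    [FiniteDimensional ℝ F] [HasContDiffBump F] :
    ∃ (ψ : F → ℝ) (K : ℝ≥0), ContDiff ℝ 1 ψ ∧ ψ 0 = 0 ∧ (∀ y, 2 ≤ ‖y‖ₑ → ψ y = 1) ∧
      ∀ y, ‖fderiv ℝ ψ y‖ₑ ≤ (Ico 1 2).indicator (fun _ => (K : ℝ≥0∞)) ‖y‖ₑ := by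
  let φ : ContDiffBump (0 : F) := ⟨1, 2, one_pos, one_lt_two⟩
  have hψ : ContDiff ℝ 1 fun y => 1 - φ y := contDiff_const.sub φ.contDiff
  have ψ_eq_zero {y : F} (hy : ‖y‖ₑ ≤ 1) : 1 - φ y = 0 := by
    rw [← enorm_one (G := ℝ), enorm_le_iff_norm_le, norm_one] at hy
    rw [φ.one_of_mem_closedBall (by simpa using hy), sub_self]
  have ψ_eq_one {y : F} (hy : 2 ≤ ‖y‖ₑ) : 1 - φ y = 1 := by
    rw [← ofReal_norm, ← ENNReal.ofReal_ofNat, ENNReal.ofReal_le_ofReal_iff (norm_nonneg _)] at hy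
    rw [φ.zero_of_le_dist (by simpa [φ] using hy), sub_zero]
  obtain ⟨K, hK⟩ : ∃ K : ℝ, ∀ y, ‖fderiv ℝ (fun y => 1 - φ y) y‖ ≤ K := by
    simp only [fderiv_const_sub, norm_neg]
    exact (φ.hasCompactSupport.fderiv ℝ).exists_bound_of_continuous
      (φ.contDiff.continuous_fderiv one_ne_zero)
  refine ⟨fun y => 1 - φ y, K.toNNReal, hψ, ψ_eq_zero (by simp), fun y => ψ_eq_one, fun y => ?_⟩
  rcases lt_or_ge ‖y‖ₑ 1 with hy | hy₁
  · have isLocalMin : IsLocalMin (fun y => 1 - φ y) y :=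
      Filter.Eventually.of_forall fun x => (ψ_eq_zero hy.le).trans_le (sub_nonneg.2 φ.le_one)
    rw [← ofReal_norm, isLocalMin.fderiv_eq_zero, norm_zero, ENNReal.ofReal_zero]
    exact zero_le
  rcases lt_or_ge ‖y‖ₑ 2 with hy₂ | hy
  · rw [indicator_of_mem (mem_Ico.2 ⟨hy₁, hy₂⟩), ← ofReal_norm]
    exact ENNReal.ofReal_le_ofReal (hK y)
  · have isLocalMax : IsLocalMax (fun y => 1 - φ y) y :=
      Filter.Eventually.of_forall fun x => (sub_le_self 1 φ.nonneg).trans_eq (ψ_eq_one hy).symm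
    rw [← ofReal_norm, isLocalMax.fderiv_eq_zero, norm_zero, ENNReal.ofReal_zero]
    exact zero_le

lemma exists_truncation_at_level {W F : Type*} [NormedAddCommGroup W] [NormedSpace ℝ W]
    [NormedAddCommGroup F] [NormedSpace ℝ F] [FiniteDimensional ℝ F] [HasContDiffBump F] :
    ∃ K : ℝ≥0, ∀ V : W → F, ContDiff ℝ 1 V → HasCompactSupport V → ∀ c : ℝ≥0, c ≠ 0 →
      ∃ T : W → ℝ, ContDiff ℝ 1 T ∧ HasCompactSupport T ∧
        {X | 2 * c ≤ ‖V X‖ₑ} ⊆ {X | 1 ≤ ‖T X‖ₑ} ∧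
        ∀ X, c * ‖fderiv ℝ T X‖ₑ ≤
          K * ((‖V ·‖ₑ) ⁻¹' Ico c (2 * c)).indicator (‖fderiv ℝ V ·‖ₑ) X := by
  obtain ⟨ψ, K, hψ, ψ_zero, ψ_one, fderiv_ψ⟩ := exists_contDiff_truncation F
  refine ⟨K, fun V hV hVc c hc => ⟨fun X => ψ (c⁻¹ • V X), hψ.comp (hV.const_smul c⁻¹),
    hVc.comp_left (g := fun y => ψ (c⁻¹ • y)) (by rw [smul_zero, ψ_zero]), fun X hX => ?_,
    fun X => ?_⟩⟩
  all_goals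
    have hc₀ : (c : ℝ≥0∞) ≠ 0 := by simpa using hc
    have enorm_smul_V : ‖c⁻¹ • V X‖ₑ = ‖V X‖ₑ / c := by
      rw [NNReal.smul_def, enorm_smul, NNReal.enorm_eq, ENNReal.coe_inv hc, ENNReal.div_eq_inv_mul]
  · have : ψ (c⁻¹ • V X) = 1 := ψ_one _ <| by
      rw [enorm_smul_V, ENNReal.le_div_iff_mul_le (Or.inl hc₀) (by simp)]
      exact hX
    simp [this]
  · have mem_slice_iff : ‖c⁻¹ • V X‖ₑ ∈ Ico 1 2 ↔ ‖V X‖ₑ ∈ Ico (c : ℝ≥0∞) (2 * c) := by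
      rw [enorm_smul_V, mem_Ico, mem_Ico, ENNReal.le_div_iff_mul_le (Or.inl hc₀) (by simp),
        ENNReal.div_lt_iff (Or.inl hc₀) (by simp), one_mul]
    have fderiv_T : fderiv ℝ (fun X => ψ (c⁻¹ • V X)) X =
        (fderiv ℝ ψ (c⁻¹ • V X)).comp (c⁻¹ • fderiv ℝ V X) :=
      ((hψ.differentiable one_ne_zero _).hasFDerivAt.comp X
        ((hV.differentiable one_ne_zero X).hasFDerivAt.const_smul c⁻¹)).fderiv
    calc c * ‖fderiv ℝ (fun X => ψ (c⁻¹ • V X)) X‖ₑ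
        ≤ c * (‖fderiv ℝ ψ (c⁻¹ • V X)‖ₑ * ‖c⁻¹ • fderiv ℝ V X‖ₑ) := by
          rw [fderiv_T]
          exact mul_le_mul_right (ContinuousLinearMap.opENorm_comp_le _ _) _
      _ = ‖fderiv ℝ ψ (c⁻¹ • V X)‖ₑ * ‖fderiv ℝ V X‖ₑ := by
          rw [NNReal.smul_def c⁻¹ (fderiv ℝ V X), enorm_smul, NNReal.enorm_eq, ENNReal.coe_inv hc,
            mul_left_comm, ← mul_assoc (c : ℝ≥0∞), ENNReal.mul_inv_cancel hc₀ ENNReal.coe_ne_top,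
            one_mul]
      _ ≤ (Ico 1 2).indicator (fun _ => (K : ℝ≥0∞)) ‖c⁻¹ • V X‖ₑ * ‖fderiv ℝ V X‖ₑ :=
          mul_le_mul_left (fderiv_ψ _) _
      _ = _ := by
          by_cases hX : X ∈ (‖V ·‖ₑ) ⁻¹' Ico (c : ℝ≥0∞) (2 * c)
          · rw [indicator_of_mem (mem_slice_iff.2 hX), indicator_of_mem hX]
          · rw [indicator_of_notMem (mt mem_slice_iff.1 hX), indicator_of_notMem hX, zero_mul,
              mul_zero]

end Truncation

section StrongEndpointInequality

open Set Metric

variable {E F : Type*} [NormedAddCommGroup E] [NormedSpace ℝ E] [MeasureSpace E]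
  [FiniteDimensional ℝ E] [BorelSpace E] [(volume : Measure E).IsAddHaarMeasure]
  [NormedAddCommGroup F] [NormedSpace ℝ F] [FiniteDimensional ℝ F] [HasContDiffBump F]

lemma exists_mul_halfSpaceMeasure_two_mul_le_enorm_rpow_le {β θ : ℝ} (hβ : -1 < β) (hθ₀ : 0 ≤ θ)
    (hθ₁ : θ < 1) (hθd : θ * (Module.finrank ℝ E + 1) ≤ 1) :
    ∃ C : ℝ≥0, ∀ V : ℝ × E → F, ContDiff ℝ 1 V → HasCompactSupport V → ∀ c : ℝ≥0, c ≠ 0 →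
      c * halfSpaceMeasure E β {X | 2 * c ≤ ‖V X‖ₑ} ^ (1 - θ) ≤
        C * ∫⁻ X in (‖V ·‖ₑ) ⁻¹' Ico c (2 * c), ‖fderiv ℝ V X‖ₑ ∂halfSpaceMeasure E
          (β + 1 - θ * (Module.finrank ℝ E + 1 + β)) := by
  obtain ⟨C, hC⟩ := exists_halfSpaceMeasure_one_le_enorm_rpow_le (F := ℝ) hβ hθ₀ hθ₁ hθd
  obtain ⟨K, hK⟩ := exists_truncation_at_level (W := ℝ × E) (F := F)
  refine ⟨C * K, fun V hV hVc c hc => ?_⟩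
  obtain ⟨T, hT, hTc, levelSet_subset, fderiv_T⟩ := hK V hV hVc c hc
  set μ := halfSpaceMeasure E (β + 1 - θ * (Module.finrank ℝ E + 1 + β))
  set slice := (‖V ·‖ₑ) ⁻¹' Ico (c : ℝ≥0∞) (2 * c)
  have hslice : MeasurableSet slice := hV.continuous.enorm.measurable measurableSet_Ico
  calc c * halfSpaceMeasure E β {X | 2 * c ≤ ‖V X‖ₑ} ^ (1 - θ)
      ≤ c * (C * ∫⁻ X, ‖fderiv ℝ T X‖ₑ ∂μ) := by
        gcongr
        exact (ENNReal.rpow_le_rpow (measure_mono levelSet_subset) (sub_nonneg.2 hθ₁.le)).trans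
          (hC T hT hTc)
    _ = C * ∫⁻ X, c * ‖fderiv ℝ T X‖ₑ ∂μ := by
        rw [lintegral_const_mul' _ _ ENNReal.coe_ne_top, mul_left_comm]
    _ ≤ C * ∫⁻ X, K * slice.indicator (‖fderiv ℝ V ·‖ₑ) X ∂μ :=
        mul_le_mul_right (lintegral_mono fderiv_T) _
    _ = _ := by
        rw [lintegral_const_mul' _ _ ENNReal.coe_ne_top, lintegral_indicator hslice,
          ENNReal.coe_mul, mul_assoc]

lemma exists_lintegral_enorm_rpow_le {β θ : ℝ} (hβ : -1 < β) (hθ₀ : 0 ≤ θ)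
    (hθ₁ : θ < 1) (hθd : θ * (Module.finrank ℝ E + 1) ≤ 1) :
    ∃ C : ℝ≥0, ∀ V : ℝ × E → F, ContDiff ℝ 1 V → HasCompactSupport V →
      (∫⁻ X, ‖V X‖ₑ ^ (1 - θ)⁻¹ ∂halfSpaceMeasure E β) ^ (1 - θ) ≤
        C * ∫⁻ X, ‖fderiv ℝ V X‖ₑ ∂halfSpaceMeasure E
          (β + 1 - θ * (Module.finrank ℝ E + 1 + β)) := by
  obtain ⟨C, hC⟩ := exists_mul_halfSpaceMeasure_two_mul_le_enorm_rpow_le (F := F) hβ hθ₀ hθ₁ hθd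
  refine ⟨4 * C, fun V hV hVc => ?_⟩
  have hf : Measurable (‖V ·‖ₑ) := hV.continuous.enorm.measurable
  rw [← setLIntegral_univ (fun X => ‖fderiv ℝ V X‖ₑ), ← withDensity_apply _ MeasurableSet.univ,
    ENNReal.coe_mul, ENNReal.coe_ofNat]
  refine lintegral_rpow_le_of_forall_slice hf (fun _ => enorm_ne_top) (sub_pos.2 hθ₁)
    (sub_le_self 1 hθ₀) fun c hc => ?_
  rw [withDensity_apply _ (hf measurableSet_Ico)]
  exact hC V hV hVc c hc

end StrongEndpointInequality

section PowerSubstitution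

variable {E F : Type*} [NormedAddCommGroup E] [NormedSpace ℝ E] [MeasureSpace E]
  [FiniteDimensional ℝ E] [BorelSpace E] [(volume : Measure E).IsAddHaarMeasure]
  [NormedAddCommGroup F] [InnerProductSpace ℝ F] [FiniteDimensional ℝ F]

lemma exists_lintegral_enorm_rpow_div_le {β θ s : ℝ} (hβ : -1 < β) (hθ₀ : 0 ≤ θ) (hθ₁ : θ < 1)
    (hθd : θ * (Module.finrank ℝ E + 1) ≤ 1) (hs : 1 ≤ s) :
    ∃ C : ℝ≥0, ∀ V : ℝ × E → F, ContDiff ℝ 1 V → HasCompactSupport V →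
      (∫⁻ X, ‖V X‖ₑ ^ (s / (1 - θ)) ∂halfSpaceMeasure E β) ^ (1 - θ) ≤
        C * ∫⁻ X, ‖V X‖ₑ ^ (s - 1) * ‖fderiv ℝ V X‖ₑ ∂halfSpaceMeasure E
          (β + 1 - θ * (Module.finrank ℝ E + 1 + β)) := by
  rcases hs.eq_or_lt with rfl | hs
  · simpa only [one_div, sub_self, ENNReal.rpow_zero, one_mul] using
      exists_lintegral_enorm_rpow_le (F := F) hβ hθ₀ hθ₁ hθd
  have hs₀ : 0 < s := one_pos.trans hs
  obtain ⟨C, hC⟩ := exists_lintegral_enorm_rpow_le (E := E) (F := ℝ) hβ hθ₀ hθ₁ hθd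
  refine ⟨C * s.toNNReal, fun V hV hVc => ?_⟩
  have enorm_pow (X : ℝ × E) : ‖‖V X‖ ^ s‖ₑ = ‖V X‖ₑ ^ s := by
    rw [Real.enorm_rpow_of_nonneg (norm_nonneg _) hs₀.le, enorm_norm]
  calc (∫⁻ X, ‖V X‖ₑ ^ (s / (1 - θ)) ∂halfSpaceMeasure E β) ^ (1 - θ)
      = (∫⁻ X, ‖‖V X‖ ^ s‖ₑ ^ (1 - θ)⁻¹ ∂halfSpaceMeasure E β) ^ (1 - θ) := by
        simp only [enorm_pow, ← ENNReal.rpow_mul, div_eq_mul_inv]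
    _ ≤ C * ∫⁻ X, ‖fderiv ℝ (fun X => ‖V X‖ ^ s) X‖ₑ ∂halfSpaceMeasure E
          (β + 1 - θ * (Module.finrank ℝ E + 1 + β)) :=
        hC _ (hV.norm_rpow hs) (hVc.comp_left (g := fun y => ‖y‖ ^ s)
          (by rw [norm_zero, Real.zero_rpow hs₀.ne']))
    _ ≤ C * ∫⁻ X, s.toNNReal * (‖V X‖ₑ ^ (s - 1) * ‖fderiv ℝ V X‖ₑ) ∂halfSpaceMeasure E
          (β + 1 - θ * (Module.finrank ℝ E + 1 + β)) := by
        refine mul_le_mul_right (lintegral_mono fun X => ?_) _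
        lift s to ℝ≥0 using hs₀.le
        rw [← mul_assoc, Real.toNNReal_coe]
        exact enorm_fderiv_norm_rpow_le (hV.differentiable one_ne_zero) (by exact_mod_cast hs)
    _ = _ := by
        rw [lintegral_const_mul' _ _ ENNReal.coe_ne_top, ENNReal.coe_mul, mul_assoc]

end PowerSubstitution

section WeightedSobolev

variable {E F : Type*} [NormedAddCommGroup E] [MeasureSpace E]

lemma lintegral_enorm_rpow_halfSpaceMeasure_ne_top [NormedAddCommGroup F] [BorelSpace E]
    [SFinite (volume : Measure E)] [SecondCountableTopology E]
    [IsFiniteMeasureOnCompacts (volume : Measure E)] {β q : ℝ} (hβ : -1 < β) (hq : 0 < q)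
    {V : ℝ × E → F} (hV : Continuous V) (hVc : HasCompactSupport V) :
    ∫⁻ X, ‖V X‖ₑ ^ q ∂halfSpaceMeasure E β ≠ ⊤ := by
  have := isFiniteMeasureOnCompacts_halfSpaceMeasure (E := E) hβ
  have memLp := hV.memLp_of_hasCompactSupport (μ := halfSpaceMeasure E β)
    (p := ENNReal.ofReal q) hVc
  simpa only [ENNReal.toReal_ofReal hq.le] using
    (lintegral_rpow_enorm_lt_top_of_eLpNorm_lt_top (by simpa using hq) ENNReal.ofReal_ne_top
      memLp.eLpNorm_lt_top).ne

variable [NormedSpace ℝ E] [FiniteDimensional ℝ E] [BorelSpace E]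
  [(volume : Measure E).IsAddHaarMeasure]
  [NormedAddCommGroup F] [InnerProductSpace ℝ F] [FiniteDimensional ℝ F]

theorem exists_lintegral_enorm_rpow_le_lintegral_enorm_fderiv_rpow {p q α β : ℝ} (hp : 1 ≤ p)
    (hpq : p ≤ q) (hβ : -1 < β) (hpqd : (p⁻¹ - q⁻¹) * (Module.finrank ℝ E + 1) ≤ 1)
    (homogeneity : p⁻¹ * α + (1 - p⁻¹) * β =
      β + 1 - (p⁻¹ - q⁻¹) * (Module.finrank ℝ E + 1 + β)) :
    ∃ C : ℝ≥0, ∀ V : ℝ × E → F, ContDiff ℝ 1 V → HasCompactSupport V →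
      (∫⁻ X, ‖V X‖ₑ ^ q ∂halfSpaceMeasure E β) ^ (p / q) ≤
        C * ∫⁻ X, ‖fderiv ℝ V X‖ₑ ^ p ∂halfSpaceMeasure E α := by
  have hp₀ : 0 < p := one_pos.trans_le hp
  have hq₀ : 0 < q := hp₀.trans_le hpq
  have hp_inv : p⁻¹ ≤ 1 := inv_le_one_of_one_le₀ hp
  have hpq_inv : q⁻¹ ≤ p⁻¹ := inv_anti₀ hp₀ hpq
  have hq_inv : 0 < q⁻¹ := inv_pos.2 hq₀
  have exponent_sub_one : (1 - (p⁻¹ - q⁻¹)) * q - 1 = q * (1 - p⁻¹) := by field_simp; ring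
  have one_le_exponent : 1 ≤ (1 - (p⁻¹ - q⁻¹)) * q := by
    rw [← sub_nonneg, exponent_sub_one]
    exact mul_nonneg hq₀.le (sub_nonneg.2 hp_inv)
  obtain ⟨C, hC⟩ := exists_lintegral_enorm_rpow_div_le (E := E) (F := F) hβ (sub_nonneg.2 hpq_inv)
    (by linarith) hpqd one_le_exponent
  rw [mul_div_cancel_left₀ q (by linarith), exponent_sub_one, ← homogeneity] at hC
  refine ⟨C ^ p, fun V hV hVc => ?_⟩
  set T := ∫⁻ X, ‖V X‖ₑ ^ q ∂halfSpaceMeasure E β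
  set A := ∫⁻ X, ‖fderiv ℝ V X‖ₑ ^ p ∂halfSpaceMeasure E α
  have hT : T ≠ ⊤ := lintegral_enorm_rpow_halfSpaceMeasure_ne_top hβ hq₀ hV.continuous hVc
  have holder : ∫⁻ X, ‖V X‖ₑ ^ (q * (1 - p⁻¹)) * ‖fderiv ℝ V X‖ₑ
      ∂halfSpaceMeasure E (p⁻¹ * α + (1 - p⁻¹) * β) ≤ A ^ p⁻¹ * T ^ (1 - p⁻¹) := by
    have hG := (hV.continuous_fderiv one_ne_zero).enorm.measurable
    have hV' := hV.continuous.enorm.measurable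
    refine le_trans (le_of_eq ?_) (lintegral_rpow_mul_rpow_halfSpaceMeasure_le (hG.pow_const p)
      (hV'.pow_const q) (inv_nonneg.2 hp₀.le) hp_inv)
    simp only [← ENNReal.rpow_mul, mul_inv_cancel₀ hp₀.ne', ENNReal.rpow_one, mul_comm]
  have absorbed : T ^ (q⁻¹ + (1 - p⁻¹)) ≤ C * (A ^ p⁻¹ * T ^ (1 - p⁻¹)) := by
    rw [show q⁻¹ + (1 - p⁻¹) = 1 - (p⁻¹ - q⁻¹) by ring]
    exact (hC V hV hVc).trans (mul_le_mul_right holder _)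
  have := le_mul_of_le_mul_rpow_mul_rpow hT (inv_pos.2 hp₀) hq_inv (sub_nonneg.2 hp_inv) absorbed
  rwa [inv_div_inv, one_div, inv_inv, ← ENNReal.coe_rpow_of_nonneg _ hp₀.le] at this

end WeightedSobolev

section EuclideanCoordinates

variable {n : ℕ}

/-- The linear coordinates `(t, x) ↦ (x, t)` on `ℝ^{n+1}`, matching the height variable `t` of
`halfSpaceMeasure`, which comes first, with that of `upperHalfE`, which comes last. The factor
`Fin n → ℝ` carries the sup norm, so this is not an isometry, but it preserves Lebesgue measure. -/
def heightCoordinates (n : ℕ) : (ℝ × (Fin n → ℝ)) ≃L[ℝ] EuclideanSpace ℝ (Fin (n + 1)) :=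
  LinearEquiv.toContinuousLinearEquiv
    { toEquiv := (MeasurableEquiv.piFinSuccAbove (fun _ => ℝ) (Fin.last n)).symm.toEquiv.trans
        (WithLp.equiv 2 _).symm
      map_add' := fun Z Z' => by
        ext i
        cases i using Fin.lastCases <;> simp [MeasurableEquiv.piFinSuccAbove, Fin.insertNthEquiv]
      map_smul' := fun c Z => by
        ext i
        cases i using Fin.lastCases <;> simp [MeasurableEquiv.piFinSuccAbove, Fin.insertNthEquiv] }

lemma heightCoordinates_apply_last (Z : ℝ × (Fin n → ℝ)) :
    heightCoordinates n Z (Fin.last n) = Z.1 :=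
  Fin.insertNth_apply_same (α := fun _ => ℝ) (Fin.last n) Z.1 Z.2

lemma measurePreserving_heightCoordinates : MeasurePreserving (heightCoordinates n) :=
  (PiLp.volume_preserving_toLp (Fin (n + 1))).comp
    (volume_preserving_piFinSuccAbove (fun _ => ℝ) (Fin.last n)).symm

lemma setLIntegral_upperHalfE_rpow_mul {γ : ℝ} {f : EuclideanSpace ℝ (Fin (n + 1)) → ℝ≥0∞}
    (hf : Measurable f) :
    ∫⁻ X in upperHalfE n, ENNReal.ofReal (X (Fin.last n) ^ γ) * f X =
      ∫⁻ Z, f (heightCoordinates n Z) ∂halfSpaceMeasure (Fin n → ℝ) γ := by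
  have measurable_last : Measurable fun X : EuclideanSpace ℝ (Fin (n + 1)) => X (Fin.last n) := by
    fun_prop
  have measurableSet_upperHalfE : MeasurableSet (upperHalfE n) :=
    measurableSet_lt measurable_const measurable_last
  calc ∫⁻ X in upperHalfE n, ENNReal.ofReal (X (Fin.last n) ^ γ) * f X
      = ∫⁻ X, rpowWeight γ (X (Fin.last n)) * f X := by
        rw [← lintegral_indicator measurableSet_upperHalfE]
        congr 1 with X
        by_cases hX : X ∈ upperHalfE n
        · rw [Set.indicator_of_mem hX, rpowWeight_of_pos hX]
        · rw [Set.indicator_of_notMem hX, rpowWeight_of_nonpos (not_lt.1 hX), zero_mul]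
    _ = ∫⁻ Z, rpowWeight γ (heightCoordinates n Z (Fin.last n)) * f (heightCoordinates n Z) :=
        (measurePreserving_heightCoordinates.lintegral_comp (by fun_prop)).symm
    _ = ∫⁻ Z, f (heightCoordinates n Z) ∂halfSpaceMeasure (Fin n → ℝ) γ := by
        simp only [heightCoordinates_apply_last]
        exact (lintegral_halfSpaceMeasure
          (hf.comp measurePreserving_heightCoordinates.measurable)).symm

lemma lintegral_enorm_fderiv_comp_rpow_le {V W F : Type*} [NormedAddCommGroup V] [NormedSpace ℝ V]
    [NormedAddCommGroup W] [NormedSpace ℝ W] [NormedAddCommGroup F] [NormedSpace ℝ F]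
    [MeasurableSpace V] (μ : Measure V) {p : ℝ} (hp : 0 ≤ p) (L : V →L[ℝ] W) {u : W → F}
    (hu : Differentiable ℝ u) :
    ∫⁻ Z, ‖fderiv ℝ (u ∘ L) Z‖ₑ ^ p ∂μ ≤ ‖L‖ₑ ^ p * ∫⁻ Z, ‖fderiv ℝ u (L Z)‖ₑ ^ p ∂μ := by
  rw [← lintegral_const_mul' _ _ (ENNReal.rpow_ne_top_of_nonneg hp enorm_ne_top)]
  refine lintegral_mono fun Z => ?_
  rw [← ENNReal.mul_rpow_of_nonneg _ _ hp, mul_comm,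
    ((hu (L Z)).hasFDerivAt.comp Z L.hasFDerivAt).fderiv]
  exact ENNReal.rpow_le_rpow (ContinuousLinearMap.opENorm_comp_le _ _) hp

end EuclideanCoordinates

theorem exists_setLIntegral_upperHalfE_enorm_rpow_le {F : Type*} [NormedAddCommGroup F]
    [InnerProductSpace ℝ F] [FiniteDimensional ℝ F] {n : ℕ} {p q α β : ℝ} (hp : 1 ≤ p)
    (hpq : p ≤ q) (hβ : -1 < β) (hpqn : (p⁻¹ - q⁻¹) * (n + 1) ≤ 1)
    (homogeneity : p⁻¹ * α + (1 - p⁻¹) * β = β + 1 - (p⁻¹ - q⁻¹) * (n + 1 + β)) :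
    ∃ C : ℝ≥0, ∀ u : EuclideanSpace ℝ (Fin (n + 1)) → F, ContDiff ℝ 1 u → HasCompactSupport u →
      (∫⁻ X in upperHalfE n, ENNReal.ofReal (X (Fin.last n) ^ β) * ‖u X‖ₑ ^ q) ^ (p / q) ≤
        C * ∫⁻ X in upperHalfE n, ENNReal.ofReal (X (Fin.last n) ^ α) * ‖fderiv ℝ u X‖ₑ ^ p := by
  rw [← Module.finrank_fin_fun ℝ (n := n)] at hpqn homogeneity
  obtain ⟨C, hC⟩ := exists_lintegral_enorm_rpow_le_lintegral_enorm_fderiv_rpow (F := F) hp hpq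
    hβ hpqn homogeneity
  have hp₀ : 0 ≤ p := zero_le_one.trans hp
  set L : ℝ × (Fin n → ℝ) →L[ℝ] EuclideanSpace ℝ (Fin (n + 1)) :=
    (heightCoordinates n).toContinuousLinearMap
  refine ⟨C * ‖L‖₊ ^ p, fun u hu huc => ?_⟩
  rw [setLIntegral_upperHalfE_rpow_mul (hu.continuous.enorm.measurable.pow_const q),
    setLIntegral_upperHalfE_rpow_mul
      ((hu.continuous_fderiv one_ne_zero).enorm.measurable.pow_const p),
    ENNReal.coe_mul, ENNReal.coe_rpow_of_nonneg _ hp₀, mul_assoc]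
  exact (hC (u ∘ L) (hu.comp L.contDiff)
    (huc.comp_homeomorph (heightCoordinates n).toHomeomorph)).trans
      (mul_le_mul_right (lintegral_enorm_fderiv_comp_rpow_le _ hp₀ L
        (hu.differentiable one_ne_zero)) _)

lemma inv_sub_inv_sobolevExponent {d p q α β : ℝ} (hp : p ≠ 0) (hdβ : d + β ≠ 0)
    (hq : q = p * (d + β) / (d + α - p)) :
    p⁻¹ - q⁻¹ = (β - α + p) / (p * (d + β)) := by
  rw [hq, inv_div]
  field_simp
  ring

theorem weighted_sobolev_upper_half_space_general {F : Type*} [NormedAddCommGroup F]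
    [InnerProductSpace ℝ F] [FiniteDimensional ℝ F] {n : ℕ} {p α₁ β₁ pst : ℝ} (hp : 1 ≤ p)
    (hpst : pst = p * ((n : ℝ) + 1 + β₁) / ((n : ℝ) + 1 + α₁ - p)) (hppst : p ≤ pst)
    (hβ₁l : -1 < β₁) (hβ₁r : β₁ * ((n : ℝ) + 1 - p) ≤ α₁ * ((n : ℝ) + 1)) :
    ∃ S : ℝ, 0 < S ∧
      ∀ u : EuclideanSpace ℝ (Fin (n + 1)) → F, ContDiff ℝ 1 u → HasCompactSupport u →
        (∫⁻ X in upperHalfE n,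
            ENNReal.ofReal (X (Fin.last n) ^ β₁) * ENNReal.ofReal ‖u X‖ ^ pst) ^ (p / pst)
          ≤ ENNReal.ofReal S *
            ∫⁻ X in upperHalfE n,
              ENNReal.ofReal (X (Fin.last n) ^ α₁) *
                ENNReal.ofReal ‖fderiv ℝ u X‖ ^ p := by
  have hp₀ : 0 < p := one_pos.trans_le hp
  have hdβ : 0 < (n : ℝ) + 1 + β₁ := by linarith [n.cast_nonneg (α := ℝ)]
  have inv_sub_inv := inv_sub_inv_sobolevExponent hp₀.ne' hdβ.ne' hpst
  have inv_sub_inv_mul_le : (p⁻¹ - pst⁻¹) * (n + 1) ≤ 1 := by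
    rw [inv_sub_inv, div_mul_eq_mul_div, div_le_one (by positivity)]
    linarith
  have homogeneity :
      p⁻¹ * α₁ + (1 - p⁻¹) * β₁ = β₁ + 1 - (p⁻¹ - pst⁻¹) * (n + 1 + β₁) := by
    rw [inv_sub_inv]
    field_simp
    ring
  obtain ⟨C, hC⟩ := exists_setLIntegral_upperHalfE_enorm_rpow_le (F := F) hp hppst hβ₁l
    inv_sub_inv_mul_le homogeneity
  refine ⟨(C + 1 : ℝ≥0), by positivity, fun u hu huc => ?_⟩
  simp only [ofReal_norm, ENNReal.ofReal_coe_nnreal]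
  exact (hC u hu huc).trans (mul_le_mul_left (ENNReal.coe_le_coe.2 le_self_add) _)

/-- Weighted Sobolev inequality with partial variable weight `t` on the upper half space. -/
theorem weighted_sobolev_upper_half_space
    (n : ℕ) (hn : 1 ≤ n) (p α₁ β₁ pst : ℝ)
    (hp1 : 1 < p) (hpn : p < (n : ℝ) + 1)
    (hpst : pst = p * ((n : ℝ) + 1 + β₁) / ((n : ℝ) + 1 + α₁ - p))
    (hppst : p < pst)
    (hα₁l : p * n / pst - ((n : ℝ) + 1 - p) < α₁) (hα₁r : α₁ < p - 1)
    (hβ₁l : -1 < β₁) (hβ₁r : β₁ ≤ α₁ * ((n : ℝ) + 1) / ((n : ℝ) + 1 - p)) :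
    ∃ S : ℝ, 0 < S ∧
      ∀ u : EuclideanSpace ℝ (Fin (n + 1)) → ℝ,
        ContDiff ℝ (⊤ : ℕ∞) u → HasCompactSupport u →
        (∫⁻ X in upperHalfE n,
            ENNReal.ofReal (X (Fin.last n) ^ β₁) * ENNReal.ofReal |u X| ^ pst) ^ (p / pst)
          ≤ ENNReal.ofReal S *
            ∫⁻ X in upperHalfE n,
              ENNReal.ofReal (X (Fin.last n) ^ α₁) *
                ENNReal.ofReal ‖fderiv ℝ u X‖ ^ p := by
  obtain ⟨S, hS, sobolev⟩ := weighted_sobolev_upper_half_space_general (F := ℝ) hp1.le hpst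
    hppst.le hβ₁l ((le_div_iff₀ (sub_pos.2 hpn)).1 hβ₁r)
  exact ⟨S, hS, fun u hu => sobolev u (hu.of_le (by exact_mod_cast le_top))⟩
end
end
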